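/- arXiv:2103.16126 — 7 statements merged into one kernel-verified Lean document; each statement's English description precedes it below -/
import Mathlib

section
/- For every finite Coxeter system (W, S) over a nonempty finite index set B, there exists a Hamiltonian circuit map for (W, S): a bijection θ : ℤ/kℤ → W with k = |W| such that for every t ∈ ℤ/kℤ there is an index i ∈ B with θ(t+1) = sᵢ · θ(t). -/
/-- A Hamiltonian circuit map for a finite group `W` with respect to a set `S ⊆ W`:
a bijection `θ : ℤ/kℤ → W` with `k = |W|` such that `θ(t+1)·θ(t)⁻¹ ∈ S` for all `t`. -/
def IsHamiltonianCircuitMap {W : Type*} [Group W] (S : Set W)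
    (θ : ZMod (Nat.card W) → W) : Prop :=
  Function.Bijective θ ∧ ∀ t, θ (t + 1) * (θ t)⁻¹ ∈ S

/-! ### A family of deformed geometric representations -/

lemma hcm_chebyshev (m : ℕ) (hm : 3 ≤ m) (n : ℤ) :
    (Polynomial.Chebyshev.S ℝ n).eval (2 * Real.cos (2 * Real.pi / m)) =
      Real.sin ((n + 1) * (2 * Real.pi / m)) / Real.sin (2 * Real.pi / m) := by
  have hm' : (3 : ℝ) ≤ m := by exact_mod_cast hm
  have hs : 0 < Real.sin (2 * Real.pi / m) := by
    apply Real.sin_pos_of_pos_of_lt_pi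
    · have := Real.pi_pos
      positivity
    · rw [div_lt_iff₀ (by linarith)]
      nlinarith [Real.pi_pos]
  rw [eq_div_iff hs.ne']
  exact Polynomial.Chebyshev.S_two_mul_real_cos _ _

lemma hcm_reflection_pow {V : Type*} [AddCommGroup V] [Module ℝ V] {x y : V}
    {f g : Module.Dual ℝ V} (hf : f x = 2) (hg : g y = 2) (m : ℕ) (hm : 2 ≤ m)
    (h : f y * g x = 4 * Real.cos (Real.pi / m) ^ 2)
    (h2 : m = 2 → f y = 0 ∧ g x = 0) :
    (Module.reflection hf * Module.reflection hg) ^ m = 1 := by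
  ext z
  rcases hm.eq_or_lt with rfl | hm
  · obtain ⟨h0, h1⟩ := h2 rfl
    simp [pow_two, Module.reflection_apply, h0, h1, hf, hg]
    module
  · have ht : 2 * Real.cos (2 * Real.pi / m) = f y * g x - 2 := by
      rw [h, mul_div_assoc, Real.cos_two_mul]; ring
    rw [Module.reflection_mul_reflection_pow_apply hf hg m z _ ht]
    have hm0 : (m : ℝ) ≠ 0 := by positivity
    simp only [hcm_chebyshev m hm]
    rcases Nat.even_or_odd' m with ⟨q, hq | hq⟩
    · have e1 : ((m : ℤ) - 2) / 2 = q - 1 := by omega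
      have e2 : ((m : ℤ) - 1) / 2 = q - 1 := by omega
      have : Real.sin ((((q : ℤ) - 1 : ℤ) + 1 : ℝ) * (2 * Real.pi / m)) = 0 := by
        rw [← Real.sin_pi]; congr 1
        push_cast
        field_simp
        rw [hq]; push_cast; ring
      rw [e1, e2, this]
      simp
    · have e1 : ((m : ℤ) - 2) / 2 = q - 1 := by omega
      have e2 : ((m : ℤ) - 1) / 2 = q := by omega
      have e3 : ((m : ℤ) - 3) / 2 = q - 1 := by omega
      have e4 : (m : ℤ) / 2 = q := by omega
      have : Real.sin ((((q : ℤ) - 1 : ℤ) + 1 : ℝ) * (2 * Real.pi / m)) =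
          - Real.sin ((((q : ℤ) : ℝ) + 1 : ℝ) * (2 * Real.pi / m)) := by
        rw [← Real.sin_two_pi_sub]; congr 1
        push_cast
        field_simp
        rw [hq]; push_cast; ring
      rw [e1, e2, e3, e4, this]
      simp [neg_div]

/-- The deformed Cartan matrix. -/
noncomputable def hcmCartan {B : Type*} (M : CoxeterMatrix B) (x : B → B → ℝ) : Matrix B B ℝ :=
  fun i j => -2 * Real.cos (Real.pi / M i j) * x i j

lemma hcmCartan_self {B : Type*} (M : CoxeterMatrix B) (x : B → B → ℝ) (hx : ∀ i, x i i = 1)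
    (i : B) : hcmCartan M x i i = 2 := by
  simp [hcmCartan, hx]

lemma hcmCartan_ne_zero {B : Type*} (M : CoxeterMatrix B) (x : B → B → ℝ)
    (hx : ∀ i j, x i j * x j i = 1) {i j : B} (hij : i ≠ j) (h : M i j ≠ 2) :
    hcmCartan M x i j ≠ 0 := by
  have h1 : x i j ≠ 0 := fun h => by simpa [h] using hx i j
  have h2 : M i j ≠ 1 := M.off_diagonal i j hij
  have h3 : Real.cos (Real.pi / M i j) ≠ 0 := by
    rcases Nat.eq_zero_or_pos (M i j) with h0 | h0
    · simp [h0]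
    · have h4 : 3 ≤ M i j := by omega
      have h5 : (3 : ℝ) ≤ M i j := by exact_mod_cast h4
      apply ne_of_gt
      have := Real.pi_pos
      apply Real.cos_pos_of_mem_Ioo
      constructor
      · have : 0 ≤ Real.pi / M i j := by positivity
        linarith
      · rw [div_lt_iff₀ (by linarith)]
        nlinarith
  simp [hcmCartan, h1, h3]

lemma hcm_exists_rep {B W : Type*} [Fintype B] [DecidableEq B] [Group W]
    (M : CoxeterMatrix B) (cs : CoxeterSystem M W) (x : B → B → ℝ)
    (hx : ∀ i, x i i = 1) (hx2 : ∀ i j, x i j * x j i = 1) :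
    ∃ ρ : W →* ((B → ℝ) ≃ₗ[ℝ] (B → ℝ)), ∀ i v,
      ρ (cs.simple i) v = v - ((hcmCartan M x).mulVec v i) • (Pi.single i 1 : B → ℝ) := by
  let f : B → Module.Dual ℝ (B → ℝ) := fun i =>
    (LinearMap.proj i) ∘ₗ (hcmCartan M x).mulVecLin
  have hfa : ∀ i j, f i (Pi.single j 1) = hcmCartan M x i j := fun i j => by
    simp [f]
  have hf : ∀ i, f i (Pi.single i 1) = 2 := fun i => by
    rw [hfa, hcmCartan_self M x hx]
  have hl : M.IsLiftable (fun i => (Module.reflection (hf i))) := by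
    intro i j
    by_cases hij : i = j
    · subst hij
      rw [M.diagonal, pow_one]
      ext1 v
      rw [LinearEquiv.mul_apply, Module.involutive_reflection (hf i) v]
      rfl
    rcases Nat.eq_zero_or_pos (M i j) with h0 | h0
    · simp [h0]
    have h1 : M i j ≠ 1 := M.off_diagonal i j hij
    apply hcm_reflection_pow _ _ _ (by omega)
    · rw [hfa, hfa]
      simp only [hcmCartan, M.symmetric j i]
      linear_combination (4 * Real.cos (Real.pi / M i j) ^ 2) * hx2 i j
    · intro h2
      rw [hfa, hfa]
      simp [hcmCartan, M.symmetric j i, h2]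
  refine ⟨cs.lift ⟨_, hl⟩, fun i v => ?_⟩
  rw [cs.lift_apply_simple]
  simp [Module.reflection_apply, f]

/-- A simple reflection is not in the subgroup generated by the others. -/
lemma hcm_simple_notMem {B W : Type*} [Fintype B] [Group W]
    (M : CoxeterMatrix B) (cs : CoxeterSystem M W) (t : B) (J : Set B) (ht : t ∉ J) :
    cs.simple t ∉ Subgroup.closure (cs.simple '' J) := by
  classical
  obtain ⟨ρ, hρ⟩ := hcm_exists_rep M cs (fun _ _ => 1) (by simp) (by simp)
  intro hmem
  have key : ∀ w ∈ Subgroup.closure (cs.simple '' J), ∀ v, ρ w v t = v t := by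
    intro w hw
    induction hw using Subgroup.closure_induction with
    | mem w hw =>
      obtain ⟨i, hi, rfl⟩ := hw
      intro v
      have : t ≠ i := by rintro rfl; exact ht hi
      rw [hρ]
      simp [this]
    | one => simp
    | mul a b _ _ ha hb => intro v; rw [map_mul, LinearEquiv.mul_apply, ha, hb]
    | inv a _ ha =>
      intro v
      have := ha (ρ a⁻¹ v)
      rw [← this, ← LinearEquiv.mul_apply, ← map_mul]
      simp
  have := key _ hmem (Pi.single t 1)
  rw [hρ] at this
  have h2 := hcmCartan_self M (fun _ _ => 1) (fun _ => rfl) t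
  simp [h2] at this

/-- Every multiplicative cochain on the edges of the Coxeter graph of a finite Coxeter group is a
coboundary. -/
lemma hcm_symmetrizable {B W : Type*} [Fintype B] [Group W] [Finite W]
    (M : CoxeterMatrix B) (cs : CoxeterSystem M W) (x : B → B → ℝ)
    (hx : ∀ i, x i i = 1) (hx2 : ∀ i j, x i j * x j i = 1) :
    ∃ d : B → ℝ, (∀ i, 0 < d i) ∧ ∀ i j, i ≠ j → M i j ≠ 2 → x i j * d i = x j i * d j := by
  classical
  obtain ⟨ρ, hρ⟩ := hcm_exists_rep M cs x hx hx2
  cases nonempty_fintype W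
  let Q : (B → ℝ) → (B → ℝ) → ℝ := fun u v => ∑ w, (ρ w u) ⬝ᵥ (ρ w v)
  have hQsymm : ∀ u v, Q u v = Q v u := fun u v =>
    Finset.sum_congr rfl fun w _ => dotProduct_comm _ _
  have hQinv : ∀ g u v, Q (ρ g u) (ρ g v) = Q u v := by
    intro g u v
    simp only [Q, ← LinearEquiv.mul_apply, ← map_mul]
    exact Fintype.sum_equiv (Equiv.mulRight g) _ _ (fun w => rfl)
  have hQneg : ∀ u v, Q (-u) v = - Q u v := fun u v => by simp [Q]
  have hQsub : ∀ u v c e, Q u (v - c • e) = Q u v - c * Q u e := fun u v c e => by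
    simp [Q, Finset.mul_sum, dotProduct_sub]
  let e : B → B → ℝ := fun i => Pi.single i 1
  have hpos : ∀ i, 0 < Q (e i) (e i) := by
    intro i
    have h1 : ∀ u : B → ℝ, 0 ≤ u ⬝ᵥ u := fun u =>
      Finset.sum_nonneg fun j _ => mul_self_nonneg _
    have h2 := Finset.single_le_sum (f := fun w => (ρ w (e i)) ⬝ᵥ (ρ w (e i)))
      (fun w _ => h1 _) (Finset.mem_univ (1 : W))
    have h3 : (ρ 1 (e i)) ⬝ᵥ (ρ 1 (e i)) = 1 := by simp [e]
    simp only [h3] at h2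
    exact lt_of_lt_of_le one_pos h2
  have hmain : ∀ i j, hcmCartan M x i j * Q (e i) (e i) = 2 * Q (e i) (e j) := by
    intro i j
    have h1 := hQinv (cs.simple i) (e i) (e j)
    have h2 : ρ (cs.simple i) (e i) = - e i := by
      rw [hρ]
      have : (hcmCartan M x).mulVec (e i) i = 2 := by
        simp [e, hcmCartan_self M x hx]
      rw [this, two_smul]; simp [e]
    have h3 : ρ (cs.simple i) (e j) = e j - hcmCartan M x i j • e i := by
      rw [hρ]; simp [e]
    rw [h2, h3, hQneg, hQsub] at h1
    linarith
  refine ⟨fun i => Q (e i) (e i), hpos, fun i j hij h2 => ?_⟩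
  have h1 := hmain i j
  have h3 := hmain j i
  rw [hQsymm (e j) (e i), ← h1] at h3
  have h0 := hcmCartan_ne_zero M (fun _ _ => 1) (by simp) hij h2
  simp only [hcmCartan, M.symmetric j i] at h0 h3
  apply mul_left_cancel₀ h0
  linarith

/-- The Coxeter graph. -/
def hcmGraph {B : Type*} (M : CoxeterMatrix B) : SimpleGraph B where
  Adj i j := i ≠ j ∧ M i j ≠ 2
  symm := ⟨fun i j h => ⟨h.1.symm, by rw [M.symmetric]; exact h.2⟩⟩
  loopless := ⟨fun i h => h.1 rfl⟩

lemma hcm_acyclic {B W : Type*} [Fintype B] [Group W] [Finite W]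
    (M : CoxeterMatrix B) (cs : CoxeterSystem M W) : (hcmGraph M).IsAcyclic := by
  classical
  rw [SimpleGraph.isAcyclic_iff_forall_adj_isBridge]
  intro u v huv
  rw [SimpleGraph.isBridge_iff]
  intro hreach
  have huv' : u ≠ v := huv.1
  obtain ⟨d, hd, hsym⟩ := hcm_symmetrizable M cs
    (fun i j => if i = u ∧ j = v then 2 else if i = v ∧ j = u then 1 / 2 else 1)
    (by intro i; grind) (by intro i j; grind)
  have hconst : ∀ a b, ((hcmGraph M).deleteEdges {s(u, v)}).Adj a b → d a = d b := by
    intro a b hab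
    rw [SimpleGraph.deleteEdges_adj] at hab
    have := hsym a b hab.1.1 hab.1.2
    have h2 := hab.2
    simp at h2
    grind
  have : d u = d v := by
    obtain ⟨p⟩ := hreach
    have hwalk : ∀ a b, ((hcmGraph M).deleteEdges {s(u, v)}).Walk a b → d a = d b := by
      intro a b p
      induction p with
      | nil => rfl
      | cons h p ih => rw [← ih]; exact hconst _ _ h
    exact hwalk _ _ p
  have h3 := hsym u v huv.1 huv.2
  have := hd u
  have := hd v
  grind

lemma hcm_exists_leaf {B W : Type*} [Fintype B] [Group W] [Finite W]
    (M : CoxeterMatrix B) (cs : CoxeterSystem M W) (J : Set B) (hJ : J.Nonempty) :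
    ∃ s ∈ J, ∀ t₁ ∈ J, ∀ t₂ ∈ J, t₁ ≠ s → t₂ ≠ s → t₁ ≠ t₂ → M s t₁ = 2 ∨ M s t₂ = 2 := by
  classical
  obtain ⟨b, hb⟩ := hJ
  have hG := (hcm_acyclic M cs).induce J
  let c := ((hcmGraph M).induce J).connectedComponentMk ⟨b, hb⟩
  have hT := hG.isTree_connectedComponent c
  have hadj : ∀ (s t : J), s ∈ c.supp → ((hcmGraph M).induce J).Adj s t → t ∈ c.supp := by
    intro s t hs h
    exact (SimpleGraph.ConnectedComponent.mem_supp_congr_adj c h).1 hs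
  by_cases hn : Nontrivial c.supp
  · obtain ⟨⟨s, hs⟩, hdeg⟩ := hT.exists_vert_degree_one_of_nontrivial
    rw [SimpleGraph.degree_eq_one_iff_existsUnique_adj] at hdeg
    refine ⟨s, s.2, fun t₁ h₁ t₂ h₂ n₁ n₂ n₁₂ => ?_⟩
    by_contra! hcon
    have a₁ : ((hcmGraph M).induce J).Adj s ⟨t₁, h₁⟩ := ⟨n₁.symm, hcon.1⟩
    have a₂ : ((hcmGraph M).induce J).Adj s ⟨t₂, h₂⟩ := ⟨n₂.symm, hcon.2⟩
    have := hdeg.unique (y₁ := ⟨⟨t₁, h₁⟩, hadj _ _ hs a₁⟩) (y₂ := ⟨⟨t₂, h₂⟩, hadj _ _ hs a₂⟩) a₁ a₂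
    simp at this
    exact n₁₂ this
  · rw [not_nontrivial_iff_subsingleton] at hn
    have hbs : (⟨b, hb⟩ : J) ∈ c.supp := rfl
    refine ⟨b, hb, fun t₁ h₁ t₂ h₂ n₁ n₂ n₁₂ => ?_⟩
    by_contra! hcon
    have a₁ : ((hcmGraph M).induce J).Adj ⟨b, hb⟩ ⟨t₁, h₁⟩ := ⟨n₁.symm, hcon.1⟩
    have := hn.elim ⟨_, hbs⟩ ⟨_, hadj _ _ hbs a₁⟩
    simp at this
    exact n₁ this.symm

/-! ### Hamiltonian paths and circuits in subsets -/

/-- A Hamiltonian path on the set `U` from `a` to `b`. -/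
def HcmPath {α : Type*} (r : α → α → Prop) (U : Set α) (a b : α) : Prop :=
  ∃ l : List α, l.Nodup ∧ (∀ x, x ∈ l ↔ x ∈ U) ∧ l.IsChain r ∧ l.head? = some a ∧
    l.getLast? = some b

/-- A Hamiltonian circuit on the set `U`. -/
def HcmCirc {α : Type*} (r : α → α → Prop) (U : Set α) : Prop :=
  ∃ a b, HcmPath r U a b ∧ r b a

lemma HcmPath.append {α : Type*} {r : α → α → Prop} {U V : Set α} {a b c d : α}
    (h1 : HcmPath r U a b) (h2 : HcmPath r V c d) (hd : ∀ x ∈ U, x ∉ V) (hbc : r b c) :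
    HcmPath r (U ∪ V) a d := by
  obtain ⟨l, hl1, hl2, hl3, hl4, hl5⟩ := h1
  obtain ⟨m, hm1, hm2, hm3, hm4, hm5⟩ := h2
  refine ⟨l ++ m, ?_, ?_, ?_, ?_, ?_⟩
  · rw [List.nodup_append]
    refine ⟨hl1, hm1, fun x hx y hy hxy => ?_⟩
    subst hxy
    exact hd x ((hl2 x).1 hx) ((hm2 x).1 hy)
  · intro x; simp [hl2, hm2]
  · rw [List.isChain_append]
    refine ⟨hl3, hm3, ?_⟩
    simp [hl5, hm4, hbc]
  · simp [hl4]
  · simp [hm5]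

lemma HcmPath.map {α : Type*} {r : α → α → Prop} {U : Set α} {a b : α}
    (h : HcmPath r U a b) (f : α → α) (hf : Function.Injective f)
    (hr : ∀ x y, r x y → r (f x) (f y)) : HcmPath r (f '' U) (f a) (f b) := by
  obtain ⟨l, hl1, hl2, hl3, hl4, hl5⟩ := h
  refine ⟨l.map f, hl1.map hf, ?_, ?_, ?_, ?_⟩
  · intro x; simp [hl2]
  · exact List.isChain_map_of_isChain f hr hl3
  · simp [hl4]
  · simp [hl5]

lemma HcmPath.mono {α : Type*} {r r' : α → α → Prop} {U : Set α} {a b : α}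
    (h : HcmPath r U a b) (hr : ∀ x y, r x y → r' x y) : HcmPath r' U a b := by
  obtain ⟨l, hl1, hl2, hl3, hl4, hl5⟩ := h
  exact ⟨l, hl1, hl2, hl3.imp hr, hl4, hl5⟩

lemma HcmPath.symm {α : Type*} {r : α → α → Prop} (hr : ∀ x y, r x y → r y x)
    {U : Set α} {a b : α} (h : HcmPath r U a b) : HcmPath r U b a := by
  obtain ⟨l, hl1, hl2, hl3, hl4, hl5⟩ := h
  refine ⟨l.reverse, by simpa, by simpa, ?_, by simpa, by simpa⟩
  rw [List.isChain_reverse]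
  exact hl3.imp (fun x y h => hr x y h)

/-- A circuit can be started anywhere. -/
lemma HcmCirc.rotate {α : Type*} {r : α → α → Prop} {U : Set α} (h : HcmCirc r U) {w : α}
    (hw : w ∈ U) : ∃ b, HcmPath r U w b ∧ r b w := by
  obtain ⟨a, b, ⟨l, hl1, hl2, hl3, hl4, hl5⟩, hba⟩ := h
  obtain ⟨l1, l2, rfl⟩ := List.append_of_mem ((hl2 w).2 hw)
  rcases List.eq_nil_or_concat l1 with rfl | ⟨l0, c, rfl⟩
  · simp only [List.nil_append, List.head?_cons, Option.some.injEq] at hl4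
    subst hl4
    exact ⟨b, ⟨_, hl1, hl2, hl3, by simp, hl5⟩, hba⟩
  · rw [List.concat_eq_append] at *
    rw [List.isChain_append] at hl3
    refine ⟨c, ⟨(w :: l2) ++ (l0 ++ [c]), ?_, ?_, ?_, by simp, ?_⟩, ?_⟩
    · exact (List.perm_append_comm.nodup_iff).1 hl1
    · intro x
      rw [← hl2]
      simp only [List.mem_append]
      tauto
    · rw [List.isChain_append]
      refine ⟨hl3.2.1, hl3.1, ?_⟩
      intro x hx y hy
      have e1 : x = b := by
        rw [List.getLast?_append] at hl5
        rw [Option.mem_def] at hx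
        rw [hx] at hl5
        simpa using hl5
      have e2 : y = a := by
        rw [List.head?_append] at hl4
        rw [Option.mem_def] at hy
        rw [hy] at hl4
        simpa using hl4
      rw [e1, e2]
      exact hba
    · rw [List.getLast?_append]; simp
    · exact hl3.2.2 c (by simp) w (by simp)

lemma HcmCirc.neighbors {α : Type*} {r : α → α → Prop} (hr : ∀ x y, r x y → r y x)
    {U : Set α} (h : HcmCirc r U) {w p q : α} (hw : w ∈ U) (hp : p ∈ U) (hq : q ∈ U)
    (hwp : w ≠ p) (hwq : w ≠ q) (hpq : p ≠ q) :
    ∃ y z, y ≠ z ∧ r w y ∧ r w z ∧ HcmPath r U w y ∧ HcmPath r U w z := by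
  obtain ⟨z, hz, hzw⟩ := h.rotate hw
  have hz' := hz
  obtain ⟨l, hl1, hl2, hl3, hl4, hl5⟩ := hz
  match l, hl4 with
  | [], hl4 => simp at hl4
  | [x], hl4 =>
    have h1 := (hl2 w).2 hw
    have h2 := (hl2 p).2 hp
    simp_all
  | [x, y], hl4 =>
    have h1 := (hl2 w).2 hw
    have h2 := (hl2 p).2 hp
    have h3 := (hl2 q).2 hq
    simp at hl4 h1 h2 h3
    grind
  | x :: y :: u :: m, hl4 =>
    simp at hl4
    subst hl4
    have hlast : (u :: m).getLast? = some z := by simpa using hl5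
    have hzm : z ∈ u :: m := List.mem_of_getLast? hlast
    rw [List.isChain_cons_cons] at hl3
    refine ⟨y, z, ?_, hl3.1, hr _ _ hzw, ?_, hz'⟩
    · rintro rfl
      simp only [List.nodup_cons] at hl1
      exact hl1.2.1 hzm
    · apply HcmPath.symm hr
      refine ⟨(y :: u :: m) ++ [x], ?_, ?_, ?_, by simp, by rw [List.getLast?_append]; simp⟩
      · exact ((List.perm_append_comm (l₁ := [x]) (l₂ := y :: u :: m)).nodup_iff).1 hl1
      · intro v
        rw [← hl2]
        simp
        tauto
      · rw [List.isChain_append]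
        refine ⟨hl3.2, by simp, ?_⟩
        intro v hv v' hv'
        have e1 : v = z := by
          rw [Option.mem_def, List.getLast?_cons_cons, hlast] at hv
          simpa using hv.symm
        simp at hv'
        rw [e1, ← hv']
        exact hzw

lemma hcm_chain_split {α : Type*} (E : α → α → Prop) (l : List α) :
    l.IsChain E ∨ ∃ l1 x y l2, l = l1 ++ x :: y :: l2 ∧ ¬ E x y := by
  induction l with
  | nil => left; simp
  | cons a l ih =>
    rcases ih with ih | ⟨l1, x, y, l2, rfl, h⟩
    · cases l with
      | nil => left; simp
      | cons b l =>
        by_cases hab : E a b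
        · left; rw [List.isChain_cons_cons]; exact ⟨hab, ih⟩
        · right; exact ⟨[], a, b, l, rfl, hab⟩
    · right; exact ⟨a :: l1, x, y, l2, rfl, h⟩

lemma HcmCirc.exists_edge {α : Type*} {r : α → α → Prop} {U : Set α} (h : HcmCirc r U)
    (E : α → α → Prop) (hE : Equivalence E) {p q : α} (hp : p ∈ U) (hq : q ∈ U)
    (hpq : ¬ E p q) : ∃ x y, r x y ∧ ¬ E x y ∧ HcmPath r U y x := by
  obtain ⟨b, hb, hbp⟩ := h.rotate hp
  obtain ⟨l, hl1, hl2, hl3, hl4, hl5⟩ := hb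
  rcases hcm_chain_split E l with hc | ⟨l1, x, y, l2, rfl, hxy⟩
  · exfalso
    have : IsTrans α E := ⟨fun _ _ _ => hE.trans⟩
    have hpw : l.Pairwise E := hc.pairwise
    cases l with
    | nil => simp at hl4
    | cons a l =>
      simp at hl4
      subst hl4
      rw [List.pairwise_cons] at hpw
      have hq' := (hl2 q).2 hq
      rcases List.mem_cons.1 hq' with rfl | hq'
      · exact hpq (hE.refl _)
      · exact hpq (hpw.1 q hq')
  · have hl3' := hl3
    rw [List.isChain_append_cons_cons] at hl3
    refine ⟨x, y, hl3.2.1, hxy, (y :: l2) ++ (l1 ++ [x]), ?_, ?_, ?_, by simp, ?_⟩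
    · have : l1 ++ x :: y :: l2 = (l1 ++ [x]) ++ (y :: l2) := by simp
      rw [this] at hl1
      exact (List.perm_append_comm.nodup_iff).1 hl1
    · intro v
      rw [← hl2]
      simp only [List.mem_append, List.mem_cons, List.not_mem_nil]
      tauto
    · rw [List.isChain_append]
      refine ⟨hl3.2.2, hl3.1, ?_⟩
      intro v hv v' hv'
      have e1 : v = b := by
        have : l1 ++ x :: y :: l2 = (l1 ++ [x]) ++ (y :: l2) := by simp
        rw [this, List.getLast?_append] at hl5
        rw [Option.mem_def] at hv
        rw [hv] at hl5
        simpa using hl5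
      have e2 : v' = p := by
        have : l1 ++ x :: y :: l2 = (l1 ++ [x]) ++ (y :: l2) := by simp
        rw [this, List.head?_append] at hl4
        rw [Option.mem_def] at hv'
        rw [hv'] at hl4
        simpa using hl4
      rw [e1, e2]
      exact hbp
    · rw [List.getLast?_append]; simp

lemma HcmCirc.exists_map {W : Type*} [Group W] [Finite W] {S : Set W}
    (h : HcmCirc (fun x y => y * x⁻¹ ∈ S) (Set.univ : Set W)) :
    ∃ θ : ZMod (Nat.card W) → W, IsHamiltonianCircuitMap S θ := by
  obtain ⟨a, b, ⟨l, hl1, hl2, hl3, hl4, hl5⟩, hba⟩ := h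
  have hlen : l.length = Nat.card W := by
    classical
    cases nonempty_fintype W
    rw [Nat.card_eq_fintype_card, ← List.toFinset_card_of_nodup hl1, ← Finset.card_univ]
    congr 1
    ext x
    simp [hl2]
  have hpos : 0 < Nat.card W := Nat.card_pos
  have : NeZero (Nat.card W) := ⟨hpos.ne'⟩
  have hlt : ∀ t : ZMod (Nat.card W), t.val < l.length := fun t => by
    rw [hlen]; exact ZMod.val_lt t
  have hinj : Function.Injective (fun t : ZMod (Nat.card W) => l[t.val]'(hlt t)) := by
    intro t u htu
    have := (List.Nodup.getElem_inj_iff hl1).1 htu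
    exact ZMod.val_injective _ this
  refine ⟨fun t => l[t.val]'(hlt t), ⟨hinj, ?_⟩, ?_⟩
  · intro w
    obtain ⟨n, hn, rfl⟩ := List.getElem_of_mem ((hl2 w).2 trivial)
    refine ⟨(n : ZMod (Nat.card W)), ?_⟩
    simp only [ZMod.val_natCast, Nat.mod_eq_of_lt (hlen ▸ hn)]
  · intro t
    by_cases ht : t.val + 1 = Nat.card W
    · have h0 : (t + 1).val = 0 := by
        rw [ZMod.val_add, ZMod.val_one_eq_one_mod, Nat.add_mod_mod, ht, Nat.mod_self]
      have e1 : l[(t + 1).val]'(hlt _) = a := by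
        simp only [h0]
        rw [List.head?_eq_getElem?] at hl4
        exact (List.getElem?_eq_some_iff.1 hl4).2
      have e2 : l[t.val]'(hlt _) = b := by
        rw [List.getLast?_eq_getElem?] at hl5
        have h5 : l.length - 1 = t.val := by omega
        rw [h5] at hl5
        exact (List.getElem?_eq_some_iff.1 hl5).2
      simp only [e1, e2]
      exact hba
    · have h0 : (t + 1).val = t.val + 1 := by
        rw [ZMod.val_add, ZMod.val_one_eq_one_mod, Nat.add_mod_mod, Nat.mod_eq_of_lt]
        have := hlt t
        omega
      simp only [h0]
      exact List.isChain_iff_getElem.1 hl3 t.val (by have := hlt t; omega)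

/-! ### Parabolic subgroups -/

/-- Adjacency in the Cayley graph with labels in `J`. -/
def HcmAdj {B W : Type*} [Group W] {M : CoxeterMatrix B} (cs : CoxeterSystem M W) (J : Set B)
    (x y : W) : Prop := ∃ i ∈ J, y = cs.simple i * x

lemma HcmAdj.symm {B W : Type*} [Group W] {M : CoxeterMatrix B} (cs : CoxeterSystem M W)
    (J : Set B) (x y : W) (h : HcmAdj cs J x y) : HcmAdj cs J y x := by
  obtain ⟨i, hi, rfl⟩ := h
  exact ⟨i, hi, by simp⟩

lemma HcmAdj.mulRight {B W : Type*} [Group W] {M : CoxeterMatrix B} (cs : CoxeterSystem M W)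
    (J : Set B) (g x y : W) (h : HcmAdj cs J x y) : HcmAdj cs J (x * g) (y * g) := by
  obtain ⟨i, hi, rfl⟩ := h
  exact ⟨i, hi, by rw [mul_assoc]⟩

/-- The parabolic subgroup. -/
abbrev hcmPar {B W : Type*} [Group W] {M : CoxeterMatrix B} (cs : CoxeterSystem M W) (J : Set B) :
    Subgroup W := Subgroup.closure (cs.simple '' J)

lemma hcmPar_simple_mem {B W : Type*} [Group W] {M : CoxeterMatrix B} (cs : CoxeterSystem M W)
    {J : Set B} {i : B} (hi : i ∈ J) : cs.simple i ∈ hcmPar cs J :=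
  Subgroup.subset_closure ⟨i, hi, rfl⟩

lemma hcmPar_subset {B W : Type*} [Group W] {M : CoxeterMatrix B} (cs : CoxeterSystem M W)
    (J : Set B) (U : Set W) (h1 : 1 ∈ U) (hU : ∀ i ∈ J, ∀ x ∈ U, cs.simple i * x ∈ U) :
    (hcmPar cs J : Set W) ⊆ U := by
  intro x hx
  induction hx using Subgroup.closure_induction_left with
  | one => exact h1
  | mul_left x hx y hy ih =>
    obtain ⟨i, hi, rfl⟩ := hx
    exact hU i hi y ih
  | inv_mul_cancel x hx y hy ih =>
    obtain ⟨i, hi, rfl⟩ := hx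
    rw [cs.inv_simple]
    exact hU i hi y ih

lemma hcm_simple_injective {B W : Type*} [Fintype B] [Group W] {M : CoxeterMatrix B}
    (cs : CoxeterSystem M W) {i j : B} (h : i ≠ j) : cs.simple i ≠ cs.simple j := by
  intro he
  apply hcm_simple_notMem M cs i {j} (by simpa using h)
  rw [he]
  exact Subgroup.subset_closure (by simp)

lemma hcm_commute {B W : Type*} [Group W] {M : CoxeterMatrix B}
    (cs : CoxeterSystem M W) {i j : B} (h : M i j = 2) :
    cs.simple i * cs.simple j = cs.simple j * cs.simple i := by
  have h1 := cs.simple_mul_simple_pow i j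
  rw [h, pow_two] at h1
  have := eq_inv_of_mul_eq_one_left h1
  rw [mul_inv_rev, cs.inv_simple, cs.inv_simple] at this
  exact this

lemma hcm_circ_single {B W : Type*} [Group W] {M : CoxeterMatrix B}
    (cs : CoxeterSystem M W) (i : B) : HcmCirc (HcmAdj cs {i}) (hcmPar cs {i} : Set W) := by
  refine ⟨1, cs.simple i, ⟨[1, cs.simple i], ?_, ?_, ?_, rfl, rfl⟩, ?_⟩
  · simp only [List.nodup_cons, List.mem_singleton, List.not_mem_nil, not_false_eq_true,
      List.nodup_nil, and_true]
    intro h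
    have := congrArg cs.lengthParity h
    rw [map_one, cs.lengthParity_simple] at this
    revert this
    decide
  · intro x
    constructor
    · intro hx
      simp at hx
      rcases hx with rfl | rfl
      · exact one_mem _
      · exact hcmPar_simple_mem cs rfl
    · intro hx
      refine hcmPar_subset cs {i} {x | x ∈ [1, cs.simple i]} (by simp) ?_ hx
      rintro j rfl x hx
      simp at hx ⊢
      rcases hx with rfl | rfl <;> simp
  · simp [HcmAdj]
  · exact ⟨i, rfl, by simp⟩

lemma hcm_circ_pair {B W : Type*} [Group W] [Finite W] {M : CoxeterMatrix B}
    (cs : CoxeterSystem M W) (i j : B) :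
    HcmCirc (HcmAdj cs {i, j}) (hcmPar cs {i, j} : Set W) := by
  set s := cs.simple i with hs
  set t := cs.simple j with ht
  have hss : s * s = 1 := by simp [hs]
  have htt : t * t = 1 := by simp [ht]
  let x := t * s
  have hpar : ∀ k l : ℕ, s * x ^ k ≠ x ^ l := by
    intro k l h
    have h1 := congrArg cs.lengthParity h
    have h2 : cs.lengthParity x = 1 := by
      simp only [x, map_mul, hs, ht, cs.lengthParity_simple]
      decide
    rw [map_mul, map_pow, map_pow, h2, one_pow, one_pow, hs, cs.lengthParity_simple] at h1
    revert h1
    decide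
  have hpow : ∀ k l : ℕ, k < orderOf x → l < orderOf x → x ^ k = x ^ l → k = l := by
    intro k l hk hl h
    exact pow_injOn_Iio_orderOf hk hl h
  have hm : 0 < orderOf x := orderOf_pos x
  have hpath : ∀ n, n < orderOf x →
      HcmPath (HcmAdj cs {i, j}) {g | ∃ k ≤ n, g = x ^ k ∨ g = s * x ^ k} 1 (s * x ^ n) := by
    have hpair : ∀ n, HcmPath (HcmAdj cs {i, j}) {x ^ n, s * x ^ n} (x ^ n) (s * x ^ n) := by
      intro n
      refine ⟨[x ^ n, s * x ^ n], ?_, ?_, ?_, rfl, rfl⟩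
      · simpa using (hpar n n).symm
      · intro y; simp
      · simp only [List.isChain_cons_cons, List.isChain_singleton, and_true]
        exact ⟨i, by simp, rfl⟩
    intro n
    induction n with
    | zero =>
      intro _
      have := hpair 0
      convert this using 1
      · ext g; simp
      · simp
    | succ n ih =>
      intro hn
      have h1 := (ih (by omega)).append (hpair (n + 1)) ?_ ⟨j, by simp, ?_⟩
      · convert h1 using 1
        ext g
        constructor
        · rintro ⟨k, hk, h⟩
          rcases hk.lt_or_eq with hk | rfl
          · left; exact ⟨k, by omega, h⟩
          · right; exact h
        · rintro (⟨k, hk, h⟩ | h)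
          · exact ⟨k, by omega, h⟩
          · exact ⟨n + 1, le_rfl, h⟩
      · rintro g ⟨k, hk, h⟩ h'
        rcases h with rfl | rfl <;> rcases h' with h' | h'
        · have := hpow _ _ (by omega) hn h'
          omega
        · exact hpar _ _ h'.symm
        · exact hpar _ _ h'
        · have := hpow _ _ (by omega) hn (mul_left_cancel h')
          omega
      · rw [pow_succ', ← ht, ← mul_assoc]
  obtain ⟨n, hn⟩ : ∃ n, orderOf x = n + 1 := ⟨orderOf x - 1, by omega⟩
  have hclose : x ^ (n + 1) = 1 := by rw [← hn]; exact pow_orderOf_eq_one x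
  have hset : {g | ∃ k ≤ n, g = x ^ k ∨ g = s * x ^ k} = (hcmPar cs {i, j} : Set W) := by
    have hsm : s ∈ hcmPar cs {i, j} := hcmPar_simple_mem cs (by simp)
    have htm : t ∈ hcmPar cs {i, j} := hcmPar_simple_mem cs (by simp)
    apply Set.Subset.antisymm
    · rintro g ⟨k, hk, rfl | rfl⟩
      · exact pow_mem (mul_mem htm hsm) k
      · exact mul_mem hsm (pow_mem (mul_mem htm hsm) k)
    · apply hcmPar_subset
      · exact ⟨0, by omega, by simp⟩
      · have ht' : ∀ k, t * x ^ (k + 1) = s * x ^ k := by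
          intro k
          rw [pow_succ', ← mul_assoc, ← mul_assoc, htt, one_mul]
        rintro k (rfl | hk) g ⟨m, hmn, h⟩
        · rcases h with rfl | rfl
          · exact ⟨m, hmn, Or.inr rfl⟩
          · exact ⟨m, hmn, Or.inl (by rw [← hs, ← mul_assoc, hss, one_mul])⟩
        · rw [Set.mem_singleton_iff] at hk
          subst hk
          rw [← ht]
          rcases h with rfl | rfl
          · cases m with
            | zero => exact ⟨n, le_rfl, Or.inr (by rw [← ht', hclose, pow_zero])⟩
            | succ m => exact ⟨m, by omega, Or.inr (ht' m)⟩
          · have he : t * (s * x ^ m) = x ^ (m + 1) := by rw [pow_succ', ← mul_assoc]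
            rw [he]
            rcases hmn.lt_or_eq with hmn | rfl
            · exact ⟨m + 1, by omega, Or.inl rfl⟩
            · exact ⟨0, by omega, Or.inl (by rw [hclose, pow_zero])⟩
  refine ⟨1, s * x ^ n, ?_, j, by simp, ?_⟩
  · rw [← hset]
    exact hpath n (by omega)
  · rw [← ht, ← mul_assoc, ← pow_succ', hclose]

/-- The induction step. -/
lemma hcm_circ_step {B W : Type*} [Fintype B] [Group W] [Finite W] {M : CoxeterMatrix B}
    (cs : CoxeterSystem M W) (J : Set B) (s : B) (hs : s ∉ J)
    (hleaf : ∀ t₁ ∈ J, ∀ t₂ ∈ J, t₁ ≠ t₂ → M s t₁ = 2 ∨ M s t₂ = 2)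
    (hcard : ∃ p ∈ J, ∃ q ∈ J, p ≠ q)
    (h : HcmCirc (HcmAdj cs J) (hcmPar cs J : Set W)) :
    HcmCirc (HcmAdj cs (insert s J)) (hcmPar cs (insert s J) : Set W) := by
  obtain ⟨p, hp, q, hq, hpq⟩ := hcard
  have hmono : ∀ x y, HcmAdj cs J x y → HcmAdj cs (insert s J) x y := by
    rintro x y ⟨i, hi, h⟩
    exact ⟨i, Or.inr hi, h⟩
  have hle : hcmPar cs J ≤ hcmPar cs (insert s J) :=
    Subgroup.closure_mono (Set.image_mono (Set.subset_insert _ _))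
  -- every generator occurs as a label, and any such edge may be translated
  have hedge : ∀ t ∈ J, ∀ g : W, HcmPath (HcmAdj cs (insert s J))
      {x | x * g⁻¹ ∈ hcmPar cs J} g (cs.simple t * g) := by
    intro t ht g
    have hK : cs.simple t ∉ hcmPar cs (J \ {t}) := hcm_simple_notMem M cs t _ (by simp)
    obtain ⟨x, y, ⟨i, hi, rfl⟩, hxy, hP⟩ := h.exists_edge
      (fun x y => y * x⁻¹ ∈ hcmPar cs (J \ {t}))
      ⟨fun x => by simp, fun {x y} h => by simpa using inv_mem h,
        fun {x y z} h1 h2 => by simpa [mul_assoc] using mul_mem h2 h1⟩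
      (p := 1) (q := cs.simple t) (one_mem _) (hcmPar_simple_mem cs ht) (by simpa using hK)
    have hit : i = t := by
      by_contra hne
      apply hxy
      rw [mul_inv_cancel_right]
      exact hcmPar_simple_mem cs ⟨hi, hne⟩
    subst hit
    have hxm : x ∈ hcmPar cs J := by
      obtain ⟨l, _, h2, _, _, h5⟩ := hP
      exact (h2 x).1 (List.mem_of_getLast? h5)
    have h1 := ((hP.symm (HcmAdj.symm cs J)).mono hmono).map (fun y => y * (x⁻¹ * g))
      (mul_left_injective _) (fun a b hab => hab.mulRight _ _ _)
    have e1 : x * (x⁻¹ * g) = g := by group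
    have e2 : cs.simple i * x * (x⁻¹ * g) = cs.simple i * g := by group
    simp only [e1, e2] at h1
    convert h1 using 1
    ext y
    constructor
    · intro hy
      refine ⟨y * g⁻¹ * x, mul_mem hy hxm, by group⟩
    · rintro ⟨z, hz, rfl⟩
      have : z * (x⁻¹ * g) * g⁻¹ = z * x⁻¹ := by group
      simp only [Set.mem_ofPred_eq, this]
      exact mul_mem hz (inv_mem hxm)
  let P : Set W → Prop := fun U => U ⊆ hcmPar cs (insert s J) ∧ 1 ∈ U ∧
    (∀ h ∈ hcmPar cs J, ∀ x ∈ U, h * x ∈ U) ∧ HcmCirc (HcmAdj cs (insert s J)) U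
  have hP0 : P (hcmPar cs J) := by
    refine ⟨hle, one_mem _, fun h hh x hx => mul_mem hh hx, ?_⟩
    obtain ⟨a, b, hab, hr⟩ := h
    exact ⟨a, b, hab.mono hmono, hmono _ _ hr⟩
  obtain ⟨U, ⟨hU1, hU2, hU3, hU4⟩, hmax⟩ := (Set.toFinite {U | P U}).exists_maximal ⟨_, hP0⟩
  suffices hUeq : U = hcmPar cs (insert s J) by rw [← hUeq]; exact hU4
  by_contra hne
  have hex : ∃ w ∈ U, cs.simple s * w ∉ U := by
    by_contra! hcon
    apply hne
    apply Set.Subset.antisymm hU1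
    apply hcmPar_subset cs _ _ hU2
    rintro i (rfl | hi) x hx
    · exact hcon x hx
    · exact hU3 _ (hcmPar_simple_mem cs hi) x hx
  obtain ⟨w, hw, hsw⟩ := hex
  obtain ⟨y, z, hyz, ⟨i, hi, rfl⟩, ⟨j, hj, rfl⟩, hPy, hPz⟩ :=
    hU4.neighbors (HcmAdj.symm cs _) hw
    (hU3 _ (hcmPar_simple_mem cs hp) w hw) (hU3 _ (hcmPar_simple_mem cs hq) w hw)
    (by
      intro h
      have := cs.length_simple p
      rw [right_eq_mul.1 h, cs.length_one] at this
      omega)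
    (by
      intro h
      have := cs.length_simple q
      rw [right_eq_mul.1 h, cs.length_one] at this
      omega)
    (fun h => hcm_simple_injective cs hpq (mul_right_cancel h))
  have hmemU : ∀ {a b}, HcmPath (HcmAdj cs (insert s J)) U a b → b ∈ U := by
    rintro a b ⟨l, _, h2, _, _, h5⟩
    exact (h2 b).1 (List.mem_of_getLast? h5)
  have hiJ : i ∈ J := by
    rcases hi with rfl | hi
    · exact absurd (hmemU hPy) hsw
    · exact hi
  have hjJ : j ∈ J := by
    rcases hj with rfl | hj
    · exact absurd (hmemU hPz) hsw
    · exact hj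
  have hij : i ≠ j := by rintro rfl; exact hyz rfl
  obtain ⟨t, ht, hst, hPt⟩ : ∃ t ∈ J, M s t = 2 ∧
      HcmPath (HcmAdj cs (insert s J)) U w (cs.simple t * w) := by
    rcases hleaf i hiJ j hjJ hij with h | h
    · exact ⟨i, hiJ, h, hPy⟩
    · exact ⟨j, hjJ, h, hPz⟩
  have hcomm := hcm_commute cs hst
  have hdisj : ∀ x ∈ U, x ∉ {x | x * (cs.simple s * w)⁻¹ ∈ hcmPar cs J} := by
    intro x hx hx'
    apply hsw
    have := hU3 _ (inv_mem hx') x hx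
    simpa [mul_assoc] using this
  have hnew := (hPt.symm (HcmAdj.symm cs _)).append (hedge t ht (cs.simple s * w)) hdisj
    ⟨s, Or.inl rfl, rfl⟩
  have hsm : cs.simple s ∈ hcmPar cs (insert s J) := hcmPar_simple_mem cs (Or.inl rfl)
  have hPnew : P (U ∪ {x | x * (cs.simple s * w)⁻¹ ∈ hcmPar cs J}) := by
    refine ⟨?_, Or.inl hU2, ?_, _, _, hnew, s, Or.inl rfl, ?_⟩
    · apply Set.union_subset hU1
      intro x hx
      have := mul_mem (hle hx) (mul_mem hsm (hU1 hw))
      rwa [inv_mul_cancel_right] at this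
    · rintro h hh x (hx | hx)
      · exact Or.inl (hU3 h hh x hx)
      · right
        simp only [Set.mem_ofPred_eq] at hx ⊢
        rw [mul_assoc]
        exact mul_mem hh hx
    · rw [← mul_assoc (cs.simple t), ← mul_assoc, ← mul_assoc, hcomm, mul_assoc (cs.simple t)]
      simp
  have := hmax hPnew Set.subset_union_left
  exact hsw (this (Or.inr (by simp)))

lemma hcm_circ {B W : Type*} [Fintype B] [Group W] [Finite W] {M : CoxeterMatrix B}
    (cs : CoxeterSystem M W) (n : ℕ) : ∀ J : Set B, J.ncard = n + 1 →
      HcmCirc (HcmAdj cs J) (hcmPar cs J : Set W) := by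
  induction n with
  | zero =>
    intro J hJ
    obtain ⟨i, rfl⟩ := Set.ncard_eq_one.1 hJ
    exact hcm_circ_single cs i
  | succ n ih =>
    intro J hJ
    rcases Nat.eq_zero_or_pos n with rfl | hn
    · obtain ⟨i, j, _, rfl⟩ := Set.ncard_eq_two.1 hJ
      exact hcm_circ_pair cs i j
    · obtain ⟨s, hs, hleaf⟩ := hcm_exists_leaf M cs J
        (Set.nonempty_of_ncard_ne_zero (by omega))
      have hc : (J \ {s}).ncard = n + 1 := by
        rw [Set.ncard_sdiff_singleton_of_mem hs]; omega
      have hins : insert s (J \ {s}) = J := by simp [hs]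
      have := hcm_circ_step cs (J \ {s}) s (by simp)
        (fun t₁ h₁ t₂ h₂ h => hleaf t₁ h₁.1 t₂ h₂.1 h₁.2 h₂.2 h)
        (by
          obtain ⟨p, q, hp, hq, hpq⟩ := (Set.one_lt_ncard_iff (Set.toFinite _)).1
            (show 1 < (J \ {s}).ncard by omega)
          exact ⟨p, hp, q, hq, hpq⟩) (ih _ hc)
      rwa [hins] at this

/-- For every finite Coxeter system `(W, S)` over a nonempty finite index set `B`,
there exists a Hamiltonian circuit map for `(W, S)`, where `S = {sᵢ | i ∈ B}` is the
set of simple reflections. -/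
theorem exists_hamiltonianCircuitMap_of_finite_coxeterSystem
    {B W : Type*} [Fintype B] [Nonempty B] [Group W] [Finite W]
    (M : CoxeterMatrix B) (cs : CoxeterSystem M W) :
    ∃ θ : ZMod (Nat.card W) → W,
      IsHamiltonianCircuitMap (Set.range cs.simple) θ := by
  apply HcmCirc.exists_map
  have h0 : (Set.univ : Set B).ncard ≠ 0 := by
    rw [Set.ncard_univ]
    exact Nat.card_pos.ne'
  obtain ⟨n, hn⟩ := Nat.exists_eq_succ_of_ne_zero h0
  obtain ⟨a, b, hab, hr⟩ := hcm_circ cs n Set.univ hn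
  have hpar : (hcmPar cs Set.univ : Set W) = Set.univ := by
    simp [hcmPar, Set.image_univ, cs.subgroup_closure_range_simple]
  have hmono : ∀ x y, HcmAdj cs Set.univ x y → y * x⁻¹ ∈ Set.range cs.simple := by
    rintro x y ⟨i, _, rfl⟩
    exact ⟨i, by simp⟩
  rw [hpar] at hab
  exact ⟨a, b, hab.mono hmono, hmono _ _ hr⟩
end

section
/- Let (W, S) be a finite Coxeter system over a finite index set B with |B| = n ≥ 3. Then there exists an enumeration b₁, …, b_n of B such that M bᵢ b_n = 2 for all 1 ≤ i ≤ n − 2; equivalently, the simple reflection s_{b_n} commutes with s_{bᵢ} for every i ≤ n − 2 (the Coxeter diagram of a finite Coxeter system has a vertex adjacent to at most one other vertex). -/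
open Module Polynomial.Chebyshev in
/-- Two reflections with Cartan product `4 cos² (π / m)` satisfy `(r₁ r₂)^m = 1`, for `m ≥ 3`. -/
lemma cox_refl_pow {V : Type*} [AddCommGroup V] [Module ℝ V] {x y : V} {f g : Dual ℝ V}
    (hf : f x = 2) (hg : g y = 2) (m : ℕ) (hm : 3 ≤ m)
    (h : f y * g x = 4 * Real.cos (Real.pi / m) ^ 2) :
    (reflection hf * reflection hg) ^ m = 1 := by
  have hm0 : (0 : ℝ) < m := by positivity
  have hm3 : (3 : ℝ) ≤ m := by exact_mod_cast hm
  set θ : ℝ := 2 * (Real.pi / m) with hθ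
  have hmθ : (m : ℝ) * θ = 2 * Real.pi := by rw [hθ]; field_simp
  have ht : 2 * Real.cos θ = f y * g x - 2 := by
    rw [h, hθ, Real.cos_two_mul]; ring
  have hpi := Real.pi_pos
  have hsin : Real.sin θ ≠ 0 := by
    apply ne_of_gt
    apply Real.sin_pos_of_pos_of_lt_pi
    · positivity
    · nlinarith
  have hS := fun n : ℤ => S_two_mul_real_cos θ n
  ext z
  rw [reflection_mul_reflection_pow_apply hf hg m z _ ht]
  obtain ⟨k, hk | hk⟩ := Nat.even_or_odd' m
  · have h1 : ((m : ℤ) - 2) / 2 = k - 1 := by omega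
    have h2 : ((m : ℤ) - 1) / 2 = k - 1 := by omega
    have hz : (S ℝ ((k : ℤ) - 1)).eval (2 * Real.cos θ) = 0 := by
      have := hS (k - 1)
      have hk' : (k : ℝ) * θ = Real.pi := by
        have : (m : ℝ) = 2 * k := by exact_mod_cast hk
        rw [this] at hmθ; linarith
      have e : (((k : ℤ) - 1 : ℤ) + 1 : ℝ) * θ = Real.pi := by push_cast; linarith
      rw [e, Real.sin_pi] at this
      exact (mul_eq_zero.mp this).resolve_right hsin
    rw [h1, h2, hz]; simp
  · have h1 : ((m : ℤ) - 2) / 2 = k - 1 := by omega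
    have h2 : ((m : ℤ) - 1) / 2 = k := by omega
    have h3 : ((m : ℤ) - 3) / 2 = k - 1 := by omega
    have h4 : (m : ℤ) / 2 = k := by omega
    have hz : (S ℝ (k : ℤ)).eval (2 * Real.cos θ) + (S ℝ ((k : ℤ) - 1)).eval (2 * Real.cos θ)
        = 0 := by
      have a1 := hS (k - 1)
      have a2 := hS k
      have hk' : (2 * k + 1 : ℝ) * θ = 2 * Real.pi := by
        have : (m : ℝ) = 2 * k + 1 := by exact_mod_cast hk
        rw [← this]; exact hmθ
      have e1 : (((k : ℤ) - 1 : ℤ) + 1 : ℝ) * θ = k * θ := by push_cast; ring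
      have e2 : (((k : ℤ) : ℝ) + 1) * θ = 2 * Real.pi - k * θ := by push_cast; linarith
      rw [e1] at a1
      rw [e2, Real.sin_two_pi_sub] at a2
      have : ((S ℝ (k : ℤ)).eval (2 * Real.cos θ) + (S ℝ ((k : ℤ) - 1)).eval (2 * Real.cos θ))
        * Real.sin θ = 0 := by rw [add_mul, a1, a2]; ring
      exact (mul_eq_zero.mp this).resolve_right hsin
    rw [h1, h2, h3, h4, hz]; simp

open Module in
lemma cox_refl_sq {V : Type*} [AddCommGroup V] [Module ℝ V] {x y : V} {f g : Dual ℝ V}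
    (hf : f x = 2) (hg : g y = 2) (h1 : f y = 0) (h2 : g x = 0) :
    (reflection hf * reflection hg) ^ 2 = 1 := by
  ext z
  simp only [pow_two, LinearEquiv.mul_apply, reflection_apply, map_sub, map_smul, h1, h2, hf, hg,
    LinearEquiv.coe_one, id, smul_eq_mul]
  module

/-- Core argument: a finite group acting linearly such that some elements act as reflections
`v ↦ v - f i v • e_i`; then not all row sums `f i (∑ j, e_j)` can be nonpositive. -/
lemma cox_core {B W : Type*} [Fintype B] [DecidableEq B] [Nonempty B] [Group W] [Finite W]
    (ρ : W →* ((B → ℝ) ≃ₗ[ℝ] (B → ℝ))) (s : B → W) (f : B → Module.Dual ℝ (B → ℝ))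
    (hf : ∀ i, f i (Pi.single i 1) = 2)
    (hρ : ∀ i v, ρ (s i) v = v - f i v • Pi.single i 1) :
    ∃ i, 0 < f i (fun _ => 1) := by
  by_contra! hneg
  have := Fintype.ofFinite W
  let β : (B → ℝ) → (B → ℝ) → ℝ := fun u v => ∑ w : W, (ρ w u) ⬝ᵥ (ρ w v)
  have hinv : ∀ g u v, β (ρ g u) (ρ g v) = β u v := by
    intro g u v
    refine Fintype.sum_equiv (Equiv.mulRight g) _ _ fun w => ?_
    simp [map_mul]
  have hpos : ∀ u, 0 ≤ β u u := fun u =>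
    Finset.sum_nonneg fun w _ => Finset.sum_nonneg fun i _ => mul_self_nonneg _
  have hsub : ∀ u v v', β u (v - v') = β u v - β u v' := by
    intro u v v'; simp [β, dotProduct_sub]
  have hsmul : ∀ u (a : ℝ) v, β u (a • v) = a * β u v := by
    intro u a v; simp [β, Finset.mul_sum]
  have hnegl : ∀ u v, β (-u) v = - β u v := by
    intro u v; simp [β]
  have h1 : ∀ i, β (Pi.single i 1) (fun _ => 1) ≤ 0 := by
    intro i
    have h := hinv (s i) (Pi.single i 1) (fun _ => 1)
    rw [hρ, hρ, hf] at h
    have e : (Pi.single i 1 : B → ℝ) - (2 : ℝ) • Pi.single i 1 = - Pi.single i 1 := by module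
    rw [e, hnegl, hsub, hsmul] at h
    have := mul_nonneg_of_nonpos_of_nonpos (hneg i) (neg_nonpos.mpr (hpos (Pi.single i 1)))
    linarith
  have h2 : β (fun _ => 1) (fun _ => 1) = ∑ i, β (Pi.single i 1) (fun _ => 1) := by
    have e : (fun _ => 1 : B → ℝ) = ∑ i, Pi.single i 1 := by
      ext j; simp [Finset.sum_apply, Pi.single_apply]
    have : ∀ v, β (∑ i, Pi.single i 1) v = ∑ i, β (Pi.single i 1) v := by
      intro v
      simp only [β, map_sum, sum_dotProduct]
      exact Finset.sum_comm
    rw [← this, ← e]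
  have h3 : 0 < β (fun _ => 1) (fun _ => 1) := by
    have : (fun _ => 1 : B → ℝ) ⬝ᵥ (fun _ => 1) ≤ β (fun _ => 1) (fun _ => 1) := by
      have := Finset.single_le_sum (f := fun w : W => (ρ w (fun _ => 1)) ⬝ᵥ (ρ w (fun _ => 1)))
        (fun w _ => Finset.sum_nonneg fun i _ => mul_self_nonneg _) (Finset.mem_univ 1)
      simpa using this
    refine lt_of_lt_of_le ?_ this
    simp [dotProduct, Fintype.card_pos]
  have := Finset.sum_nonpos (s := Finset.univ) fun i _ => h1 i
  linarith

/-- The Coxeter diagram of a finite Coxeter group has a vertex of degree at most one. -/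
lemma cox_leaf {B W : Type*} [Fintype B] [Group W] [Finite W]
    (M : CoxeterMatrix B) (cs : CoxeterSystem M W) (h2 : 2 ≤ Fintype.card B) :
    ∃ b c : B, c ≠ b ∧ ∀ j, j ≠ b → j ≠ c → M b j = 2 := by
  classical
  by_contra! hcon
  have : Nontrivial B := Fintype.one_lt_card_iff_nontrivial.mp h2
  let A : B → B → ℝ := fun i j => if i = j then 2 else -(2 * Real.cos (Real.pi / M i j))
  let f : B → Module.Dual ℝ (B → ℝ) := fun i => ∑ j, A i j • LinearMap.proj j
  have hfv : ∀ i v, f i v = ∑ j, A i j * v j := by intro i v; simp [f]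
  have hfs : ∀ i j, f i (Pi.single j 1) = A i j := by
    intro i j; simp [hfv, Pi.single_apply]
  have hf : ∀ i, f i (Pi.single i 1) = 2 := by intro i; simp [hfs, A]
  have hlift : M.IsLiftable (fun i => Module.reflection (hf i)) := by
    intro i j
    by_cases hij : i = j
    · subst hij
      rw [M.diagonal, pow_one]
      ext1 z
      exact Module.involutive_reflection (hf i) z
    · have hA : A i j = -(2 * Real.cos (Real.pi / M i j)) := if_neg hij
      have hA' : A j i = -(2 * Real.cos (Real.pi / M i j)) := by
        rw [M.symmetric i j]; exact if_neg (Ne.symm hij)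
      have h1 := M.off_diagonal i j hij
      rcases (by omega : M i j = 0 ∨ M i j = 2 ∨ 3 ≤ M i j) with h | h | h
      · rw [h, pow_zero]
      · have h0 : -(2 * Real.cos (Real.pi / (M i j : ℕ))) = 0 := by simp [h]
        rw [h]
        refine cox_refl_sq _ _ ?_ ?_
        · rw [hfs, hA, h0]
        · rw [hfs, hA', h0]
      · refine cox_refl_pow _ _ _ h ?_
        rw [hfs, hfs, hA, hA']; ring
  obtain ⟨i, hi⟩ := cox_core (cs.lift ⟨_, hlift⟩) cs.simple f hf (by
    intro i v
    rw [cs.lift_apply_simple hlift, Module.reflection_apply])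
  have hAnp : ∀ j, j ≠ i → A i j ≤ 0 := by
    intro j hj
    have h1 := M.off_diagonal i j hj.symm
    simp only [A, if_neg hj.symm]
    have hpi := Real.pi_pos
    have : 0 ≤ Real.cos (Real.pi / M i j) := by
      rcases (by omega : M i j = 0 ∨ 2 ≤ M i j) with h | h
      · simp [h]
      · have : (2 : ℝ) ≤ M i j := by exact_mod_cast h
        apply Real.cos_nonneg_of_mem_Icc
        constructor
        · have : 0 ≤ Real.pi / M i j := by positivity
          linarith
        · gcongr
    linarith
  have hAle : ∀ j, j ≠ i → M i j ≠ 2 → A i j ≤ -1 := by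
    intro j hj hM
    have h1 := M.off_diagonal i j hj.symm
    simp only [A, if_neg hj.symm]
    have hpi := Real.pi_pos
    have : 1 / 2 ≤ Real.cos (Real.pi / M i j) := by
      rcases (by omega : M i j = 0 ∨ 3 ≤ M i j) with h | h
      · simp [h]; norm_num
      · have h3 : (3 : ℝ) ≤ M i j := by exact_mod_cast h
        rw [← Real.cos_pi_div_three]
        apply Real.cos_le_cos_of_nonneg_of_le_pi
        · positivity
        · linarith
        · gcongr
    linarith
  obtain ⟨c, hc⟩ := exists_ne i
  obtain ⟨j, hji, -, hj⟩ := hcon i c hc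
  obtain ⟨k, hki, hkj, hk⟩ := hcon i j hji
  rw [hfv] at hi
  simp only [mul_one] at hi
  rw [← Finset.add_sum_erase _ _ (Finset.mem_univ i),
    ← Finset.add_sum_erase _ _ (show j ∈ Finset.univ.erase i by simp [hji]),
    ← Finset.add_sum_erase _ _ (show k ∈ (Finset.univ.erase i).erase j by simp [hki, hkj])] at hi
  have hr : ∑ x ∈ ((Finset.univ.erase i).erase j).erase k, A i x ≤ 0 :=
    Finset.sum_nonpos fun x hx => hAnp x (by simp at hx; tauto)
  have e : A i i = 2 := if_pos rfl
  have := hAle j hji hj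
  have := hAle k hki hk
  linarith


/-- In a finite Coxeter system over a finite index set `B` with `|B| = n ≥ 3`, there is
an enumeration `b₁, …, b_n` of `B` such that `M bᵢ b_n = 2` for all `1 ≤ i ≤ n - 2`;
equivalently, the simple reflection `s_{b_n}` commutes with `s_{bᵢ}` for all such `i`. -/
theorem finite_coxeter_exists_enumeration_commuting_last
    {B W : Type*} [Fintype B] [Group W] [Finite W]
    (M : CoxeterMatrix B) (cs : CoxeterSystem M W)
    (n : ℕ) (hn : 3 ≤ n) (hcard : Fintype.card B = n) :
    ∃ e : Fin n ≃ B, ∀ i : Fin n, (i : ℕ) + 2 < n →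
      M (e i) (e ⟨n - 1, by omega⟩) = 2 ∧
      Commute (cs.simple (e i)) (cs.simple (e ⟨n - 1, by omega⟩)) := by
  classical
  obtain ⟨b, c, hcb, h⟩ := cox_leaf M cs (by omega)
  let l : Fin n := ⟨n - 1, by omega⟩
  let p : Fin n := ⟨n - 2, by omega⟩
  have hpl : p ≠ l := by simp only [p, l, ne_eq, Fin.mk.injEq]; omega
  let e0 : Fin n ≃ B := (Fintype.equivFinOfCardEq hcard).symm
  let e1 : Fin n ≃ B := e0.trans (Equiv.swap (e0 l) b)
  have h1 : e1 l = b := by simp [e1]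
  let e2 : Fin n ≃ B := e1.trans (Equiv.swap (e1 p) c)
  have h2 : e2 p = c := by simp [e2]
  have h3 : e2 l = b := by
    simp only [e2, Equiv.trans_apply, h1]
    apply Equiv.swap_apply_of_ne_of_ne
    · rw [← h1]; exact fun hh => hpl (e1.injective hh.symm)
    · exact hcb.symm
  refine ⟨e2, fun i hi => ?_⟩
  have hM : M (e2 i) (e2 l) = 2 := by
    rw [M.symmetric, h3]
    apply h
    · rw [← h3]
      intro hh
      have := congrArg Fin.val (e2.injective hh)
      simp only [l] at this; omega
    · rw [← h2]
      intro hh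
      have := congrArg Fin.val (e2.injective hh)
      simp only [p] at this; omega
  refine ⟨hM, ?_⟩
  have hp := cs.simple_mul_simple_pow (e2 i) (e2 l)
  rw [hM, pow_two] at hp
  have := eq_inv_of_mul_eq_one_left hp
  rw [mul_inv_rev, cs.inv_simple, cs.inv_simple] at this
  exact this
end

section
/- Let W be a finite group, n ≥ 3, and s : {1, …, n} → W an injective map such that each s(i) is an involution (s(i) ≠ 1 and s(i)² = 1), the elements s(1), …, s(n) generate W, and s(n) commutes with s(i) for every i ≤ n − 2. Let Ŵ be the subgroup generated by s(1), …, s(n−1) and Ŝ = {s(1), …, s(n−1)}. If there exists a Hamiltonian circuit map for (Ŵ, Ŝ), then there exists a Hamiltonian circuit map for (W, {s(1), …, s(n)}). -/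
/-- `f` runs cyclically through `U`. -/
def Circ {W : Type*} (f : W → W) (U : Set W) : Prop :=
  (∀ x ∈ U, f x ∈ U) ∧ ∀ x ∈ U, ∀ y ∈ U, Relation.ReflTransGen (fun x y => y = f x) x y

/-- `z` is a label used by `p` on `H`, an involution commuting with `r`. -/
def GoodLabel {W : Type*} [Group W] (H : Subgroup W) (r : W) (p : W → W) (z : W) : Prop :=
  z * z = 1 ∧ r * z = z * r ∧ ∃ q ∈ H, p q * q⁻¹ = z

/-- Invariant of the gluing process. -/
def GlueInv {W : Type*} [Group W] (H : Subgroup W) (r : W) (S : Set W) (p : W → W)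
    (U : Set W) (f : W → W) : Prop :=
  (1 : W) ∈ U ∧ (∀ g ∈ H, ∀ x ∈ U, g * x ∈ U) ∧ Circ f U ∧ (∀ x ∈ U, f x * x⁻¹ ∈ S) ∧
  ∀ w ∈ U, r * w ∉ U → ∃ a ∈ U, (a = w ∨ f a = w) ∧ GoodLabel H r p (f a * a⁻¹)

/-- Reachability inside one of the two glued circuits. -/
theorem circ_reach {W : Type*} (f ρ : W → W) (U : Set W) (hf : Circ f U) (a : W) (ha : a ∈ U)
    (h : ∀ x ∈ U, x ≠ a → ρ x = f x) :
    ∀ y ∈ U, Relation.ReflTransGen (fun x y => y = ρ x) (f a) y := by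
  intro y hy
  have hr := hf.2 (f a) (hf.1 a ha) y hy
  clear hy
  have key : y ∈ U ∧ Relation.ReflTransGen (fun x y => y = ρ x) (f a) y := by
    induction hr with
    | refl => exact ⟨hf.1 a ha, .refl⟩
    | @tail b c _ hbc ih =>
      subst hbc
      refine ⟨hf.1 _ ih.1, ?_⟩
      by_cases hb : b = a
      · subst hb; exact .refl
      · exact ih.2.tail (h b ih.1 hb).symm
  exact key.2

theorem circ_merge {W : Type*} (f τ ρ : W → W) (U V : Set W) (hf : Circ f U) (hτ : Circ τ V)
    (a c : W) (ha : a ∈ U) (hc : c ∈ V)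
    (h1 : ∀ x ∈ U, x ≠ a → ρ x = f x) (h2 : ∀ x ∈ V, x ≠ c → ρ x = τ x)
    (h3 : ρ a = τ c) (h4 : ρ c = f a) : Circ ρ (U ∪ V) := by
  have r1 := circ_reach f ρ U hf a ha h1
  have r2 := circ_reach τ ρ V hτ c hc h2
  have r12 : Relation.ReflTransGen (fun x y => y = ρ x) (f a) (τ c) :=
    (r1 a ha).tail h3.symm
  have r21 : Relation.ReflTransGen (fun x y => y = ρ x) (τ c) (f a) :=
    (r2 c hc).tail h4.symm
  have fwd : ∀ y ∈ U ∪ V, Relation.ReflTransGen (fun x y => y = ρ x) (f a) y := by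
    rintro y (hy | hy)
    · exact r1 y hy
    · exact r12.trans (r2 y hy)
  -- towards `a` inside `U`
  have bwd : ∀ (g : W → W) (X : Set W) (e : W), Circ g X → e ∈ X →
      (∀ x ∈ X, x ≠ e → ρ x = g x) →
      ∀ x ∈ X, Relation.ReflTransGen (fun x y => y = ρ x) x e := by
    intro g X e hg he hh x hx
    have hr := hg.2 x hx e he
    induction hr using Relation.ReflTransGen.head_induction_on with
    | refl => exact .refl
    | @head b d hbd _ ih =>
      subst hbd
      by_cases hb : b = e
      · subst hb; exact .refl
      · exact .head (hh b hx hb).symm (ih (hg.1 _ hx))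
  have bwd' : ∀ x ∈ U ∪ V, Relation.ReflTransGen (fun x y => y = ρ x) x (f a) := by
    rintro x (hx | hx)
    · exact ((bwd f U a hf ha h1 x hx).tail h3.symm).trans r21
    · exact (bwd τ V c hτ hc h2 x hx).tail h4.symm
  refine ⟨?_, fun x hx y hy => (bwd' x hx).trans (fwd y hy)⟩
  rintro x (hx | hx)
  · by_cases hxa : x = a
    · subst hxa; rw [h3]; exact Or.inr (hτ.1 c hc)
    · rw [h1 x hx hxa]; exact Or.inl (hf.1 x hx)
  · by_cases hxa : x = c
    · subst hxa; rw [h4]; exact Or.inl (hf.1 a ha)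
    · rw [h2 x hx hxa]; exact Or.inr (hτ.1 x hx)

theorem glue_step {W : Type*} [Group W] (H : Subgroup W) (r : W) (hr : r * r = 1)
    (S : Set W) (hrS : r ∈ S) (p : W → W) (hp : Circ p H) (hpS : ∀ x ∈ H, p x * x⁻¹ ∈ S)
    (hpL : ∀ w ∈ H, ∃ a ∈ H, (a = w ∨ p a = w) ∧ GoodLabel H r p (p a * a⁻¹))
    (U : Set W) (f : W → W) (hU : GlueInv H r S p U f)
    (w : W) (hw : w ∈ U) (hrw : r * w ∉ U) :
    ∃ U' f', GlueInv H r S p U' f' ∧ U ⊆ U' ∧ r * w ∈ U' := by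
  classical
  obtain ⟨h1, hH, hC, hS, hL⟩ := hU
  obtain ⟨a, haU, haw, hz, hrz, q, hq, hqz⟩ := hL w hw hrw
  obtain ⟨z, hzdef⟩ : ∃ z, z = f a * a⁻¹ := ⟨_, rfl⟩
  rw [← hzdef] at hz hrz hqz
  have hfa : f a = z * a := by rw [hzdef]; group
  have hpq : p q = z * q := by rw [← hqz]; group
  have hzH : z ∈ H := by rw [← hqz]; exact H.mul_mem (hp.1 q hq) (H.inv_mem hq)
  have hzz : ∀ x, z * (z * x) = x := fun x => by rw [← mul_assoc, hz, one_mul]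
  have hrr : ∀ x, r * (r * x) = x := fun x => by rw [← mul_assoc, hr, one_mul]
  have hrzx : ∀ x, r * (z * x) = z * (r * x) := fun x => by
    rw [← mul_assoc, hrz, mul_assoc]
  have hra : r * a ∉ U := by
    rcases haw with rfl | rfl
    · exact hrw
    · intro h
      apply hrw
      rw [hfa, hrzx]
      exact hH z hzH _ h
  -- new coset
  let V : Set W := {x | x * (r * a)⁻¹ ∈ H}
  have hVU : ∀ x ∈ V, x ∉ U := by
    intro x hx hxU
    apply hra
    have := hH _ (H.inv_mem hx) x hxU
    simpa [mul_assoc] using this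
  have hVH : ∀ g ∈ H, ∀ x ∈ V, g * x ∈ V := by
    intro g hg x hx
    change g * x * (r * a)⁻¹ ∈ H
    rw [mul_assoc]
    exact H.mul_mem hg hx
  have hraV : r * a ∈ V := by change r * a * (r * a)⁻¹ ∈ H; simp [H.one_mem]
  obtain ⟨c, hc⟩ : ∃ c, c = z * (r * a) := ⟨_, rfl⟩
  have hcV : c ∈ V := by rw [hc]; exact hVH z hzH _ hraV
  obtain ⟨h, hh⟩ : ∃ h, h = q⁻¹ * c := ⟨_, rfl⟩
  have hhV : h ∈ V := by rw [hh]; exact hVH _ (H.inv_mem hq) _ hcV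
  have hV1 : ∀ x ∈ V, x * h⁻¹ ∈ H := by
    intro x hx
    have := H.mul_mem (show x * (r * a)⁻¹ ∈ H from hx)
      (H.inv_mem (show h * (r * a)⁻¹ ∈ H from hhV))
    simpa [mul_assoc] using this
  let τ : W → W := fun x => p (x * h⁻¹) * h
  have hτc : τ c = r * a := by
    have : c * h⁻¹ = q := by rw [hh]; group
    change p (c * h⁻¹) * h = _
    rw [this, hpq, hh, mul_assoc, mul_inv_cancel_left, hc, hzz]
  have hτl : ∀ x, τ x * x⁻¹ = p (x * h⁻¹) * (x * h⁻¹)⁻¹ := by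
    intro x; simp [τ, mul_assoc]
  have hτC : Circ τ V := by
    constructor
    · intro x hx
      exact hVH _ (hp.1 _ (hV1 x hx)) _ hhV
    · intro x hx y hy
      have := Relation.ReflTransGen.lift (r := fun x y => y = p x) (p := fun x y => y = τ x) (fun x => x * h)
        (fun a b (hab : b = p a) => by simp [τ, hab, Function.onFun]) _ _ (hp.2 _ (hV1 x hx) _ (hV1 y hy))
      simpa [Function.onFun] using this
  let ρ : W → W := fun x => if x = a then r * a else if x = c then f a else
    if x ∈ U then f x else τ x
  have hac : c ≠ a := fun e => hVU c hcV (e ▸ haU)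
  have e1 : ∀ x ∈ U, x ≠ a → ρ x = f x := by
    intro x hx hxa
    have : x ≠ c := fun e => hVU c hcV (e ▸ hx)
    simp [ρ, hxa, this, hx]
  have e2 : ∀ x ∈ V, x ≠ c → ρ x = τ x := by
    intro x hx hxc
    have : x ≠ a := fun e => hVU x hx (e ▸ haU)
    simp [ρ, hxc, this, hVU x hx]
  have e3 : ρ a = τ c := by simp [ρ, hτc]
  have e4 : ρ c = f a := by simp [ρ, hac]
  refine ⟨U ∪ V, ρ, ⟨Or.inl h1, ?_, circ_merge f τ ρ U V hC hτC a c haU hcV e1 e2 e3 e4,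
    ?_, ?_⟩, Set.subset_union_left, Or.inr ?_⟩
  · rintro g hg x (hx | hx)
    · exact Or.inl (hH g hg x hx)
    · exact Or.inr (hVH g hg x hx)
  · rintro x (hx | hx)
    · by_cases hxa : x = a
      · subst hxa; rw [e3, hτc]; simpa using hrS
      · rw [e1 x hx hxa]; exact hS x hx
    · by_cases hxc : x = c
      · have : f a = r * c := by rw [hc, hrzx, hrr, hfa]
        rw [hxc, e4, this]; simpa using hrS
      · rw [e2 x hx hxc, hτl]; exact hpS _ (hV1 x hx)
  · rintro v (hv | hv) hrv
    · obtain ⟨b, hb, hbv, hbL⟩ := hL v hv (fun h => hrv (Or.inl h))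
      have hba : b ≠ a := by
        rintro rfl
        apply hrv
        rcases hbv with rfl | rfl
        · exact Or.inr hraV
        · rw [hfa, hrzx, ← hc]; exact Or.inr hcV
      refine ⟨b, Or.inl hb, ?_⟩
      rw [e1 b hb hba]
      exact ⟨hbv, hbL⟩
    · obtain ⟨b, hb, hbv, hbL⟩ := hpL _ (hV1 v hv)
      have hbV : b * h ∈ V := hVH b hb h hhV
      have hbv' : b * h = v ∨ τ (b * h) = v := by
        rcases hbv with e | e
        · left; rw [e]; group
        · right; simp only [τ, mul_inv_cancel_right, e]; group
      have hbc : b * h ≠ c := by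
        intro e
        rw [e] at hbv'
        apply hrv
        rcases hbv' with e | e
        · rw [← e, hc, hrzx, hrr, ← hfa]; exact Or.inl (hC.1 a haU)
        · rw [← e, hτc, hrr]; exact Or.inl haU
      refine ⟨b * h, Or.inr hbV, ?_⟩
      rw [e2 _ hbV hbc, hτl]
      exact ⟨hbv', by simpa using hbL⟩
  · rcases haw with rfl | rfl
    · exact hraV
    · rw [hfa, hrzx]; exact hVH z hzH _ hraV

theorem glue_all {W : Type*} [Group W] [Finite W] (H : Subgroup W) (r : W) (hr : r * r = 1)
    (S : Set W) (hrS : r ∈ S) (p : W → W) (hp : Circ p H) (hpS : ∀ x ∈ H, p x * x⁻¹ ∈ S)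
    (hpL : ∀ w ∈ H, ∃ a ∈ H, (a = w ∨ p a = w) ∧ GoodLabel H r p (p a * a⁻¹))
    (hgen : Subgroup.closure (insert r (H : Set W)) = ⊤) :
    ∃ f : W → W, Circ f Set.univ ∧ ∀ x, f x * x⁻¹ ∈ S := by
  let F : Set (Set W) := {U | ∃ f, GlueInv H r S p U f}
  have hF : F.Nonempty := ⟨H, p, H.one_mem, fun g hg x hx => H.mul_mem hg hx, hp, hpS,
    fun w hw _ => hpL w hw⟩
  obtain ⟨U, ⟨f, hf⟩, hmax⟩ := (Set.toFinite F).exists_maximal hF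
  have hrU : ∀ w ∈ U, r * w ∈ U := by
    intro w hw
    by_contra hrw
    obtain ⟨U', f', hf', hsub, hmem⟩ := glue_step H r hr S hrS p hp hpS hpL U f hf w hw hrw
    exact hrw (hmax ⟨f', hf'⟩ hsub hmem)
  have hinv : r⁻¹ = r := inv_eq_of_mul_eq_one_left hr
  have huniv : U = Set.univ := by
    ext x
    simp only [Set.mem_univ, iff_true]
    have hx : x ∈ Subgroup.closure (insert r (H : Set W)) := by rw [hgen]; trivial
    induction hx using Subgroup.closure_induction_left with
    | one => exact hf.1
    | mul_left g hg y _ ih =>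
      rcases hg with rfl | hg
      · exact hrU _ ih
      · exact hf.2.1 g hg y ih
    | inv_mul_cancel g hg y _ ih =>
      rcases hg with rfl | hg
      · rw [hinv]; exact hrU _ ih
      · exact hf.2.1 _ (H.inv_mem hg) y ih
  subst huniv
  exact ⟨f, hf.2.2.1, fun x => hf.2.2.2.1 x trivial⟩

theorem circ_iterate {W : Type*} (f : W → W) {x y : W}
    (h : Relation.ReflTransGen (fun x y => y = f x) x y) : ∃ j : ℕ, f^[j] x = y := by
  induction h with
  | refl => exact ⟨0, rfl⟩
  | tail _ hbc ih =>
    obtain ⟨j, rfl⟩ := ih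
    exact ⟨j + 1, by rw [hbc, Function.iterate_succ_apply']⟩

theorem circ_to_map {W : Type*} [Group W] [Finite W] (S : Set W) (f : W → W)
    (hf : Circ f Set.univ) (hS : ∀ x, f x * x⁻¹ ∈ S) :
    ∃ θ : ZMod (Nat.card W) → W, IsHamiltonianCircuitMap S θ := by
  classical
  have : Fintype W := Fintype.ofFinite W
  have hsurj : Function.Surjective f := by
    intro y
    obtain ⟨j, hj⟩ := circ_iterate f (hf.2 (f y) trivial y trivial)
    rw [← Function.iterate_succ_apply, Function.iterate_succ_apply'] at hj
    exact ⟨_, hj⟩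
  have hinj : Function.Injective f := Finite.injective_iff_surjective.2 hsurj
  have hall : ∀ y, ∃ j : ℕ, f^[j] 1 = y := fun y =>
    circ_iterate f (hf.2 1 trivial y trivial)
  have hper : (1 : W) ∈ Function.periodicPts f := hinj.mem_periodicPts 1
  have hk : Function.minimalPeriod f 1 = Nat.card W := by
    have hpos := Function.minimalPeriod_pos_of_mem_periodicPts hper
    have hb : Function.Bijective (fun i : Fin (Function.minimalPeriod f 1) => f^[i.1] 1) := by
      constructor
      · intro i j hij
        exact Fin.ext (Function.iterate_injOn_Iio_minimalPeriod i.2 j.2 hij)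
      · intro y
        obtain ⟨j, hj⟩ := hall y
        exact ⟨⟨j % Function.minimalPeriod f 1, Nat.mod_lt _ hpos⟩, by
          simpa [Function.iterate_mod_minimalPeriod_eq] using hj⟩
    have := Nat.card_congr (Equiv.ofBijective _ hb)
    simpa using this
  have hne : NeZero (Nat.card W) := ⟨Nat.card_pos.ne'⟩
  have hmod : ∀ j : ℕ, f^[j % Nat.card W] 1 = f^[j] 1 := by
    intro j; rw [← hk]; exact Function.iterate_mod_minimalPeriod_eq
  have hcast : ∀ j : ℕ, f^[((j : ZMod (Nat.card W))).val] 1 = f^[j] 1 := by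
    intro j; rw [ZMod.val_natCast, hmod]
  refine ⟨fun t => f^[t.val] 1, ⟨?_, ?_⟩, ?_⟩
  · intro i j hij
    apply ZMod.val_injective
    have hi := (ZMod.val_lt i).trans_eq hk.symm
    have hj := (ZMod.val_lt j).trans_eq hk.symm
    exact Function.iterate_injOn_Iio_minimalPeriod hi hj hij
  · intro y
    obtain ⟨j, hj⟩ := hall y
    exact ⟨(j : ZMod (Nat.card W)), by rw [← hj]; exact hcast j⟩
  · intro t
    have : f^[(t + 1).val] 1 = f (f^[t.val] 1) := by
      rw [← Function.iterate_succ_apply' f, ← hcast (t.val + 1)]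
      simp
    simp only [this]
    exact hS _

theorem map_to_circ {W : Type*} [Group W] [Finite W] (H : Subgroup W) (T : Set W)
    (θ : ZMod (Nat.card H) → H) (hθ : IsHamiltonianCircuitMap {w : H | (w : W) ∈ T} θ) :
    ∃ p : W → W, Circ p H ∧ ∀ x ∈ H, p x * x⁻¹ ∈ T := by
  classical
  obtain ⟨hb, hT⟩ := hθ
  have hne : NeZero (Nat.card H) := ⟨Nat.card_pos.ne'⟩
  let e := Equiv.ofBijective θ hb
  let p : W → W := fun x => if hx : x ∈ H then (θ (e.symm ⟨x, hx⟩ + 1) : W) else x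
  have hpθ : ∀ t, p (θ t) = θ (t + 1) := by
    intro t
    have : e.symm (θ t) = t := e.symm_apply_apply t
    simp [p, this]
  have hsur : ∀ x ∈ H, ∃ t, (θ t : W) = x := by
    intro x hx
    obtain ⟨t, ht⟩ := hb.2 ⟨x, hx⟩
    exact ⟨t, by rw [ht]⟩
  refine ⟨p, ⟨?_, ?_⟩, ?_⟩
  · intro x hx
    obtain ⟨t, rfl⟩ := hsur x hx
    rw [hpθ]; exact (θ (t + 1)).2
  · intro x hx y hy
    obtain ⟨t, rfl⟩ := hsur x hx
    obtain ⟨u, rfl⟩ := hsur y hy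
    have : ∀ j : ℕ, Relation.ReflTransGen (fun x y => y = p x) (θ t : W) (θ (t + j) : W) := by
      intro j
      induction j with
      | zero => simpa using Relation.ReflTransGen.refl
      | succ j ih =>
        refine ih.tail ?_
        rw [hpθ]; push_cast; rw [add_assoc]
    have h := this (u - t).val
    simpa using h
  · intro x hx
    obtain ⟨t, rfl⟩ := hsur x hx
    rw [hpθ]
    have := hT t
    simpa using this


/-- The induction step of the Conway–Sloane–Wilks construction: let `W` be a finite
group generated by `n ≥ 3` distinct involutions `s 1, …, s n` (written here over
`Fin n`), with `s n` commuting with `s i` for all `i ≤ n - 2`.  If the subgroup `Ŵ`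
generated by `s 1, …, s (n-1)` has a Hamiltonian circuit map with respect to
`Ŝ = {s 1, …, s (n-1)}`, then `W` has a Hamiltonian circuit map with respect to
`{s 1, …, s n}`. -/
theorem hamiltonianCircuitMap_of_subgroup_step
    {W : Type*} [Group W] [Finite W] (n : ℕ) (hn : 3 ≤ n)
    (s : Fin n → W) (hinj : Function.Injective s)
    (hne : ∀ i, s i ≠ 1) (hsq : ∀ i, s i ^ 2 = 1)
    (hgen : Subgroup.closure (Set.range s) = ⊤)
    (hcomm : ∀ i : Fin n, (i : ℕ) + 2 < n → Commute (s ⟨n - 1, by omega⟩) (s i))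
    (Whut : Subgroup W)
    (hWhut : Whut = Subgroup.closure (s '' {i : Fin n | (i : ℕ) + 1 < n}))
    (hhat : ∃ θ : ZMod (Nat.card Whut) → Whut,
      IsHamiltonianCircuitMap
        {w : Whut | (w : W) ∈ s '' {i : Fin n | (i : ℕ) + 1 < n}} θ) :
    ∃ θ : ZMod (Nat.card W) → W, IsHamiltonianCircuitMap (Set.range s) θ := by
  subst hWhut
  set T : Set W := s '' {i : Fin n | (i : ℕ) + 1 < n} with hTdef
  obtain ⟨θ, hθ⟩ := hhat
  obtain ⟨p, hp, hpT⟩ := map_to_circ (Subgroup.closure T) T θ hθ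
  have hss : ∀ i, s i * s i = 1 := fun i => by rw [← pow_two]; exact hsq i
  have hTS : T ⊆ Set.range s := Set.image_subset_range _ _
  suffices key : ∃ f : W → W, Circ f Set.univ ∧ ∀ x, f x * x⁻¹ ∈ Set.range s by
    obtain ⟨f, hf, hfS⟩ := key
    exact circ_to_map _ f hf hfS
  refine glue_all (Subgroup.closure T) (s ⟨n - 1, by omega⟩) (hss _)
    (Set.range s) ⟨_, rfl⟩ p hp (fun x hx => hTS (hpT x hx)) ?_ ?_
  · have good : ∀ a ∈ Subgroup.closure T, p a * a⁻¹ ≠ s ⟨n - 2, by omega⟩ →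
        GoodLabel (Subgroup.closure T) (s ⟨n - 1, by omega⟩) p (p a * a⁻¹) := by
      intro a ha hne'
      refine ⟨?_, ?_, a, ha, rfl⟩
      · obtain ⟨i, hi, hia⟩ := hpT a ha
        rw [← hia]; exact hss i
      · obtain ⟨i, hi, hia⟩ := hpT a ha
        rw [← hia]
        refine hcomm i ?_
        by_contra hlt
        apply hne'
        rw [← hia]
        congr 1
        apply Fin.ext
        have hi' : (i : ℕ) + 1 < n := hi
        simp only
        omega
    intro w hw
    by_cases h1 : p w * w⁻¹ = s ⟨n - 2, by omega⟩
    swap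
    · exact ⟨w, hw, Or.inl rfl, good w hw h1⟩
    -- a predecessor of `w`
    obtain ⟨v, hv, hvw⟩ : ∃ v ∈ Subgroup.closure T, p v = w := by
      have h := hp.2 _ (hp.1 w hw) w hw
      obtain ⟨j, hj⟩ := circ_iterate p h
      have hmem : ∀ j : ℕ, p^[j] w ∈ Subgroup.closure T := by
        intro j
        induction j with
        | zero => exact hw
        | succ j ih => rw [Function.iterate_succ_apply']; exact hp.1 _ ih
      rw [← Function.iterate_succ_apply, Function.iterate_succ_apply'] at hj
      exact ⟨_, hmem j, hj⟩
    by_cases h2 : p v * v⁻¹ = s ⟨n - 2, by omega⟩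
    swap
    · exact ⟨v, hv, Or.inr hvw, good v hv h2⟩
    exfalso
    have hvpw : p w = v := by
      have e1 : p w = s ⟨n - 2, by omega⟩ * w := by rw [← h1]; group
      have e2 : w = s ⟨n - 2, by omega⟩ * v := by rw [← h2, ← hvw]; group
      rw [e1]; nth_rewrite 1 [e2]; rw [← mul_assoc, hss, one_mul]
    have two : ∀ y ∈ Subgroup.closure T, y = w ∨ y = v := by
      intro y hy
      have h := hp.2 w hw y hy
      clear hy
      induction h with
      | refl => exact Or.inl rfl
      | tail _ hbc ih =>
        rcases ih with rfl | rfl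
        · right; rw [hbc, hvpw]
        · left; rw [hbc, hvw]
    have m1 := two 1 (Subgroup.one_mem _)
    have m2 := two (s ⟨0, by omega⟩) (Subgroup.subset_closure ⟨_, by simp; omega, rfl⟩)
    have m3 := two (s ⟨1, by omega⟩) (Subgroup.subset_closure ⟨_, by simp; omega, rfl⟩)
    have n2 := hne ⟨0, by omega⟩
    have n3 := hne ⟨1, by omega⟩
    have n4 : s ⟨0, by omega⟩ ≠ s ⟨1, by omega⟩ := fun h => by
      have := hinj h
      simp at this
    grind
  · rw [eq_top_iff, ← hgen, Subgroup.closure_le]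
    rintro _ ⟨i, rfl⟩
    by_cases hi : (i : ℕ) + 1 < n
    · exact Subgroup.subset_closure (Or.inr (Subgroup.subset_closure ⟨i, hi, rfl⟩))
    · have : i = ⟨n - 1, by omega⟩ := Fin.ext (by have := i.2; simp only; omega)
      rw [this]
      exact Subgroup.subset_closure (Or.inl rfl)
end

section
/- Let (W, S) be a finite Coxeter system over the index set B = {1, 2, 3} with M 1 3 = 2, M 1 2 ∈ {3, 4} and M 2 3 ∈ {3, 4} (so the Coxeter diagram is a path 1 — 2 — 3 of type A₃ or B₃). Then there exists a Hamiltonian circuit map θ : ℤ/kℤ → W (k = |W|) that is 2-convenient: θ(2t+1) = s₂ · θ(2t) for every t ∈ ℤ, i.e. every second edge of the Hamilton circuit is labeled by the middle simple reflection s₂. -/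
/-- A Hamiltonian circuit from a table `σ` describing left multiplication. -/
theorem circuit_of_table {W : Type*} [Group W] (M : CoxeterMatrix (Fin 3))
    (cs : CoxeterSystem M W) (e : Equiv.Perm (Fin 3)) (he : e 1 = 1) (n : ℕ) [NeZero n]
    (θ : ZMod n → W) (σ : Fin 3 → Equiv.Perm (ZMod n))
    (hσ : ∀ i j, (σ i * σ j) ^ M (e i) (e j) = 1) (h0 : θ 0 = 1)
    (h : ∀ i t, cs.simple (e i) * θ t = θ (σ i t))
    (hs : ∀ t, ∃ i, σ i t = t + 1) (h1 : ∀ t, σ 1 (2 * t) = 2 * t + 1) :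
    ∃ θ : ZMod (Nat.card W) → W, Function.Bijective θ ∧
      (∀ t, θ (t + 1) * (θ t)⁻¹ ∈ Set.range cs.simple) ∧
      (∀ t : ZMod (Nat.card W), θ (2 * t + 1) = cs.simple 1 * θ (2 * t)) := by
  have hl : M.IsLiftable (fun i => σ (e.symm i)) := by
    intro i j
    simpa using hσ (e.symm i) (e.symm j)
  let f : W →* Equiv.Perm (ZMod n) := cs.lift ⟨_, hl⟩
  have hf : ∀ i, f (cs.simple (e i)) = σ i := by
    intro i
    simp [f, cs.lift_apply_simple hl]
  have hfθ : ∀ k : ℕ, f (θ k) 0 = (k : ZMod n) := by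
    intro k
    induction k with
    | zero => simp [h0]
    | succ k ih =>
      obtain ⟨i, hi⟩ := hs k
      rw [Nat.cast_succ, ← hi, ← h, map_mul, hf, Equiv.Perm.mul_apply, ih]
  have hfθ' : ∀ t, f (θ t) 0 = t := by
    intro t
    simpa using hfθ t.val
  have hbij : Function.Bijective θ := by
    constructor
    · intro x y hxy
      rw [← hfθ' x, ← hfθ' y, hxy]
    · intro w
      induction w using cs.simple_induction_left with
      | one => exact ⟨0, h0⟩
      | mul_simple_left w i ih =>
        obtain ⟨t, rfl⟩ := ih
        refine ⟨σ (e.symm i) t, ?_⟩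
        rw [← h]
        simp
  have hcard : Nat.card W = n := by
    rw [← Nat.card_congr (Equiv.ofBijective θ hbij), Nat.card_zmod]
  rw [hcard]
  refine ⟨θ, hbij, fun t => ?_, fun t => ?_⟩
  · obtain ⟨i, hi⟩ := hs t
    exact ⟨e i, by rw [← hi, ← h, mul_inv_cancel_right]⟩
  · rw [← h1, ← h, he]

/-- Words for the elements of the group of type `A₃`, in circuit order. -/
def wordsA : Fin 24 → List (Fin 3) :=
  ![[], [1], [0, 1], [0, 1, 0], [1, 0], [0], [0, 2], [1, 0, 2], [0, 1, 0, 2], [0, 1, 2], [0,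
    1, 2, 1], [0, 1, 0, 2, 1], [0, 1, 0, 2, 1, 0], [0, 1, 2, 1, 0], [1, 2, 1, 0], [2, 1, 0],
    [0, 2, 1, 0], [1, 0, 2, 1, 0], [1, 0, 2, 1], [0, 2, 1], [2, 1], [1, 2, 1], [1, 2], [2]]

/-- Left multiplication by the generators on positions in the circuit, type `A₃`. -/
def tableA : Fin 3 → Fin 24 → Fin 24 :=
  ![![5, 2, 1, 4, 3, 0, 23, 8, 7, 22, 21, 18, 17, 14, 13, 16, 15, 12, 11, 20, 19, 10, 9, 6],
    ![1, 0, 3, 2, 5, 4, 7, 6, 9, 8, 11, 10, 13, 12, 15, 14, 17, 16, 19, 18, 21, 20, 23, 22],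
    ![23, 20, 19, 16, 15, 6, 5, 14, 13, 10, 9, 12, 11, 8, 7, 4, 3, 18, 17, 2, 1, 22, 21, 0]]

/-- Words for the elements of the group of type `B₃`, in circuit order. -/
def wordsB : Fin 48 → List (Fin 3) :=
  ![[], [1], [0, 1], [0, 1, 0], [1, 0], [0], [0, 2], [1, 0, 2], [0, 1, 0, 2], [0, 1, 2], [0,
    2, 1, 2], [1, 0, 2, 1, 2], [0, 1, 0, 2, 1, 2], [0, 1, 2, 1, 2], [0, 1, 2, 1], [0, 1, 0, 2,
    1], [0, 2, 1, 0, 2, 1], [1, 0, 2, 1, 0, 2, 1], [0, 1, 0, 2, 1, 0, 2, 1], [0, 1, 2, 1, 0,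
    2, 1], [0, 1, 0, 2, 1, 0], [0, 1, 2, 1, 0], [0, 1, 2, 1, 0, 2], [0, 1, 0, 2, 1, 0, 2], [0,
    1, 2, 1, 0, 2, 1, 2], [0, 1, 0, 2, 1, 0, 2, 1, 2], [1, 0, 2, 1, 0, 2, 1, 2], [0, 2, 1, 0,
    2, 1, 2], [2, 1, 0, 2, 1, 2], [1, 2, 1, 0, 2, 1, 2], [1, 0, 2, 1, 0, 2], [0, 2, 1, 0, 2],
    [2, 1, 0, 2], [1, 2, 1, 0, 2], [1, 2, 1, 0], [2, 1, 0], [0, 2, 1, 0], [1, 0, 2, 1, 0], [1,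
    2, 1, 0, 2, 1], [2, 1, 0, 2, 1], [1, 0, 2, 1], [0, 2, 1], [2, 1], [1, 2, 1], [1, 2, 1, 2],
    [2, 1, 2], [1, 2], [2]]

/-- Left multiplication by the generators on positions in the circuit, type `B₃`. -/
def tableB : Fin 3 → Fin 48 → Fin 48 :=
  ![![5, 2, 1, 4, 3, 0, 47, 8, 7, 46, 45, 12, 11, 44, 43, 40, 39, 18, 17, 38, 37, 34, 33, 30,
    29, 26, 25, 28, 27, 24, 23, 32, 31, 22, 21, 36, 35, 20, 19, 16, 15, 42, 41, 14, 13, 10, 9,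
    6],
    ![1, 0, 3, 2, 5, 4, 7, 6, 9, 8, 11, 10, 13, 12, 15, 14, 17, 16, 19, 18, 21, 20, 23, 22,
    25, 24, 27, 26, 29, 28, 31, 30, 33, 32, 35, 34, 37, 36, 39, 38, 41, 40, 43, 42, 45, 44,
    47, 46],
    ![47, 42, 41, 36, 35, 6, 5, 32, 31, 10, 9, 28, 27, 14, 13, 16, 15, 26, 25, 20, 19, 22, 21,
    24, 23, 18, 17, 12, 11, 30, 29, 8, 7, 34, 33, 4, 3, 38, 37, 40, 39, 2, 1, 44, 43, 46, 45,
    0]]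

theorem tableA_invol : ∀ i, Function.Involutive (tableA i) := by
  unfold Function.Involutive; decide +kernel

theorem tableB_invol : ∀ i, Function.Involutive (tableB i) := by
  unfold Function.Involutive; decide +kernel

/-- The Coxeter matrix entries of type `A₃`. -/
def ordersA : Fin 3 → Fin 3 → ℕ := ![![1, 3, 2], ![3, 1, 3], ![2, 3, 1]]

/-- The table of type `A₃` as permutations. -/
def permA (i : Fin 3) : Equiv.Perm (Fin 24) := (tableA_invol i).toPerm

theorem permA_rel : ∀ i j, (permA i * permA j) ^ ordersA i j = 1 := by
  have h : ∀ i j t, ((permA i * permA j) ^ ordersA i j) t = t := by decide +kernel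
  exact fun i j => Equiv.ext (h i j)

/-- The Coxeter matrix entries of type `B₃`. -/
def ordersB : Fin 3 → Fin 3 → ℕ := ![![1, 3, 2], ![3, 1, 4], ![2, 4, 1]]

/-- The table of type `B₃` as permutations. -/
def permB (i : Fin 3) : Equiv.Perm (Fin 48) := (tableB_invol i).toPerm

theorem permB_rel : ∀ i j, (permB i * permB j) ^ ordersB i j = 1 := by
  have h : ∀ i j t, ((permB i * permB j) ^ ordersB i j) t = t := by decide +kernel
  exact fun i j => Equiv.ext (h i j)

/-- A relation `(x y)^m = 1` between involutions. -/
theorem braid2 {G : Type*} [Group G] {x y : G} (hx : x * x = 1) (hy : y * y = 1)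
    (h : (x * y) ^ 2 = 1) : y * x = x * y := by
  have hx' : x⁻¹ = x := inv_eq_of_mul_eq_one_left hx
  have hy' : y⁻¹ = y := inv_eq_of_mul_eq_one_left hy
  have : (x * y) * (x * y) = 1 := by rw [← h, pow_two]
  have := eq_inv_of_mul_eq_one_left this
  rw [mul_inv_rev, hx', hy'] at this
  exact this.symm

theorem braid3 {G : Type*} [Group G] {x y : G} (hx : x * x = 1) (hy : y * y = 1)
    (h : (x * y) ^ 3 = 1) : y * (x * y) = x * (y * x) := by
  have hx' : x⁻¹ = x := inv_eq_of_mul_eq_one_left hx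
  have hy' : y⁻¹ = y := inv_eq_of_mul_eq_one_left hy
  have : (x * (y * x)) * (y * (x * y)) = 1 := by rw [← h]; simp only [pow_succ, pow_zero, one_mul, mul_assoc]
  have := eq_inv_of_mul_eq_one_left this
  simp only [mul_inv_rev, hx', hy', mul_assoc] at this
  exact this.symm

theorem braid4 {G : Type*} [Group G] {x y : G} (hx : x * x = 1) (hy : y * y = 1)
    (h : (x * y) ^ 4 = 1) : y * (x * (y * x)) = x * (y * (x * y)) := by
  have hx' : x⁻¹ = x := inv_eq_of_mul_eq_one_left hx
  have hy' : y⁻¹ = y := inv_eq_of_mul_eq_one_left hy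
  have : (x * (y * (x * y))) * (x * (y * (x * y))) = 1 := by rw [← h]; simp only [pow_succ, pow_zero, one_mul, mul_assoc]
  have := eq_inv_of_mul_eq_one_left this
  simp only [mul_inv_rev, hx', hy', mul_assoc] at this
  exact this.symm

set_option maxHeartbeats 4000000 in
theorem tableA_spec {G : Type*} [Group G] (s : Fin 3 → G) (hs : ∀ i, s i * s i = 1)
    (h02 : (s 0 * s 2) ^ 2 = 1) (h01 : (s 0 * s 1) ^ 3 = 1) (h12 : (s 1 * s 2) ^ 3 = 1) :
    ∀ i t, s i * ((wordsA t).map s).prod = ((wordsA (tableA i t)).map s).prod := by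
  have a1 := hs 0
  have b1 := hs 1
  have c1 := hs 2
  have r2 := braid2 a1 c1 h02
  have r3 := braid3 a1 b1 h01
  have r4 := braid3 b1 c1 h12
  generalize ha : s 0 = a at *
  generalize hb : s 1 = b at *
  generalize hc : s 2 = c at *
  have ext : ∀ {u v : G}, u = v → ∀ z, u * z = v * z := fun h z => by rw [h]
  have a2 := ext a1
  have b2 := ext b1
  have c2 := ext c1
  have q2 := ext r2
  have q3 := ext r3
  have q4 := ext r4
  simp only [mul_assoc, one_mul] at a2 b2 c2 q2 q3 q4
  have r5 : c * (b * (a * c)) = b * (c * (b * a)) := by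
    rw [← r2, q4]
  have q5 := ext r5
  simp only [mul_assoc] at q5
  intro i t
  fin_cases i <;> fin_cases t <;>
    simp [wordsA, tableA, ha, hb, hc, a1, b1, c1, r2, r3, r4, r5, a2, b2, c2, q2, q3, q4, q5]

set_option maxHeartbeats 4000000 in
theorem tableB_spec {G : Type*} [Group G] (s : Fin 3 → G) (hs : ∀ i, s i * s i = 1)
    (h02 : (s 0 * s 2) ^ 2 = 1) (h01 : (s 0 * s 1) ^ 3 = 1) (h12 : (s 1 * s 2) ^ 4 = 1) :
    ∀ i t, s i * ((wordsB t).map s).prod = ((wordsB (tableB i t)).map s).prod := by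
  have a1 := hs 0
  have b1 := hs 1
  have c1 := hs 2
  have r2 := braid2 a1 c1 h02
  have r3 := braid3 a1 b1 h01
  have r4 := braid4 b1 c1 h12
  generalize ha : s 0 = a at *
  generalize hb : s 1 = b at *
  generalize hc : s 2 = c at *
  have ext : ∀ {u v : G}, u = v → ∀ z, u * z = v * z := fun h z => by rw [h]
  have a2 := ext a1
  have b2 := ext b1
  have c2 := ext c1
  have q2 := ext r2
  have q3 := ext r3
  have q4 := ext r4
  simp only [mul_assoc, one_mul] at a2 b2 c2 q2 q3 q4
  have r5 : c * (b * (a * (c * (b * a)))) = b * (c * (b * (a * (c * b)))) := by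
    rw [← q2, ← r3, q4, q2]
  have q5 := ext r5
  simp only [mul_assoc] at q5
  intro i t
  fin_cases i <;> fin_cases t <;>
    simp [wordsB, tableB, ha, hb, hc, a1, b1, c1, r2, r3, r4, r5, a2, b2, c2, q2, q3, q4, q5]

theorem circuitA {W : Type*} [Group W] (M : CoxeterMatrix (Fin 3)) (cs : CoxeterSystem M W)
    (h02 : M 0 2 = 2) (h01 : M 0 1 = 3) (h12 : M 1 2 = 3) :
    ∃ θ : ZMod (Nat.card W) → W, Function.Bijective θ ∧
      (∀ t, θ (t + 1) * (θ t)⁻¹ ∈ Set.range cs.simple) ∧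
      (∀ t : ZMod (Nat.card W), θ (2 * t + 1) = cs.simple 1 * θ (2 * t)) := by
  have key := tableA_spec cs.simple cs.simple_mul_simple_self
    (by have := cs.simple_mul_simple_pow 0 2; rwa [h02] at this) (by have := cs.simple_mul_simple_pow 0 1; rwa [h01] at this)
    (by have := cs.simple_mul_simple_pow 1 2; rwa [h12] at this)
  refine circuit_of_table M cs 1 rfl 24 (fun t => ((wordsA t).map cs.simple).prod)
    permA ?_ ?_ key ?_ ?_
  · have h20 := (M.symmetric 2 0).trans h02
    have h10 := (M.symmetric 1 0).trans h01
    have h21 := (M.symmetric 2 1).trans h12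
    intro i j
    have hM : M i j = ordersA i j := by
      fin_cases i <;> fin_cases j <;>
        first | exact M.diagonal _ | assumption
    change (permA i * permA j) ^ M i j = 1
    rw [hM]
    exact permA_rel i j
  · simp [wordsA]
  · change ∀ t : Fin 24, ∃ i, tableA i t = t + 1
    decide +kernel
  · change ∀ t : Fin 24, tableA 1 (2 * t) = 2 * t + 1
    decide +kernel

theorem circuitB {W : Type*} [Group W] (M : CoxeterMatrix (Fin 3)) (cs : CoxeterSystem M W)
    (e : Equiv.Perm (Fin 3)) (he : e 1 = 1)
    (h02 : M (e 0) (e 2) = 2) (h01 : M (e 0) (e 1) = 3) (h12 : M (e 1) (e 2) = 4) :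
    ∃ θ : ZMod (Nat.card W) → W, Function.Bijective θ ∧
      (∀ t, θ (t + 1) * (θ t)⁻¹ ∈ Set.range cs.simple) ∧
      (∀ t : ZMod (Nat.card W), θ (2 * t + 1) = cs.simple 1 * θ (2 * t)) := by
  have key := tableB_spec (fun i => cs.simple (e i)) (fun i => cs.simple_mul_simple_self (e i))
    (by have := cs.simple_mul_simple_pow (e 0) (e 2); rwa [h02] at this) (by have := cs.simple_mul_simple_pow (e 0) (e 1); rwa [h01] at this)
    (by have := cs.simple_mul_simple_pow (e 1) (e 2); rwa [h12] at this)
  refine circuit_of_table M cs e he 48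
    (fun t => ((wordsB t).map (fun i => cs.simple (e i))).prod)
    permB ?_ ?_ key ?_ ?_
  · have h20 := (M.symmetric (e 2) (e 0)).trans h02
    have h10 := (M.symmetric (e 1) (e 0)).trans h01
    have h21 := (M.symmetric (e 2) (e 1)).trans h12
    intro i j
    have hM : M (e i) (e j) = ordersB i j := by
      fin_cases i <;> fin_cases j <;>
        first | exact M.diagonal _ | assumption
    rw [hM]
    exact permB_rel i j
  · simp [wordsB]
  · change ∀ t : Fin 48, ∃ i, tableB i t = t + 1
    decide +kernel
  · change ∀ t : Fin 48, tableB 1 (2 * t) = 2 * t + 1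
    decide +kernel

/-- Reflections of the plane lattice generating the affine group with diagram `4, 4`. -/
def affineFun : Fin 3 → ℤ × ℤ → ℤ × ℤ :=
  ![fun p => (-p.1, p.2), fun p => (p.2, p.1), fun p => (p.1, 1 - p.2)]

theorem affineFun_invol : ∀ i, Function.Involutive (affineFun i) := by
  intro i p
  fin_cases i <;> simp [affineFun]

theorem not_finite_four_four {W : Type*} [Group W] [Finite W]
    (M : CoxeterMatrix (Fin 3)) (cs : CoxeterSystem M W)
    (h02 : M 0 2 = 2) (h01 : M 0 1 = 4) (h12 : M 1 2 = 4) : False := by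
  have h20 := (M.symmetric 2 0).trans h02
  have h10 := (M.symmetric 1 0).trans h01
  have h21 := (M.symmetric 2 1).trans h12
  have hl : M.IsLiftable (fun i => (affineFun_invol i).toPerm) := by
    intro i j
    refine Equiv.ext fun p => ?_
    fin_cases i <;> fin_cases j <;>
      simp [M.diagonal, h02, h20, h01, h10, h12, h21, pow_succ, affineFun]
  let f : W →* Equiv.Perm (ℤ × ℤ) := cs.lift ⟨_, hl⟩
  have hf : ∀ i, f (cs.simple i) = (affineFun_invol i).toPerm := fun i =>
    cs.lift_apply_simple hl i
  let w := cs.simple 0 * cs.simple 1 * cs.simple 2 * cs.simple 1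
  have hw : ∀ p, f w p = (p.1 - 1, p.2) := by
    intro p
    simp [w, hf, affineFun]
  have hpow : ∀ k : ℕ, f (w ^ k) (0, 0) = (-(k : ℤ), 0) := by
    intro k
    induction k with
    | zero => simp
    | succ k ih =>
      rw [pow_succ', map_mul, Equiv.Perm.mul_apply, ih, hw]
      simp
      ring
  have h1 := hpow (Nat.card W)
  rw [pow_card_eq_one'] at h1
  have hpos : 0 < Nat.card W := Nat.card_pos
  simp at h1
  omega

/-- For a finite Coxeter system of rank 3 whose diagram is a path `1 — 2 — 3` of type
`A₃` or `B₃` (i.e. `M 1 3 = 2` and `M 1 2, M 2 3 ∈ {3, 4}`), there is a `2`-convenient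
Hamiltonian circuit map: a bijection `θ : ℤ/kℤ → W` (`k = |W|`) whose consecutive
ratios are simple reflections and with `θ(2t+1) = s₂ · θ(2t)` for every `t`. -/
theorem exists_two_convenient_hamiltonianCircuitMap_path_rank_three
    {W : Type*} [Group W] [Finite W]
    (M : CoxeterMatrix (Fin 3)) (cs : CoxeterSystem M W)
    (h13 : M 0 2 = 2) (h12 : M 0 1 ∈ ({3, 4} : Set ℕ)) (h23 : M 1 2 ∈ ({3, 4} : Set ℕ)) :
    ∃ θ : ZMod (Nat.card W) → W, Function.Bijective θ ∧
      (∀ t, θ (t + 1) * (θ t)⁻¹ ∈ Set.range cs.simple) ∧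
      (∀ t : ZMod (Nat.card W), θ (2 * t + 1) = cs.simple 1 * θ (2 * t)) := by
  rcases h12 with h12 | h12 <;> rcases h23 with h23 | h23
  · exact circuitA M cs h13 h12 h23
  · exact circuitB M cs 1 rfl h13 h12 h23
  · refine circuitB M cs (Equiv.swap 0 2) (by decide) ?_ ?_ ?_
    · exact (M.symmetric 2 0).trans h13
    · exact (M.symmetric 2 1).trans h23
    · exact (M.symmetric 1 0).trans h12
  · exact (not_finite_four_four M cs h13 h12 h23).elim
end

section
/- Let (W, S) be a finite Coxeter system over a finite index set B with |B| ≥ 3 whose Coxeter matrix is crystallographic, i.e. M i j ∈ {2, 3, 4, 6} for all i ≠ j. Let i₁, i₂, i₃ ∈ B be pairwise distinct with M i₁ i₂ ≥ 3, M i₂ i₃ ≥ 3 and M i₁ i₃ = 2. Then there exists a Hamiltonian circuit map θ : ℤ/kℤ → W (k = |W|) such that for every t ∈ ℤ the edge label at every second step avoids s_{i₁} and s_{i₃}: θ(2t+1)·θ(2t)⁻¹ ∉ {s_{i₁}, s_{i₃}}. In particular, if |B| = 3, then θ is i₂-convenient, i.e. θ(2t+1) = s_{i₂} · θ(2t) for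 all t. -/
namespace HamCox

theorem even_of_invol {X : Type*} [Finite X] (S : Set X) (N : X → X)
    (hN : ∀ z ∈ S, N z ∈ S ∧ N (N z) = z ∧ N z ≠ z) : Even S.ncard := by
  classical
  have hf := S.toFinite
  rw [Set.ncard_eq_toFinset_card S hf]
  have h : ∑ z ∈ hf.toFinset, (1 : ZMod 2) = 0 := by
    apply Finset.sum_involution (fun a _ => N a)
    · intro a ha; decide
    · intro a ha _; exact (hN a (by simpa using ha)).2.2
    · intro a ha; simpa using (hN a (by simpa using ha)).1
    · intro a ha; exact (hN a (by simpa using ha)).2.1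
  simp only [Finset.sum_const, nsmul_eq_mul, mul_one] at h
  exact (ZMod.natCast_eq_zero_iff_even).1 h

theorem core {X : Type*} [Finite X] (A0 A : Set X) (N K : X → X)
    (hN : ∀ z ∈ A0, N z ∈ A0 ∧ N (N z) = z ∧ N z ≠ z)
    (hK : ∀ z ∈ A0, K z ∈ A0 ∧ K (K z) = z ∧ K z ≠ z)
    (x : X) (hx : x ∈ A0)
    (hA : ∀ z ∈ A, z ∈ A0 → z ≠ x → z ≠ N x → N z ∈ A)
    (hA' : ∀ z ∈ A, z ∈ A0 → K z ∈ A) : x ∈ A → N x ∈ A := by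
  intro hxA
  by_contra hn
  have h1 : Even (A ∩ A0).ncard := even_of_invol _ K (by
    rintro z ⟨hz, hz0⟩
    exact ⟨⟨hA' z hz hz0, (hK z hz0).1⟩, (hK z hz0).2⟩)
  have h2 : Even ((A ∩ A0) \ {x}).ncard := even_of_invol _ N (by
    rintro z ⟨⟨hz, hz0⟩, hzx⟩
    have hzx' : z ≠ x := hzx
    have hzN : z ≠ N x := by rintro rfl; exact hn hz
    refine ⟨⟨⟨hA z hz hz0 hzx' hzN, (hN z hz0).1⟩, ?_⟩, (hN z hz0).2⟩
    intro h
    have h : N z = x := h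
    apply hzN
    rw [← h, (hN z hz0).2.1])
  have h3 : ((A ∩ A0) \ {x}).ncard + 1 = (A ∩ A0).ncard :=
    Set.ncard_sdiff_singleton_add_one ⟨hxA, hx⟩ (Set.toFinite _)
  rw [← h3, Nat.even_add_one] at h1
  exact h1 h2

structure HC {W : Type*} [Group W] (U : Set W) (L : Bool → Set W) (N : Bool → W → W) : Prop where
  maps : ∀ b, ∀ x ∈ U, N b x ∈ U
  inv : ∀ b, ∀ x ∈ U, N b (N b x) = x
  lab : ∀ b, ∀ x ∈ U, N b x * x⁻¹ ∈ L b
  conn : ∀ A ⊆ U, A.Nonempty → (∀ b, ∀ x ∈ A, N b x ∈ A) → A = U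

/-- Base case. -/
theorem base {W : Type*} [Group W] [Finite W] (a b c : W) (ha : a * a = 1) (hb : b * b = 1)
    (hc : c * c = 1) (ha1 : a ≠ 1) (hb1 : b ≠ 1) (hc1 : c ≠ 1) (hac : a * c = c * a) :
    ∃ N : Bool → W → W, HC (Subgroup.closure {a, b, c} : Set W)
      (fun t => if t then {b} else {a, c}) N := by
  classical
  let K : W → W := fun x => b * x
  let F : (W → Bool) → W → W := fun f x => if f x then a * x else c * x
  let ok : (W → Bool) → Prop := fun f => ∀ x, f (a * x) = f x ∧ f (c * x) = f x
  let cl : (W → Bool) → Set (Set W) := fun f => {A | ∀ x ∈ A, K x ∈ A ∧ F f x ∈ A}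
  have haa : ∀ x, a * (a * x) = x := fun x => by rw [← mul_assoc, ha, one_mul]
  have hbb : ∀ x, b * (b * x) = x := fun x => by rw [← mul_assoc, hb, one_mul]
  have hcc : ∀ x, c * (c * x) = x := fun x => by rw [← mul_assoc, hc, one_mul]
  have hca : ∀ x, c * (a * x) = a * (c * x) := fun x => by rw [← mul_assoc, ← hac, mul_assoc]
  obtain ⟨f, hf, hmin⟩ : ∃ f, ok f ∧ ∀ g, ok g → (cl f).ncard ≤ (cl g).ncard := by
    have := Set.exists_min_image {f | ok f} (fun f => (cl f).ncard) (Set.toFinite _)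
      ⟨fun _ => true, fun x => ⟨rfl, rfl⟩⟩
    exact this
  have hFF : ∀ f, ok f → ∀ x, F f (F f x) = x := by
    intro f hf x
    by_cases h : f x = true
    · have := (hf x).1
      simp [F, h, this, haa]
    · have := (hf x).2
      simp only [F, h, if_false, this, hcc, Bool.false_eq_true]
  have hFne : ∀ f x, F f x ≠ x := by
    intro f x
    simp only [F]
    split_ifs <;> simpa
  have hKne : ∀ x, K x ≠ x := by intro x; simpa [K]
  -- key claim
  have key : ∀ A ∈ cl f, ∀ x ∈ A, a * x ∈ A ∧ c * x ∈ A := by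
    intro A hA x hx
    by_contra hcon
    -- N x the partner, y the other
    let g : W → Bool := fun z => if z = x ∨ z = a * x ∨ z = c * x ∨ z = a * (c * x) then !(f z) else f z
    have eqa : ∀ u v : W, a * u = v ↔ u = a * v := fun u v =>
      ⟨fun h => by rw [← h, haa], fun h => by rw [h, haa]⟩
    have eqc : ∀ u v : W, c * u = v ↔ u = c * v := fun u v =>
      ⟨fun h => by rw [← h, hcc], fun h => by rw [h, hcc]⟩
    have hg : ok g := by
      intro z
      have h1 : (a * z = x ∨ a * z = a * x ∨ a * z = c * x ∨ a * z = a * (c * x)) ↔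
        (z = x ∨ z = a * x ∨ z = c * x ∨ z = a * (c * x)) := by
        simp only [eqa z, haa]
        constructor <;> (rintro (h | h | h | h) <;> simp only [h, true_or, or_true])
      have h2 : (c * z = x ∨ c * z = a * x ∨ c * z = c * x ∨ c * z = a * (c * x)) ↔
        (z = x ∨ z = a * x ∨ z = c * x ∨ z = a * (c * x)) := by
        simp only [eqc z, hcc, hca]
        constructor <;> (rintro (h | h | h | h) <;> simp only [h, true_or, or_true])
      constructor
      · simp only [g, h1, (hf z).1]
      · simp only [g, h2, (hf z).2]
    let y : W := if f x then c * x else a * x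
    have hy : y ∉ A := by
      intro hy
      apply hcon
      have := (hA x hx).2
      by_cases h : f x = true
      · simp only [F, y, h, if_true] at this hy; exact ⟨this, hy⟩
      · simp only [F, y, h, if_false] at this hy; exact ⟨hy, this⟩
    have hgx : F g x = y := by
      by_cases h : f x = true <;> simp [F, g, y, h]
    have hgF : F g (F f x) = F f y := by
      have h1 := (hf x).1
      have h2 := (hf x).2
      by_cases h : f x = true <;> simp [F, g, y, h, h1, h2, hca]
    have hgo : ∀ z, z ≠ x → z ≠ F f x → z ≠ y → z ≠ F f y → F g z = F f z := by
      intro z z1 z2 z3 z4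
      have : ¬ (z = x ∨ z = a * x ∨ z = c * x ∨ z = a * (c * x)) := by
        have h1 := (hf x).1
        have h2 := (hf x).2
        by_cases h : f x = true <;> simp [F, y, h, h1, h2, hca] at z2 z3 z4 <;>
          (rintro (h | h | h | h) <;>
            first | exact z1 h | exact z2 h | exact z3 h | exact z4 h)
      simp [F, g, this]
    have hyF : F f y ∉ A := fun h => hy (by have := (hA _ h).2; rwa [hFF f hf] at this)
    have hsub : cl g ⊆ cl f := by
      intro D hD
      have hN : ∀ z ∈ A, F f z ∈ A ∧ F f (F f z) = z ∧ F f z ≠ z :=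
        fun z hz => ⟨(hA z hz).2, hFF f hf z, hFne f z⟩
      have hK : ∀ z ∈ A, K z ∈ A ∧ K (K z) = z ∧ K z ≠ z :=
        fun z hz => ⟨(hA z hz).1, hbb z, hKne z⟩
      have hmem : ∀ z ∈ D, z ∈ A → z ≠ x → z ≠ F f x → F f z ∈ D := by
        intro z hz hzA h1 h2
        rw [← hgo z h1 h2 (by rintro rfl; exact hy hzA) (by rintro rfl; exact hyF hzA)]
        exact (hD z hz).2
      have c1 : x ∈ D → F f x ∈ D := core A D (F f) K hN hK x hx hmem (fun z hz _ => (hD z hz).1)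
      have c2 : F f x ∈ D → x ∈ D := by
        have := core A D (F f) K hN hK (F f x) (hA x hx).2 (by
          intro z hz hzA h1 h2
          rw [hFF f hf] at h2
          exact hmem z hz hzA h2 h1) (fun z hz _ => (hD z hz).1)
        rwa [hFF f hf] at this
      have d1 : F g y = x := by rw [← hgx, hFF g hg]
      have d2 : F g (F f y) = F f x := by rw [← hgF, hFF g hg]
      intro z hz
      refine ⟨(hD z hz).1, ?_⟩
      by_cases z1 : z = x
      · subst z1; exact c1 hz
      by_cases z2 : z = F f x
      · subst z2; rw [hFF f hf]; exact c2 hz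
      by_cases z3 : z = y
      · rw [z3] at hz ⊢
        have := c1 (d1 ▸ (hD y hz).2)
        exact hgF ▸ (hD _ this).2
      by_cases z4 : z = F f y
      · rw [z4] at hz ⊢
        rw [hFF f hf]
        have := c2 (d2 ▸ (hD _ hz).2)
        exact hgx ▸ (hD _ this).2
      rw [← hgo z z1 z2 z3 z4]
      exact (hD z hz).2
    have hlt : (cl g).ncard < (cl f).ncard := by
      apply Set.ncard_lt_ncard _ (Set.toFinite _)
      refine ⟨hsub, fun h => ?_⟩
      have := (h hA x hx).2
      rw [hgx] at this
      exact hy this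
    exact absurd (hmin g hg) (not_le.2 hlt)
  refine ⟨fun t => if t then K else F f, ?_, ?_, ?_, ?_⟩
  · have m1 : a ∈ Subgroup.closure {a, b, c} := Subgroup.subset_closure (by simp)
    have m2 : b ∈ Subgroup.closure {a, b, c} := Subgroup.subset_closure (by simp)
    have m3 : c ∈ Subgroup.closure {a, b, c} := Subgroup.subset_closure (by simp)
    rintro (_ | _) x hx
    · simp only [F, Bool.false_eq_true, if_false]
      split_ifs
      · exact mul_mem m1 hx
      · exact mul_mem m3 hx
    · exact mul_mem m2 hx
  · rintro (_ | _) x hx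
    · exact hFF f hf x
    · exact hbb x
  · rintro (_ | _) x hx
    · simp only [F, Bool.false_eq_true, if_false]
      split_ifs <;> simp
    · simp [K]
  · intro A hAU hne hA
    have hAc : A ∈ cl f := fun x hx => ⟨hA true x hx, hA false x hx⟩
    have hclo : ∀ h ∈ Subgroup.closure {a, b, c}, ∀ x ∈ A, h * x ∈ A := by
      intro h hh
      induction hh using Subgroup.closure_induction'' with
      | one => simp
      | mem y hy =>
        intro x hx
        rcases hy with rfl | rfl | rfl
        · exact (key A hAc x hx).1
        · exact hA true x hx
        · exact (key A hAc x hx).2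
      | inv_mem y hy =>
        intro x hx
        rcases hy with rfl | rfl | rfl
        · rw [inv_eq_of_mul_eq_one_left ha]; exact (key A hAc x hx).1
        · rw [inv_eq_of_mul_eq_one_left hb]; exact hA true x hx
        · rw [inv_eq_of_mul_eq_one_left hc]; exact (key A hAc x hx).2
      | mul y z _ _ h1 h2 => intro x hx; rw [mul_assoc]; exact h1 _ (h2 _ hx)
    obtain ⟨x, hx⟩ := hne
    apply Set.Subset.antisymm hAU
    intro u hu
    have := hclo (u * x⁻¹) (mul_mem hu (inv_mem (hAU hx))) x hx
    simpa using this

theorem HC.translate {W : Type*} [Group W] {U : Set W} {L : Bool → Set W} {N : Bool → W → W}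
    (h : HC U L N) (g : W) :
    HC {z | z * g⁻¹ ∈ U} L (fun b z => N b (z * g⁻¹) * g) := by
  refine ⟨?_, ?_, ?_, ?_⟩
  · intro b x hx
    simpa using h.maps b _ hx
  · intro b x hx
    simp [h.inv b _ hx]
  · intro b x hx
    have := h.lab b _ hx
    simpa [mul_assoc] using this
  · intro A hA hne hcl
    have := h.conn {z | z * g ∈ A} (by intro z hz; simpa using hA hz) (by
      obtain ⟨x, hx⟩ := hne
      exact ⟨x * g⁻¹, by simpa using hx⟩) (by
      intro b z hz
      simpa using hcl b _ hz)
    ext z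
    have h2 := Set.ext_iff.1 this (z * g⁻¹)
    simpa using h2

theorem HC.core' {W : Type*} [Group W] [Finite W] {U : Set W} {L : Bool → Set W}
    {N : Bool → W → W} (h : HC U L N) (hL : ∀ b, 1 ∉ L b) (b : Bool) (A : Set W)
    (x : W) (hx : x ∈ U)
    (hA : ∀ z ∈ A, z ∈ U → z ≠ x → z ≠ N b x → N b z ∈ A)
    (hA' : ∀ z ∈ A, z ∈ U → N (!b) z ∈ A) : x ∈ A ↔ N b x ∈ A := by
  have hh : ∀ b, ∀ z ∈ U, N b z ∈ U ∧ N b (N b z) = z ∧ N b z ≠ z := by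
    intro b z hz
    refine ⟨h.maps b z hz, h.inv b z hz, fun e => hL b ?_⟩
    have := h.lab b z hz
    rwa [e, mul_inv_cancel] at this
  constructor
  · exact core U A (N b) (N (!b)) (hh b) (hh _) x hx hA hA'
  · have := core U A (N b) (N (!b)) (hh b) (hh _) (N b x) (h.maps b x hx) (by
      intro z hz hzU h1 h2
      rw [h.inv b x hx] at h2
      exact hA z hz hzU h2 h1) hA'
    rwa [h.inv b x hx] at this

open Classical in
theorem HC.join {W : Type*} [Group W] [Finite W] {U C : Set W} {L1 L2 L : Bool → Set W}
    {N1 N2 : Bool → W → W} (h1 : HC U L1 N1) (h2 : HC C L2 N2) (hd : ∀ z ∈ U, z ∉ C)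
    (hL1 : ∀ b, L1 b ⊆ L b) (hL2 : ∀ b, L2 b ⊆ L b) (hL : ∀ b, 1 ∉ L b)
    (t a x : W) (b : Bool) (htt : t * t = 1) (ht : t ∈ L b) (hcomm : a * t = t * a)
    (hx : x ∈ U) (hy : t * x ∈ C) (hax : N1 b x = a * x) (hay : N2 b (t * x) = a * (t * x)) :
    HC (U ∪ C) L (fun c z => if c = b ∧ (z = x ∨ z = a * x ∨ z = t * x ∨ z = t * (a * x)) then t * z
      else if z ∈ U then N1 c z else N2 c z) := by
  set Q : W → Prop := fun z => z = x ∨ z = a * x ∨ z = t * x ∨ z = t * (a * x) with hQ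
  set N : Bool → W → W := fun c z => if c = b ∧ Q z then t * z
      else if z ∈ U then N1 c z else N2 c z with hN
  have htc : ∀ z, t * (t * z) = z := fun z => by rw [← mul_assoc, htt, one_mul]
  have hcomm' : a * (t * x) = t * (a * x) := by rw [← mul_assoc, hcomm, mul_assoc]
  rw [hcomm'] at hay
  have m2 : a * x ∈ U := hax ▸ h1.maps b x hx
  have m4 : t * (a * x) ∈ C := hay ▸ h2.maps b _ hy
  have hax' : N1 b (a * x) = x := by rw [← hax, h1.inv b x hx]
  have hay' : N2 b (t * (a * x)) = t * x := by rw [← hay, h2.inv b _ hy]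
  have hQt : ∀ z, Q z → Q (t * z) := by
    rintro z (h | h | h | h) <;> simp only [hQ, h, htc, true_or, or_true]
  have hQm : ∀ z, Q z → z ∈ U ∪ C := by
    rintro z (h | h | h | h) <;> rw [h]
    · exact Or.inl hx
    · exact Or.inl m2
    · exact Or.inr hy
    · exact Or.inr m4
  have hQN1 : ∀ z ∈ U, ¬ Q z → ¬ Q (N1 b z) := by
    intro z hz hn hq
    apply hn
    have hz' := h1.maps b z hz
    have hi := h1.inv b z hz
    rcases hq with h | h | h | h
    · rw [h, hax] at hi; exact Or.inr (Or.inl hi.symm)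
    · rw [h, hax'] at hi; exact Or.inl hi.symm
    · rw [h] at hz'; exact absurd hy (hd _ hz')
    · rw [h] at hz'; exact absurd m4 (hd _ hz')
  have hQN2 : ∀ z ∈ C, ¬ Q z → ¬ Q (N2 b z) := by
    intro z hz hn hq
    apply hn
    have hz' := h2.maps b z hz
    have hi := h2.inv b z hz
    rcases hq with h | h | h | h
    · rw [h] at hz'; exact absurd hz' (hd _ hx)
    · rw [h] at hz'; exact absurd hz' (hd _ m2)
    · rw [h, hay] at hi; exact Or.inr (Or.inr (Or.inr hi.symm))
    · rw [h, hay'] at hi; exact Or.inr (Or.inr (Or.inl hi.symm))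
  have eQ : ∀ z, Q z → N b z = t * z := fun z hz => by simp only [hN, hz, and_self, if_true]
  have eU : ∀ c, ∀ z ∈ U, ¬ (c = b ∧ Q z) → N c z = N1 c z := fun c z hz hn => by
    simp only [hN, if_neg hn, if_pos hz]
  have eC : ∀ c, ∀ z ∈ C, ¬ (c = b ∧ Q z) → N c z = N2 c z := fun c z hz hn => by
    simp only [hN, if_neg hn, if_neg (fun h => hd z h hz)]
  refine ⟨?_, ?_, ?_, ?_⟩
  · intro c z hz
    by_cases hq : c = b ∧ Q z
    · rw [hq.1, eQ z hq.2]; exact hQm _ (hQt z hq.2)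
    · rcases hz with hz | hz
      · rw [eU c z hz hq]; exact Or.inl (h1.maps c z hz)
      · rw [eC c z hz hq]; exact Or.inr (h2.maps c z hz)
  · intro c z hz
    by_cases hq : c = b ∧ Q z
    · rw [hq.1, eQ z hq.2, eQ _ (hQt z hq.2), htc]
    · rcases hz with hz | hz
      · rw [eU c z hz hq, eU c _ (h1.maps c z hz), h1.inv c z hz]
        rintro ⟨rfl, h⟩
        exact hQN1 z hz (fun h => hq ⟨rfl, h⟩) h
      · rw [eC c z hz hq, eC c _ (h2.maps c z hz), h2.inv c z hz]
        rintro ⟨rfl, h⟩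
        exact hQN2 z hz (fun h => hq ⟨rfl, h⟩) h
  · intro c z hz
    by_cases hq : c = b ∧ Q z
    · rw [hq.1, eQ z hq.2]; simpa using ht
    · rcases hz with hz | hz
      · rw [eU c z hz hq]; exact hL1 c (h1.lab c z hz)
      · rw [eC c z hz hq]; exact hL2 c (h2.lab c z hz)
  · intro A hAU hne hcl
    have hnb : ∀ z, ¬ ((!b) = b ∧ Q z) := fun z h => by cases b <;> simp at h
    have hxA : x ∈ A ↔ a * x ∈ A := by
      rw [← hax]
      refine h1.core' (fun b h => hL b (hL1 b h)) b A x hx ?_ ?_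
      · intro z hz hzU z1 z2
        rw [hax] at z2
        rw [← eU b z hzU]
        · exact hcl b z hz
        · rintro ⟨-, h | h | h | h⟩
          · exact z1 h
          · exact z2 h
          · rw [h] at hzU; exact hd _ hzU hy
          · rw [h] at hzU; exact hd _ hzU m4
      · intro z hz hzU
        rw [← eU _ z hzU (hnb z)]
        exact hcl _ z hz
    have hts : ∀ z, Q z → z ∈ A → t * z ∈ A := fun z hq hz => eQ z hq ▸ hcl b z hz
    have i3 : x ∈ A ↔ t * x ∈ A :=
      ⟨hts x (Or.inl rfl), fun h => htc x ▸ hts (t * x) (Or.inr (Or.inr (Or.inl rfl))) h⟩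
    have i4 : a * x ∈ A ↔ t * (a * x) ∈ A :=
      ⟨hts _ (Or.inr (Or.inl rfl)),
        fun h => htc (a * x) ▸ hts (t * (a * x)) (Or.inr (Or.inr (Or.inr rfl))) h⟩
    have cU : ∀ c, ∀ z ∈ A ∩ U, N1 c z ∈ A ∩ U := by
      rintro c z ⟨hz, hzU⟩
      refine ⟨?_, h1.maps c z hzU⟩
      by_cases hq : c = b ∧ Q z
      · obtain ⟨rfl, h | h | h | h⟩ := hq
        · rw [h, hax]; rw [h] at hz; exact hxA.1 hz
        · rw [h, hax']; rw [h] at hz; exact hxA.2 hz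
        · rw [h] at hzU; exact absurd hy (hd _ hzU)
        · rw [h] at hzU; exact absurd m4 (hd _ hzU)
      · rw [← eU c z hzU hq]; exact hcl c z hz
    have cC : ∀ c, ∀ z ∈ A ∩ C, N2 c z ∈ A ∩ C := by
      rintro c z ⟨hz, hzU⟩
      refine ⟨?_, h2.maps c z hzU⟩
      by_cases hq : c = b ∧ Q z
      · obtain ⟨rfl, h | h | h | h⟩ := hq
        · rw [h] at hzU; exact absurd hzU (hd _ hx)
        · rw [h] at hzU; exact absurd hzU (hd _ m2)
        · rw [h, hay]; rw [h] at hz; exact i4.1 (hxA.1 (i3.2 hz))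
        · rw [h, hay']; rw [h] at hz; exact i3.1 (hxA.2 (i4.2 hz))
      · rw [← eC c z hzU hq]; exact hcl c z hz
    have kU : (A ∩ U).Nonempty → A ∩ U = U := fun h => h1.conn _ Set.inter_subset_right h cU
    have kC : (A ∩ C).Nonempty → A ∩ C = C := fun h => h2.conn _ Set.inter_subset_right h cC
    have hxin : x ∈ A := by
      obtain ⟨z, hz⟩ := hne
      rcases hAU hz with hzU | hzC
      · have := kU ⟨z, hz, hzU⟩
        rw [← this] at hx; exact hx.1
      · have := kC ⟨z, hz, hzC⟩
        rw [← this] at hy; exact i3.2 hy.1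
    have e1 := kU ⟨x, hxin, hx⟩
    have e2 := kC ⟨_, i3.1 hxin, hy⟩
    apply Set.Subset.antisymm hAU
    exact Set.union_subset (e1 ▸ Set.inter_subset_left) (e2 ▸ Set.inter_subset_left)

theorem closure_mul_mem {W : Type*} [Group W] (T A : Set W) (hT : ∀ a ∈ T, a * a = 1)
    (hA : ∀ a ∈ T, ∀ x ∈ A, a * x ∈ A) :
    ∀ h ∈ Subgroup.closure T, ∀ x ∈ A, h * x ∈ A := by
  intro h hh
  induction hh using Subgroup.closure_induction'' with
  | one => simp
  | mem y hy => exact hA y hy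
  | inv_mem y hy => rw [inv_eq_of_mul_eq_one_left (hT y hy)]; exact hA y hy
  | mul y z _ _ h1 h2 => intro x hx; rw [mul_assoc]; exact h1 _ (h2 _ hx)

theorem ext_step {W : Type*} [Group W] [Finite W] (T : Set W) (t a0 : W)
    (hT : ∀ a ∈ T, a * a = 1) (h1T : 1 ∉ T) (htt : t * t = 1) (ht1 : t ≠ 1)
    (hcomm : ∀ a ∈ T, a ≠ a0 → a * t = t * a) (htwo : ∃ u ∈ T, ∃ v ∈ T, u ≠ v)
    (L : Bool → Set W) (hL : ∀ b, L b ⊆ T) (N0 : Bool → W → W)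
    (h0 : HC (Subgroup.closure T : Set W) L N0) :
    ∃ N, HC (Subgroup.closure (insert t T) : Set W) (fun b => insert t (L b)) N := by
  classical
  set H := Subgroup.closure T with hH
  set G := Subgroup.closure (insert t T) with hG
  have hHG : H ≤ G := Subgroup.closure_mono (Set.subset_insert _ _)
  have htG : t ∈ G := Subgroup.subset_closure (Set.mem_insert _ _)
  let P : Set W → Prop := fun U => 1 ∈ U ∧ (∀ h ∈ H, ∀ x ∈ U, h * x ∈ U) ∧ U ⊆ G ∧
    ∃ N, HC U (fun b => insert t (L b)) N ∧
      ∀ x ∈ U, t * x ∉ U → ∀ b, ∃ h ∈ H, N0 b h * h⁻¹ = N b x * x⁻¹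
  have hP0 : P H := by
    refine ⟨one_mem H, fun h hh x hx => mul_mem hh hx, hHG, N0, ⟨h0.maps, h0.inv, ?_, h0.conn⟩, ?_⟩
    · intro b x hx; exact Set.mem_insert_of_mem _ (h0.lab b x hx)
    · intro x hx _ b; exact ⟨x, hx, rfl⟩
  obtain ⟨U, ⟨hU1, hUH, hUG, N, hN, hbd⟩, hmax⟩ :=
    Set.exists_max_image {U | P U} (fun U => U.ncard) (Set.toFinite _) ⟨_, hP0⟩
  have hL1 : ∀ b, 1 ∉ insert t (L b) := by
    rintro b (h | h)
    · exact ht1 h.symm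
    · exact h1T (hL b h)
  have hclosed : ∀ x ∈ U, t * x ∈ U := by
    by_contra! hcon
    obtain ⟨x, hx, htx⟩ := hcon
    have hnn : N true x ≠ N false x := by
      intro e
      have := hN.conn {x, N true x} (by
        rintro z (rfl | rfl)
        · exact hx
        · exact hN.maps _ _ hx) ⟨x, Or.inl rfl⟩ (by
        rintro (_ | _) z (rfl | rfl)
        · right; exact e.symm
        · left; rw [e, hN.inv _ _ hx]
        · right; rfl
        · left; rw [hN.inv _ _ hx])
      obtain ⟨u, hu, v, hv, huv⟩ := htwo
      have key : ∀ u ∈ T, u * x = N true x := by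
        intro u hu
        have hm := hUH u (Subgroup.subset_closure hu) x hx
        rw [← this] at hm
        rcases hm with hm | hm
        · exfalso; apply h1T
          have : u = 1 := by simpa using hm
          rwa [this] at hu
        · exact hm
      exact huv (mul_right_cancel ((key u hu).trans (key v hv).symm))
    obtain ⟨b, hb⟩ : ∃ b, N b x * x⁻¹ ≠ a0 := by
      by_contra! hc
      exact hnn (mul_right_cancel ((hc true).trans (hc false).symm))
    obtain ⟨h, hh, hhe⟩ := hbd x hx htx b
    set a := N b x * x⁻¹ with ha
    have haT : a ∈ T := hhe ▸ hL b (h0.lab b h hh)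
    have hat := hcomm a haT hb
    let g := h⁻¹ * (t * x)
    let C : Set W := {z | z * g⁻¹ ∈ (H : Set W)}
    let N2 : Bool → W → W := fun b z => N0 b (z * g⁻¹) * g
    have hC : HC C L N2 := h0.translate g
    have hgU : g ∉ U := by
      intro hg
      have := hUH h hh g hg
      simp [g] at this
      exact htx this
    have hd : ∀ z ∈ U, z ∉ C := by
      intro z hz hzC
      have := hUH _ (inv_mem (show z * g⁻¹ ∈ H from hzC)) z hz
      simp at this
      exact hgU this
    have hy : t * x ∈ C := by
      show t * x * g⁻¹ ∈ H
      simpa [g, mul_assoc] using hh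
    have hj := hN.join (L := fun b => insert t (L b)) hC hd (fun b => subset_rfl)
      (fun b => Set.subset_insert _ _) hL1 t a x b
      htt (Set.mem_insert _ _) hat hx hy (by simp [ha]) (by
        have : N0 b h = a * h := by rw [← hhe]; simp
        simp [N2, g, this, mul_assoc])
    have hPU : P (U ∪ C) := by
      refine ⟨Or.inl hU1, ?_, ?_, _, hj, ?_⟩
      · rintro k hk z (hz | hz)
        · exact Or.inl (hUH k hk z hz)
        · right
          show k * z * g⁻¹ ∈ H
          rw [mul_assoc]; exact mul_mem hk hz
      · rintro z (hz | hz)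
        · exact hUG hz
        · have hgG : g ∈ G := mul_mem (inv_mem (hHG hh)) (mul_mem htG (hUG hx))
          have : z * g⁻¹ * g ∈ G := mul_mem (hHG hz) hgG
          simpa using this
      · intro z hz htz c
        have htU : t * z ∉ U := fun h => htz (Or.inl h)
        have htC : t * z ∉ C := fun h => htz (Or.inr h)
        have htc : ∀ z, t * (t * z) = z := fun z => by rw [← mul_assoc, htt, one_mul]
        have hax : a * x ∈ U := hUH a (Subgroup.subset_closure haT) x hx
        have hn : ¬ (c = b ∧ (z = x ∨ z = a * x ∨ z = t * x ∨ z = t * (a * x))) := by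
          rintro ⟨-, h | h | h | h⟩
          · rw [h] at htC; exact htC hy
          · rw [h] at htC; apply htC
            show t * (a * x) * g⁻¹ ∈ H
            have : t * (a * x) * g⁻¹ = a * (t * x * g⁻¹) := by
              rw [← mul_assoc t, ← hat]; simp only [mul_assoc]
            rw [this]
            exact mul_mem (Subgroup.subset_closure haT) hy
          · rw [h, htc] at htU; exact htU hx
          · rw [h, htc] at htU; exact htU hax
        rw [if_neg hn]
        rcases hz with hz | hz
        · rw [if_pos hz]; exact hbd z hz htU c
        · rw [if_neg (fun h => hd z h hz)]
          exact ⟨z * g⁻¹, hz, by simp [N2, mul_assoc]⟩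
    have hle := hmax _ hPU
    have hlt : U.ncard < (U ∪ C).ncard := by
      apply Set.ncard_lt_ncard _ (Set.toFinite _)
      exact ⟨Set.subset_union_left, fun h => htx (h (Or.inr hy))⟩
    exact absurd hle (not_le.2 hlt)
  have hUe : U = G := by
    apply Set.Subset.antisymm hUG
    intro z hz
    have := closure_mul_mem (insert t T) U (by
      rintro a (rfl | h)
      · exact htt
      · exact hT a h) (by
      rintro a (rfl | h)
      · exact hclosed
      · exact hUH a (Subgroup.subset_closure h)) z hz 1 hU1
    simpa using this
  exact ⟨N, hUe ▸ hN⟩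

theorem to_theta {W : Type*} [Group W] [Finite W] (p : W →* Multiplicative (ZMod 2))
    (L : Bool → Set W) (N : Bool → W → W) (hN : HC Set.univ L N)
    (hp : ∀ b, ∀ a ∈ L b, p a = Multiplicative.ofAdd 1) :
    ∃ θ : ZMod (Nat.card W) → W, Function.Bijective θ ∧
      (∀ t, ∃ b, θ (t + 1) * (θ t)⁻¹ ∈ L b) ∧
      ∀ t, θ (2 * t + 1) * (θ (2 * t))⁻¹ ∈ L true := by
  classical
  haveI := Fintype.ofFinite W
  have two : ∀ u : Multiplicative (ZMod 2), u = 1 ∨ u = Multiplicative.ofAdd 1 := by decide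
  have hne : (Multiplicative.ofAdd 1 : Multiplicative (ZMod 2)) ≠ 1 := by decide
  have h11 : (Multiplicative.ofAdd 1 * Multiplicative.ofAdd 1 : Multiplicative (ZMod 2)) = 1 := by
    decide
  have hpN : ∀ b x, p (N b x) = Multiplicative.ofAdd 1 * p x := by
    intro b x
    have := hp b _ (hN.lab b x trivial)
    rw [← this, ← map_mul]; simp
  have hi : ∀ b x, N b (N b x) = x := fun b x => hN.inv b x trivial
  let F : Equiv.Perm W :=
    { toFun := fun x => if p x = 1 then N true x else N false x
      invFun := fun x => if p x = 1 then N false x else N true x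
      left_inv := by
        intro x
        rcases two (p x) with h | h <;> simp [h, hpN, hi, hne, h11]
      right_inv := by
        intro x
        rcases two (p x) with h | h <;> simp [h, hpN, hi, hne, h11] }
  have hF1 : ∀ x, p x = 1 → F x = N true x := fun x h => by simp [F, h]
  have hF2 : ∀ x, p x ≠ 1 → F x = N false x := fun x h => by simp [F, h]
  have hFlab : ∀ x, ∃ b, F x = N b x := by
    intro x
    by_cases h : p x = 1
    · exact ⟨_, hF1 x h⟩
    · exact ⟨_, hF2 x h⟩
  have hpF : ∀ x, p (F x) = Multiplicative.ofAdd 1 * p x := by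
    intro x
    obtain ⟨b, hb⟩ := hFlab x
    rw [hb, hpN]
  have hFinv1 : ∀ x, p x = 1 → F⁻¹ x = N false x := by
    intro x h
    rw [Equiv.Perm.inv_eq_iff_eq, hF2, hi]
    rw [hpN, h]; decide
  have hFinv2 : ∀ x, p x ≠ 1 → F⁻¹ x = N true x := by
    intro x h
    rw [Equiv.Perm.inv_eq_iff_eq, hF1, hi]
    rw [hpN, (two _).resolve_left h, h11]
  have hreach : ∀ y, ∃ n : ℤ, (F ^ n) 1 = y := by
    have := hN.conn {y | ∃ n : ℤ, (F ^ n) 1 = y} (Set.subset_univ _) ⟨1, 0, by simp⟩ (by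
      rintro b y ⟨n, rfl⟩
      have a1 : ∃ m : ℤ, (F ^ m) 1 = F ((F ^ n) 1) := ⟨1 + n, by simp [zpow_add]⟩
      have a2 : ∃ m : ℤ, (F ^ m) 1 = F⁻¹ ((F ^ n) 1) := ⟨-1 + n, by rw [zpow_add]; simp⟩
      by_cases h : p ((F ^ n) 1) = 1
      · cases b
        · rw [hFinv1 _ h] at a2; exact a2
        · rw [hF1 _ h] at a1; exact a1
      · cases b
        · rw [hF2 _ h] at a1; exact a1
        · rw [hFinv2 _ h] at a2; exact a2)
    intro y
    have hy : y ∈ (Set.univ : Set W) := trivial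
    rw [← this] at hy
    exact hy
  have hcyc : F.IsCycleOn ((Finset.univ : Finset W) : Set W) := by
    refine ⟨by simpa using F.bijective.bijOn_univ, ?_⟩
    intro x _ y _
    obtain ⟨n, rfl⟩ := hreach x
    obtain ⟨m, rfl⟩ := hreach y
    refine ⟨m - n, ?_⟩
    rw [← Equiv.Perm.mul_apply, ← zpow_add]; simp
  have hcard : (Finset.univ : Finset W).card = Nat.card W := by
    rw [Nat.card_eq_fintype_card, Finset.card_univ]
  have heq : ∀ m n : ℤ, (F ^ m) 1 = (F ^ n) 1 ↔ (m : ZMod (Nat.card W)) = n := by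
    intro m n
    rw [hcyc.zpow_apply_eq_zpow_apply (Finset.mem_univ _), hcard, ZMod.intCast_eq_intCast_iff]
  haveI : NeZero (Nat.card W) := ⟨Nat.card_pos.ne'⟩
  let θ : ZMod (Nat.card W) → W := fun t => (F ^ (t.cast : ℤ)) 1
  have hθ : ∀ n : ℤ, θ n = (F ^ n) 1 := by
    intro n
    simp only [θ]
    rw [heq]; simp
  have hs : ∀ t : ZMod (Nat.card W), ∃ n : ℤ, (n : ZMod (Nat.card W)) = t := ZMod.intCast_surjective
  have hstep : ∀ t, θ (t + 1) = F (θ t) := by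
    intro t
    obtain ⟨n, rfl⟩ := hs t
    have : ((n : ZMod (Nat.card W)) + 1) = ((1 + n : ℤ) : ZMod (Nat.card W)) := by push_cast; ring
    rw [this, hθ, hθ, zpow_add]; simp
  have heven : ∀ n : ℤ, p ((F ^ (2 * n)) 1) = 1 := by
    have h2 : ∀ x, p ((F ^ (2 : ℤ)) x) = p x := by
      intro x
      have : (F ^ (2 : ℤ)) x = F (F x) := by
        rw [show (2 : ℤ) = 1 + 1 by norm_num, zpow_add]; simp
      rw [this, hpF, hpF, ← mul_assoc, h11, one_mul]
    intro n
    induction n using Int.induction_on with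
    | zero => simp
    | succ k ih =>
      rw [show (2 * ((k : ℤ) + 1)) = 2 + 2 * k by ring, zpow_add, Equiv.Perm.mul_apply, h2, ih]
    | pred k ih =>
      rw [show (2 * (-(k : ℤ))) = 2 + 2 * (-k - 1) by ring, zpow_add, Equiv.Perm.mul_apply, h2] at ih
      exact ih
  refine ⟨θ, ⟨?_, ?_⟩, ?_, ?_⟩
  · intro s t h
    obtain ⟨m, rfl⟩ := hs s
    obtain ⟨n, rfl⟩ := hs t
    rw [hθ, hθ, heq] at h
    exact h
  · intro y
    obtain ⟨n, rfl⟩ := hreach y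
    exact ⟨n, hθ n⟩
  · intro t
    obtain ⟨b, hb⟩ := hFlab (θ t)
    exact ⟨b, by rw [hstep, hb]; exact hN.lab b _ trivial⟩
  · intro t
    obtain ⟨n, rfl⟩ := hs t
    have e : (2 * (n : ZMod (Nat.card W))) = ((2 * n : ℤ) : ZMod (Nat.card W)) := by push_cast; ring
    rw [hstep, e, hθ, hF1 _ (heven n)]
    exact hN.lab true _ trivial

/-- off-diagonal coefficient -/
noncomputable def kap (m : ℕ) : ℝ :=
  if m = 2 then 0 else if m = 3 then 1 else if m = 4 then Real.sqrt 2 else Real.sqrt 3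

open Classical in
noncomputable def coef {B : Type*} (M : CoxeterMatrix B) (i j : B) : ℝ :=
  if i = j then 2 else - kap (M i j)

noncomputable def phi {B : Type*} [Fintype B] (M : CoxeterMatrix B) (i : B) : (B → ℝ) →ₗ[ℝ] ℝ :=
  ∑ j, coef M i j • LinearMap.proj j

open Classical in
noncomputable def refl {B : Type*} [Fintype B] (M : CoxeterMatrix B) (i : B) :
    Module.End ℝ (B → ℝ) :=
  LinearMap.id - (phi M i).smulRight (Pi.single i (1 : ℝ))

open Classical in
theorem refl_apply {B : Type*} [Fintype B] (M : CoxeterMatrix B) (i : B) (v : B → ℝ) :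
    refl M i v = v - phi M i v • Pi.single i (1 : ℝ) := by
  simp [refl]

open Classical in
theorem phi_single {B : Type*} [Fintype B] (M : CoxeterMatrix B) (i j : B) :
    phi M i (Pi.single j (1 : ℝ)) = coef M i j := by
  simp [phi, Pi.single_apply]

theorem coef_symm {B : Type*} (M : CoxeterMatrix B) (i j : B) : coef M i j = coef M j i := by
  rcases eq_or_ne i j with h | h
  · rw [h]
  · simp only [coef, h, h.symm, if_false, M.symmetric i j]

theorem coef_self {B : Type*} (M : CoxeterMatrix B) (i : B) : coef M i i = 2 := by simp [coef]

open Classical in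
theorem step {B : Type*} [Fintype B] (M : CoxeterMatrix B) (i j : B) (v : B → ℝ) (x y : ℝ) :
    (refl M i * refl M j) (v + x • Pi.single i (1 : ℝ) + y • Pi.single j (1 : ℝ)) =
      v + (coef M i j * (phi M j v + coef M i j * x + 2 * y)
          - phi M i v - x - coef M i j * y) • Pi.single i (1 : ℝ)
        + (- y - phi M j v - coef M i j * x) • Pi.single j (1 : ℝ) := by
  rw [Module.End.mul_apply, refl_apply, refl_apply]
  simp only [map_add, map_sub, map_smul, phi_single, coef_self, coef_symm M j i, smul_eq_mul]
  ext k
  simp only [Pi.add_apply, Pi.sub_apply, Pi.smul_apply, smul_eq_mul]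
  ring

theorem step0 {B : Type*} [Fintype B] (M : CoxeterMatrix B)
    (hcrys : ∀ i j : B, i ≠ j → M i j ∈ ({2, 3, 4, 6} : Set ℕ)) :
    M.IsLiftable (refl M) := by
  classical
  intro i j
  apply LinearMap.ext
  intro v
  by_cases hij : i = j
  · subst hij
    rw [M.diagonal, pow_one, Module.End.mul_apply, refl_apply, refl_apply]
    simp only [map_sub, map_smul, phi_single, coef_self, smul_eq_mul]
    ext k
    simp only [Pi.sub_apply, Pi.smul_apply, smul_eq_mul, Module.End.one_apply]
    ring
  have hv : v = v + (0 : ℝ) • Pi.single i (1 : ℝ) + (0 : ℝ) • Pi.single j (1 : ℝ) := by simp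
  have hc : coef M i j = - kap (M i j) := by simp [coef, hij]
  have fin : ∀ x y : ℝ, x = 0 → y = 0 →
      v + x • Pi.single i (1 : ℝ) + y • Pi.single j (1 : ℝ) = v := by
    rintro x y rfl rfl; simp
  have h := hcrys i j hij
  have hst := step M i j v
  simp only [Set.mem_insert_iff, Set.mem_singleton_iff] at h
  rw [Module.End.one_apply]
  conv_lhs => rw [hv]
  generalize phi M i v = p at hst
  generalize phi M j v = q at hst
  rcases h with h | h | h | h <;> rw [h] at hc ⊢
  · have hc2 : coef M i j = 0 := by rw [hc]; simp [kap]
    rw [hc2] at hst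
    simp only [pow_succ', pow_zero, mul_one]
    rw [Module.End.mul_apply (refl M i * refl M j)]
    simp only [hst]
    apply fin <;> ring
  · have hc2 : coef M i j = -1 := by rw [hc]; simp [kap]
    rw [hc2] at hst
    simp only [pow_succ', pow_zero, mul_one, Module.End.mul_apply (refl M i * refl M j)]
    simp only [hst]
    apply fin <;> ring
  · have hc2 : coef M i j ^ 2 = 2 := by rw [hc]; simp [kap]
    generalize coef M i j = c at hst hc2
    simp only [pow_succ', pow_zero, mul_one, Module.End.mul_apply (refl M i * refl M j)]
    simp only [hst]
    apply fin <;> grind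
  · have hc2 : coef M i j ^ 2 = 3 := by rw [hc]; simp [kap]
    generalize coef M i j = c at hst hc2
    simp only [pow_succ', pow_zero, mul_one, Module.End.mul_apply (refl M i * refl M j)]
    simp only [hst]
    apply fin <;> grind

theorem kap_nonneg (m : ℕ) : 0 ≤ kap m := by
  unfold kap
  split_ifs <;> first | exact le_rfl | exact zero_le_one | exact Real.sqrt_nonneg _

theorem one_le_kap (m : ℕ) (hm : 3 ≤ m) : 1 ≤ kap m := by
  unfold kap
  split_ifs
  · omega
  · exact le_rfl
  · exact Real.one_le_sqrt.2 (by norm_num)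
  · exact Real.one_le_sqrt.2 (by norm_num)

def adj {B : Type*} (M : CoxeterMatrix B) (i j : B) : Prop := i ≠ j ∧ 3 ≤ M i j

theorem adj_symm {B : Type*} (M : CoxeterMatrix B) (i j : B) : adj M i j ↔ adj M j i := by
  unfold adj
  rw [M.symmetric i j, ne_comm]

open Classical in
noncomputable def deg {B : Type*} (M : CoxeterMatrix B) (C : Finset B) (i : B) : ℕ :=
  ∑ j ∈ C, if adj M i j then 1 else 0

section
variable {B W : Type*} [Fintype B] [Group W] [Finite W] (M : CoxeterMatrix B)
  (cs : CoxeterSystem M W)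

theorem simple_inj (hcrys : ∀ i j : B, i ≠ j → M i j ∈ ({2, 3, 4, 6} : Set ℕ))
    (i j : B) (h : cs.simple i = cs.simple j) : i = j := by
  classical
  by_contra hij
  have hl := step0 M hcrys
  have h1 := cs.lift_apply_simple hl i
  have h2 := cs.lift_apply_simple hl j
  rw [h, h2] at h1
  have h3 := congrFun (LinearMap.congr_fun h1 (Pi.single i (1 : ℝ))) i
  rw [refl_apply, refl_apply, phi_single, phi_single, coef_self] at h3
  simp [Pi.single_apply, hij] at h3
  norm_num at h3

theorem leaf (hcrys : ∀ i j : B, i ≠ j → M i j ∈ ({2, 3, 4, 6} : Set ℕ))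
    (cs : CoxeterSystem M W) (C : Finset B) (hC : C.Nonempty) : ∃ i ∈ C, deg M C i ≤ 1 := by
  classical
  by_contra! hcon
  have := Fintype.ofFinite W
  have hl := step0 M hcrys
  let ρ : W →* Module.End ℝ (B → ℝ) := cs.lift ⟨refl M, hl⟩
  have hρ : ∀ i, ρ (cs.simple i) = refl M i := fun i => cs.lift_apply_simple hl i
  let q : (B → ℝ) → ((B → ℝ) →ₗ[ℝ] ℝ) := fun x =>
    ∑ w : W, ∑ b : B, (ρ w x b) • (LinearMap.proj b ∘ₗ ρ w)
  have hq : ∀ x y, q x y = ∑ w : W, ∑ b : B, ρ w x b * ρ w y b := by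
    intro x y; simp [q, LinearMap.sum_apply]
  have hsub : ∀ x y z (c : ℝ), q (x - c • y) z = q x z - c * q y z := by
    intro x y z c
    simp only [hq, map_sub, map_smul, Pi.sub_apply, Pi.smul_apply, smul_eq_mul, sub_mul,
      Finset.sum_sub_distrib, Finset.mul_sum, mul_assoc]
  have hinv : ∀ i x y, q (refl M i x) (refl M i y) = q x y := by
    intro i x y
    rw [hq, hq, ← hρ i]
    rw [← Equiv.sum_comp (Equiv.mulRight (cs.simple i)) (fun w => ∑ b : B, ρ w x b * ρ w y b)]
    simp only [Equiv.coe_mulRight, map_mul, Module.End.mul_apply]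
  have hnn : ∀ x, 0 ≤ q x x := by
    intro x; rw [hq]
    exact Finset.sum_nonneg fun w _ => Finset.sum_nonneg fun b _ => mul_self_nonneg _
  let e : B → (B → ℝ) := fun i => Pi.single i 1
  have hqe : ∀ i v, 2 * q v (e i) = phi M i v * q (e i) (e i) := by
    intro i v
    have h := hinv i v (e i)
    have he : refl M i (e i) = - e i := by
      simp only [e]
      rw [refl_apply, phi_single, coef_self]
      module
    rw [he, refl_apply, map_neg] at h
    have h2 : q (v - phi M i v • Pi.single i (1 : ℝ)) (e i) = q v (e i) - phi M i v * q (e i) (e i) :=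
      hsub _ _ _ _
    rw [h2] at h
    linarith
  let v : B → ℝ := ∑ i ∈ C, e i
  have hphi : ∀ i ∈ C, phi M i v ≤ 0 := by
    intro i hi
    have h1 : phi M i v = ∑ j ∈ C, coef M i j := by
      simp only [v, map_sum, e, phi_single]
    have h2 : ∀ j ∈ C, coef M i j ≤ (if j = i then 2 else 0) - (if adj M i j then 1 else 0 : ℕ) := by
      intro j _
      by_cases hij : i = j
      · simp [coef, adj, hij]
      · by_cases hm : 3 ≤ M i j
        · simpa [coef, adj, hij, hm, Ne.symm hij] using one_le_kap _ hm
        · simpa [coef, adj, hij, hm, Ne.symm hij] using kap_nonneg _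
    have h3 := Finset.sum_le_sum h2
    rw [Finset.sum_sub_distrib, Finset.sum_ite_eq' C i, if_pos hi, ← Nat.cast_sum] at h3
    have h4 : (2 : ℝ) ≤ (deg M C i : ℕ) := by exact_mod_cast hcon i hi
    unfold deg at h4
    rw [h1]
    linarith
  have hle : q v v ≤ 0 := by
    have : q v v = ∑ i ∈ C, q v (e i) := by
      conv_lhs => rw [show q v v = q v (∑ i ∈ C, e i) from rfl, map_sum]
    rw [this]
    apply Finset.sum_nonpos
    intro i hi
    have h1 := hqe i v
    have h2 := mul_nonpos_of_nonpos_of_nonneg (hphi i hi) (hnn (e i))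
    linarith
  obtain ⟨i, hi⟩ := hC
  have hvi : v i = 1 := by
    simp [v, e, Finset.sum_apply, Pi.single_apply, hi]
  have hpos : 0 < q v v := by
    rw [hq]
    apply Finset.sum_pos' (fun w _ => Finset.sum_nonneg fun b _ => mul_self_nonneg _)
    refine ⟨1, Finset.mem_univ _, ?_⟩
    apply Finset.sum_pos' (fun b _ => mul_self_nonneg _)
    refine ⟨i, Finset.mem_univ _, ?_⟩
    rw [map_one, Module.End.one_apply, hvi]; norm_num
  linarith

theorem deg_disjUnion_sum (C D : Finset B) :
    ∑ i ∈ C, deg M D i = ∑ j ∈ D, deg M C j := by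
  classical
  unfold deg
  rw [Finset.sum_comm]
  refine Finset.sum_congr rfl fun j _ => Finset.sum_congr rfl fun i _ => ?_
  simp only [adj_symm M i j]

theorem deg_sum (hcrys : ∀ i j : B, i ≠ j → M i j ∈ ({2, 3, 4, 6} : Set ℕ))
    (cs : CoxeterSystem M W) (n : ℕ) : ∀ C : Finset B, C.card = n + 1 →
    ∑ i ∈ C, deg M C i + 2 ≤ 2 * (n + 1) := by
  classical
  induction n with
  | zero =>
    intro C hC
    obtain ⟨a, rfl⟩ := Finset.card_eq_one.1 hC
    simp [deg, adj]
  | succ n ih =>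
    intro C hC
    obtain ⟨i, hi, hd⟩ := leaf M hcrys cs C (Finset.card_pos.1 (by omega))
    have hc : (C.erase i).card = n + 1 := by rw [Finset.card_erase_of_mem hi, hC]; rfl
    have h1 := ih _ hc
    have hdeg : ∀ k, deg M C k = deg M {i} k + deg M (C.erase i) k := by
      intro k
      unfold deg
      rw [Finset.sum_singleton]
      exact (Finset.add_sum_erase C (fun j => if adj M k j then 1 else 0) hi).symm
    have h2 : ∑ k ∈ C, deg M C k = deg M C i + ∑ k ∈ C.erase i, deg M C k :=
      (Finset.add_sum_erase C (fun k => deg M C k) hi).symm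
    have h3 : ∑ k ∈ C.erase i, deg M C k =
        ∑ k ∈ C.erase i, deg M {i} k + ∑ k ∈ C.erase i, deg M (C.erase i) k := by
      rw [← Finset.sum_add_distrib]
      exact Finset.sum_congr rfl fun k _ => hdeg k
    rw [deg_disjUnion_sum M (C.erase i) {i}, Finset.sum_singleton] at h3
    have h4 := hdeg i
    omega

open Classical in
theorem peel (hcrys : ∀ i j : B, i ≠ j → M i j ∈ ({2, 3, 4, 6} : Set ℕ))
    (cs : CoxeterSystem M W) (i₁ i₂ i₃ : B) (h12 : i₁ ≠ i₂) (h23 : i₂ ≠ i₃) (h13 : i₁ ≠ i₃)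
    (hm12 : 3 ≤ M i₁ i₂) (hm23 : 3 ≤ M i₂ i₃) (C : Finset B)
    (hsub : {i₁, i₂, i₃} ⊆ C) (hne : {i₁, i₂, i₃} ≠ C) :
    ∃ j ∈ C, j ∉ ({i₁, i₂, i₃} : Finset B) ∧ deg M C j ≤ 1 := by
  by_contra! hcon
  set T : Finset B := {i₁, i₂, i₃} with hT
  set D := C \ T with hD
  have hTc : T.card = 3 := by
    rw [hT]; exact Finset.card_eq_three.2 ⟨_, _, _, h12, h13, h23, rfl⟩
  have hDn : D.Nonempty := by
    rw [Finset.nonempty_iff_ne_empty]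
    intro h
    exact hne (Finset.Subset.antisymm hsub (Finset.sdiff_eq_empty_iff_subset.1 h))
  have hcard : D.card + 3 = C.card := by
    rw [← hTc]; exact Finset.card_sdiff_add_card_eq_card hsub
  have hdeg : ∀ k, deg M C k = deg M D k + deg M T k := by
    intro k; unfold deg; exact (Finset.sum_sdiff hsub).symm
  have hs : ∑ k ∈ C, deg M C k = ∑ k ∈ D, deg M C k + ∑ k ∈ T, deg M C k :=
    (Finset.sum_sdiff hsub).symm
  have hs2 : ∑ k ∈ T, deg M C k = ∑ k ∈ T, deg M D k + ∑ k ∈ T, deg M T k := by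
    rw [← Finset.sum_add_distrib]
    exact Finset.sum_congr rfl fun k _ => hdeg k
  rw [deg_disjUnion_sum M T D] at hs2
  have hD2 : 2 * D.card ≤ ∑ k ∈ D, deg M C k := by
    rw [mul_comm, ← smul_eq_mul]
    apply Finset.card_nsmul_le_sum
    intro k hk
    rw [hD, Finset.mem_sdiff] at hk
    exact hcon k hk.1 hk.2
  have hDT : 1 ≤ ∑ k ∈ D, deg M T k := by
    obtain ⟨j, hj, hjd⟩ := leaf M hcrys cs D hDn
    have hj' := hj
    rw [hD, Finset.mem_sdiff] at hj'
    have h1 := hcon j hj'.1 hj'.2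
    have h2 := hdeg j
    have h3 := Finset.single_le_sum (f := fun k => deg M T k) (fun _ _ => Nat.zero_le _) hj
    omega
  have hTT : 4 ≤ ∑ k ∈ T, deg M T k := by
    have a12 : adj M i₁ i₂ := ⟨h12, hm12⟩
    have a23 : adj M i₂ i₃ := ⟨h23, hm23⟩
    have a21 := (adj_symm M _ _).1 a12
    have a32 := (adj_symm M _ _).1 a23
    have hsum : ∀ f : B → ℕ, ∑ k ∈ T, f k = f i₁ + (f i₂ + f i₃) := by
      intro f
      rw [hT, Finset.sum_insert (by simp [h12, h13]), Finset.sum_insert (by simp [h23]),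
        Finset.sum_singleton]
    have e : ∀ k, deg M T k = (if adj M k i₁ then 1 else 0) + ((if adj M k i₂ then 1 else 0) +
        (if adj M k i₃ then 1 else 0)) := fun k => hsum _
    rw [hsum, e, e, e, if_pos a12, if_pos a21, if_pos a23, if_pos a32]
    omega
  have hfin := deg_sum M hcrys cs (D.card + 2) C (by omega)
  omega

end

theorem HC.mono {W : Type*} [Group W] {U : Set W} {L L' : Bool → Set W} {N : Bool → W → W}
    (h : HC U L N) (hL : ∀ b, L b ⊆ L' b) : HC U L' N :=
  ⟨h.maps, h.inv, fun b x hx => hL b (h.lab b x hx), h.conn⟩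

theorem simple_ne_one {B W : Type*} [Group W] (M : CoxeterMatrix B)
    (cs : CoxeterSystem M W) (i : B) : cs.simple i ≠ 1 := by
  intro h
  have := cs.lengthParity_simple i
  rw [h, map_one] at this
  exact absurd this (by decide)

open Classical in
theorem main_ind {B W : Type*} [Fintype B] [Group W] [Finite W]
    (M : CoxeterMatrix B) (cs : CoxeterSystem M W)
    (hcrys : ∀ i j : B, i ≠ j → M i j ∈ ({2, 3, 4, 6} : Set ℕ))
    (i₁ i₂ i₃ : B) (h12 : i₁ ≠ i₂) (h23 : i₂ ≠ i₃) (h13 : i₁ ≠ i₃)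
    (hm12 : 3 ≤ M i₁ i₂) (hm23 : 3 ≤ M i₂ i₃) (hm13 : M i₁ i₃ = 2) (n : ℕ) :
    ∀ C : Finset B, C.card = n → {i₁, i₂, i₃} ⊆ C →
    ∃ N, HC (Subgroup.closure (cs.simple '' (C : Set B)) : Set W)
      (fun b => if b then cs.simple '' {k | k ∈ C ∧ k ≠ i₁ ∧ k ≠ i₃}
        else cs.simple '' (C : Set B)) N := by
  have hcommute : ∀ i j, M i j = 2 → cs.simple i * cs.simple j = cs.simple j * cs.simple i := by
    intro i j h
    have h1 := cs.simple_mul_simple_pow i j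
    rw [h, pow_two] at h1
    have h2 := eq_inv_of_mul_eq_one_left h1
    rw [mul_inv_rev, cs.inv_simple, cs.inv_simple] at h2
    exact h2
  induction n with
  | zero =>
    intro C hC hs
    rw [Finset.card_eq_zero.1 hC] at hs
    simp at hs
  | succ n ih =>
    intro C hC hs
    by_cases hne : {i₁, i₂, i₃} = C
    · obtain ⟨N, hN⟩ := base (cs.simple i₁) (cs.simple i₂) (cs.simple i₃)
        (cs.simple_mul_simple_self _) (cs.simple_mul_simple_self _) (cs.simple_mul_simple_self _)
        (simple_ne_one M cs _) (simple_ne_one M cs _) (simple_ne_one M cs _)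
        (hcommute _ _ hm13)
      have e : cs.simple '' (C : Set B) = {cs.simple i₁, cs.simple i₂, cs.simple i₃} := by
        rw [← hne]; simp [Set.image_insert_eq]
      rw [e]
      refine ⟨N, hN.mono ?_⟩
      rintro (_ | _)
      · rintro x (rfl | rfl) <;> simp
      · rintro x rfl
        simp only [if_true]
        exact ⟨i₂, ⟨by rw [← hne]; simp, h12.symm, h23⟩, rfl⟩
    · obtain ⟨j, hj, hjT, hdj⟩ := peel M hcrys cs i₁ i₂ i₃ h12 h23 h13 hm12 hm23 C hs hne
      have hsub : {i₁, i₂, i₃} ⊆ C.erase j := Finset.subset_erase.2 ⟨hs, hjT⟩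
      obtain ⟨N0, hN0⟩ := ih (C.erase j) (by rw [Finset.card_erase_of_mem hj, hC]; rfl) hsub
      obtain ⟨a0, ha0⟩ : ∃ a0 : B, ∀ k ∈ C.erase j, k ≠ a0 → M k j = 2 := by
        have hM2 : ∀ k ∈ C.erase j, ¬ adj M j k → M k j = 2 := by
          intro k hk hn
          have hkj := Finset.ne_of_mem_erase hk
          have := hcrys k j hkj
          simp only [Set.mem_insert_iff, Set.mem_singleton_iff] at this
          have h3 : ¬ 3 ≤ M k j := fun h => hn ⟨hkj.symm, by rw [M.symmetric]; exact h⟩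
          omega
        by_cases hex : ∃ k ∈ C.erase j, adj M j k
        · obtain ⟨k, hk, hka⟩ := hex
          refine ⟨k, fun l hl hlk => hM2 l hl fun hla => ?_⟩
          have hpair : ({k, l} : Finset B) ⊆ C := by
            intro z hz
            simp only [Finset.mem_insert, Finset.mem_singleton] at hz
            rcases hz with rfl | rfl
            · exact Finset.mem_of_mem_erase hk
            · exact Finset.mem_of_mem_erase hl
          have := Finset.sum_le_sum_of_subset (f := fun z => if adj M j z then 1 else 0) hpair
          rw [Finset.sum_pair hlk.symm, if_pos hka, if_pos hla] at this
          unfold deg at hdj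
          omega
        · exact ⟨j, fun k hk _ => hM2 k hk fun h => hex ⟨k, hk, h⟩⟩
      have himg : cs.simple '' (C : Set B) =
          insert (cs.simple j) (cs.simple '' ((C.erase j : Finset B) : Set B)) := by
        rw [← Set.image_insert_eq, ← Finset.coe_insert, Finset.insert_erase hj]
      obtain ⟨N, hN⟩ := ext_step (cs.simple '' ((C.erase j : Finset B) : Set B)) (cs.simple j)
        (cs.simple a0)
        (by rintro _ ⟨k, -, rfl⟩; exact cs.simple_mul_simple_self k)
        (by rintro ⟨k, -, h⟩; exact simple_ne_one M cs k h)
        (cs.simple_mul_simple_self j) (simple_ne_one M cs j)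
        (by
          rintro _ ⟨k, hk, rfl⟩ hka
          exact hcommute k j (ha0 k hk (fun h => hka (by rw [h]))))
        ⟨cs.simple i₁, ⟨i₁, hsub (by simp), rfl⟩, cs.simple i₂, ⟨i₂, hsub (by simp), rfl⟩,
          fun h => h12 (simple_inj M cs hcrys _ _ h)⟩
        _ (by
          rintro (_ | _)
          · exact subset_rfl
          · simp only [if_true]
            apply Set.image_mono
            rintro k ⟨hk, -⟩
            exact hk) N0 hN0
      rw [himg]
      refine ⟨N, hN.mono ?_⟩
      simp only [Finset.mem_insert, Finset.mem_singleton, not_or] at hjT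
      rintro (_ | _)
      · exact subset_rfl
      · simp only [if_true]
        rintro x (rfl | ⟨k, ⟨hk, hk'⟩, rfl⟩)
        · exact ⟨j, ⟨hj, hjT.1, hjT.2.2⟩, rfl⟩
        · exact ⟨k, ⟨Finset.mem_of_mem_erase hk, hk'⟩, rfl⟩

end HamCox


/-- Lemma 3.12 of the paper (Coxeter group version): let `(W, S)` be a finite Coxeter
system over `B` with `|B| ≥ 3` and crystallographic Coxeter matrix (off-diagonal
entries in `{2, 3, 4, 6}`).  If `i₁, i₂, i₃` are pairwise distinct with
`M i₁ i₂ ≥ 3`, `M i₂ i₃ ≥ 3` and `M i₁ i₃ = 2`, then there is a Hamiltonian circuit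
map `θ` such that every second edge label avoids `s_{i₁}` and `s_{i₃}`; in
particular, if `|B| = 3`, then `θ` is `i₂`-convenient. -/
theorem exists_hamiltonianCircuitMap_avoiding_every_second_edge
    {B W : Type*} [Fintype B] [Group W] [Finite W]
    (M : CoxeterMatrix B) (cs : CoxeterSystem M W)
    (hB : 3 ≤ Fintype.card B)
    (hcrys : ∀ i j : B, i ≠ j → M i j ∈ ({2, 3, 4, 6} : Set ℕ))
    (i₁ i₂ i₃ : B) (h12 : i₁ ≠ i₂) (h23 : i₂ ≠ i₃) (h13 : i₁ ≠ i₃)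
    (hm12 : 3 ≤ M i₁ i₂) (hm23 : 3 ≤ M i₂ i₃) (hm13 : M i₁ i₃ = 2) :
    ∃ θ : ZMod (Nat.card W) → W, Function.Bijective θ ∧
      (∀ t, θ (t + 1) * (θ t)⁻¹ ∈ Set.range cs.simple) ∧
      (∀ t : ZMod (Nat.card W),
        θ (2 * t + 1) * (θ (2 * t))⁻¹ ∉ ({cs.simple i₁, cs.simple i₃} : Set W)) ∧
      (Fintype.card B = 3 →
        ∀ t : ZMod (Nat.card W), θ (2 * t + 1) = cs.simple i₂ * θ (2 * t)) := by
  classical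
  obtain ⟨N, hN⟩ := HamCox.main_ind M cs hcrys i₁ i₂ i₃ h12 h23 h13 hm12 hm23 hm13 _
    Finset.univ rfl (Finset.subset_univ _)
  rw [Finset.coe_univ, Set.image_univ, cs.subgroup_closure_range_simple, Subgroup.coe_top] at hN
  obtain ⟨θ, hb, h1, h2⟩ := HamCox.to_theta cs.lengthParity _ N hN (by
    rintro (_ | _)
    · rintro _ ⟨k, -, rfl⟩; exact cs.lengthParity_simple k
    · rintro _ ⟨k, -, rfl⟩; exact cs.lengthParity_simple k)
  refine ⟨θ, hb, ?_, ?_, ?_⟩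
  · intro t
    obtain ⟨b, hb⟩ := h1 t
    cases b
    · rw [if_neg Bool.false_ne_true] at hb; exact hb
    · obtain ⟨k, -, hk⟩ := hb; exact ⟨k, hk⟩
  · intro t hmem
    obtain ⟨k, ⟨-, hk1, hk3⟩, hk⟩ := h2 t
    rw [← hk] at hmem
    rcases hmem with h | h
    · exact hk1 (HamCox.simple_inj M cs hcrys _ _ h)
    · exact hk3 (HamCox.simple_inj M cs hcrys _ _ h)
  · intro h3 t
    obtain ⟨k, ⟨-, hk1, hk3⟩, hk⟩ := h2 t
    have hu : ({i₁, i₂, i₃} : Finset B) = Finset.univ := by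
      apply Finset.eq_univ_of_card
      rw [h3]
      exact Finset.card_eq_three.2 ⟨_, _, _, h12, h13, h23, rfl⟩
    have hk2 : k = i₂ := by
      have := Finset.mem_univ k
      rw [← hu] at this
      simp only [Finset.mem_insert, Finset.mem_singleton] at this
      tauto
    rw [hk2] at hk
    rw [hk]; simp
end

section
/- Let (W, S) be the Coxeter system of type A₂ × A₁ over B = {1, 2, 3}, i.e. with Coxeter matrix M 1 2 = 3, M 1 3 = 2, M 2 3 = 2 (so W ≅ S₃ × ℤ/2ℤ has order 12). Then there exists a bijection θ : ℤ/12ℤ → W such that θ(t+1)·θ(t)⁻¹ ∈ {s₁, s₂, s₃} for all t, and which is moreover 1-convenient and special: θ(2t+1) = s₁ · θ(2t) for every t ∈ ℤ, and each of s₁, s₂, s₃ equals θ(t+1)·θ(t)⁻¹ for some t. -/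
/-- The explicit circuit, written in normal forms. -/
def circuitWord {W : Type*} [Group W] (a b c : W) : Fin 12 → W :=
  ![1, a, b * a, a * (b * a), a * b, b, c * b, c * (a * b), c * (a * (b * a)), c * (b * a),
    c * a, c]

/-- The letters of the circuit: the ratio of positions `t + 1` and `t`. -/
def circuitLetter : Fin 12 → Fin 3 := ![0, 1, 0, 1, 0, 2, 0, 1, 0, 1, 0, 2]

/-- Left multiplication by a generator, on positions. -/
def circuitMove : Fin 3 → Fin 12 → Fin 12 :=
  ![![1, 0, 3, 2, 5, 4, 7, 6, 9, 8, 11, 10],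
    ![5, 2, 1, 4, 3, 0, 11, 8, 7, 10, 9, 6],
    ![11, 10, 9, 8, 7, 6, 5, 4, 3, 2, 1, 0]]

theorem circuit_mul {W : Type*} [Group W] (a b c : W) (ha : a * a = 1) (hb : b * b = 1)
    (hc : c * c = 1) (hab : b * (a * b) = a * (b * a)) (hac : a * c = c * a)
    (hbc : b * c = c * b) (i : Fin 3) (t : Fin 12) :
    (![a, b, c] i) * circuitWord a b c t = circuitWord a b c (circuitMove i t) := by
  have ha' : ∀ x, a * (a * x) = x := fun x => by rw [← mul_assoc, ha, one_mul]
  have hb' : ∀ x, b * (b * x) = x := fun x => by rw [← mul_assoc, hb, one_mul]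
  have hc' : ∀ x, c * (c * x) = x := fun x => by rw [← mul_assoc, hc, one_mul]
  have hac' : ∀ x, a * (c * x) = c * (a * x) := fun x => by
    rw [← mul_assoc, hac, mul_assoc]
  have hbc' : ∀ x, b * (c * x) = c * (b * x) := fun x => by
    rw [← mul_assoc, hbc, mul_assoc]
  have hab' : b * (a * (b * a)) = a * b := by
    rw [← hab, hb']
  fin_cases i <;> fin_cases t <;>
    simp [circuitWord, circuitMove, ha, hb, hc, hab, hac, hbc, ha', hb', hc', hac', hbc', hab']

theorem circuit_next (t : Fin 12) : circuitMove (circuitLetter t) t = t + 1 := by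
  revert t; decide

/-- Images of the generators in `S₃ × S₂ ⊆ S₅`. -/
def circuitPerm : Fin 3 → Equiv.Perm (Fin 5) :=
  ![Equiv.swap 0 1, Equiv.swap 1 2, Equiv.swap 3 4]

theorem circuitPerm_injective :
    Function.Injective (circuitWord (circuitPerm 0) (circuitPerm 1) (circuitPerm 2)) := by
  have h : ∀ s t : Fin 12, (∀ x, circuitWord (circuitPerm 0) (circuitPerm 1) (circuitPerm 2) s x =
      circuitWord (circuitPerm 0) (circuitPerm 1) (circuitPerm 2) t x) → s = t := by
    decide +kernel
  intro s t hst
  exact h s t fun x => by rw [hst]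

/-- For the Coxeter system of type `A₂ × A₁` (Coxeter matrix `M 1 2 = 3`,
`M 1 3 = 2`, `M 2 3 = 2`, so `W ≅ S₃ × ℤ/2ℤ` has order 12), there is a Hamiltonian
circuit map `θ : ℤ/12ℤ → W` that is `1`-convenient (`θ(2t+1) = s₁ · θ(2t)` for all
`t`) and special (every simple reflection occurs as a consecutive ratio). -/
theorem A2xA1_exists_special_one_convenient_hamiltonianCircuitMap
    {W : Type*} [Group W]
    (M : CoxeterMatrix (Fin 3)) (cs : CoxeterSystem M W)
    (h12 : M 0 1 = 3) (h13 : M 0 2 = 2) (h23 : M 1 2 = 2) :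
    ∃ θ : ZMod 12 → W, Function.Bijective θ ∧
      (∀ t, θ (t + 1) * (θ t)⁻¹ ∈
        ({cs.simple 0, cs.simple 1, cs.simple 2} : Set W)) ∧
      (∀ t : ZMod 12, θ (2 * t + 1) = cs.simple 0 * θ (2 * t)) ∧
      (∀ i : Fin 3, ∃ t, θ (t + 1) * (θ t)⁻¹ = cs.simple i) := by
  have hs : ∀ i, cs.simple i * cs.simple i = 1 := fun i => cs.simple_mul_simple_self i
  have hi : ∀ i, (cs.simple i)⁻¹ = cs.simple i := fun i => cs.inv_simple i
  have comm : ∀ i j, M i j = 2 → cs.simple i * cs.simple j = cs.simple j * cs.simple i := by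
    intro i j h
    have := cs.simple_mul_simple_pow i j
    rw [h, pow_two] at this
    have := eq_inv_of_mul_eq_one_left this
    rwa [mul_inv_rev, hi, hi] at this
  have hab : cs.simple 1 * (cs.simple 0 * cs.simple 1) =
      cs.simple 0 * (cs.simple 1 * cs.simple 0) := by
    have := cs.simple_mul_simple_pow 0 1
    rw [h12, pow_succ, pow_two] at this
    have h2 : (cs.simple 0 * (cs.simple 1 * cs.simple 0)) *
        (cs.simple 1 * (cs.simple 0 * cs.simple 1)) = 1 := by
      simpa only [mul_assoc] using this
    have h3 := eq_inv_of_mul_eq_one_left h2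
    rw [h3]
    simp only [mul_inv_rev, hi, mul_assoc]
  have hmul := circuit_mul (cs.simple 0) (cs.simple 1) (cs.simple 2) (hs 0) (hs 1) (hs 2) hab
    (comm 0 2 h13) (comm 1 2 h23)
  have hv : ∀ i, ![cs.simple 0, cs.simple 1, cs.simple 2] i = cs.simple i := by
    intro i; fin_cases i <;> rfl
  simp only [hv] at hmul
  set θ : Fin 12 → W := circuitWord (cs.simple 0) (cs.simple 1) (cs.simple 2) with hθ
  have hnext : ∀ t : Fin 12, θ (t + 1) = cs.simple (circuitLetter t) * θ t := by
    intro t; rw [hmul, circuit_next]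
  have hrat : ∀ t : Fin 12, θ (t + 1) * (θ t)⁻¹ = cs.simple (circuitLetter t) := by
    intro t; rw [hnext, mul_inv_cancel_right]
  have hlift : M.IsLiftable circuitPerm := by
    have h21 : M 1 0 = 3 := by rw [M.symmetric, h12]
    have h31 : M 2 0 = 2 := by rw [M.symmetric, h13]
    have h32 : M 2 1 = 2 := by rw [M.symmetric, h23]
    intro i j
    fin_cases i <;> fin_cases j <;>
      simp only [Fin.zero_eta, Fin.mk_one, Fin.reduceFinMk, h12, h13, h23, h21, h31, h32,
        M.diagonal] <;> decide +kernel
  have hinj : Function.Injective θ := by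
    intro s t hst
    apply circuitPerm_injective
    have key : ∀ t, cs.lift ⟨circuitPerm, hlift⟩ (θ t) =
        circuitWord (circuitPerm 0) (circuitPerm 1) (circuitPerm 2) t := by
      intro t
      fin_cases t <;> simp [hθ, circuitWord, cs.lift_apply_simple hlift]
    rw [← key, ← key, hst]
  have hsurj : Function.Surjective θ := by
    intro w
    induction w using cs.simple_induction_left with
    | one => exact ⟨0, rfl⟩
    | mul_simple_left w i ih =>
      obtain ⟨t, rfl⟩ := ih
      exact ⟨_, (hmul i t).symm⟩
  refine ⟨θ, ⟨hinj, hsurj⟩, fun t => ?_, fun t => ?_, fun i => ?_⟩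
  · have h := hrat t
    have hm : ∀ i : Fin 3, cs.simple i ∈
        ({cs.simple 0, cs.simple 1, cs.simple 2} : Set W) := by
      intro i; fin_cases i <;> simp
    exact h ▸ hm (circuitLetter t)
  · have h := hnext ((2 : Fin 12) * (show Fin 12 from t))
    have hl : ∀ t : Fin 12, circuitLetter (2 * t) = 0 := by decide
    rw [hl] at h
    exact h
  · have hex : ∀ i, ∃ t, circuitLetter t = i := by decide
    obtain ⟨t, ht⟩ := hex i
    exact ⟨t, ht ▸ hrat t⟩
end

section
/- For every n ≥ 2 there exists a bijection θ : ℤ/n!ℤ → Sym(n) (the symmetric group on n letters, of order n!) such that for every t ∈ ℤ/n!ℤ the permutation θ(t+1) ∘ θ(t)⁻¹ is an adjacent transposition (i, i+1) for some 1 ≤ i ≤ n − 1. In other words, the Cayley graph of the symmetric group with respect to the adjacent transpositions admits a Hamilton circuit. -/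
/-- Insert a new letter `0` at position `p` into the arrangement `τ`. -/
def sjtIns {n : ℕ} (p : Fin (n + 1)) (τ : Equiv.Perm (Fin n)) : Equiv.Perm (Fin (n + 1)) :=
  (finSuccEquiv n).trans ((Equiv.optionCongr τ).trans (finSuccEquiv' p).symm)

lemma sjtIns_zero {n : ℕ} (p : Fin (n + 1)) (τ : Equiv.Perm (Fin n)) : sjtIns p τ 0 = p := by
  simp [sjtIns]

lemma sjtIns_succ {n : ℕ} (p : Fin (n + 1)) (τ : Equiv.Perm (Fin n)) (i : Fin n) :
    sjtIns p τ i.succ = p.succAbove (τ i) := by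
  simp [sjtIns]

lemma sjtIns_surj {n : ℕ} (σ : Equiv.Perm (Fin (n + 1))) : ∃ p τ, sjtIns p τ = σ := by
  have hb : Function.Bijective
      (fun x : Fin (n + 1) × Equiv.Perm (Fin n) => sjtIns x.1 x.2) := by
    rw [Fintype.bijective_iff_injective_and_card]
    constructor
    · rintro ⟨p, τ⟩ ⟨q, ρ⟩ h
      simp only at h
      have h0 : p = q := by
        rw [← sjtIns_zero p τ, h, sjtIns_zero]
      subst h0
      have : τ = ρ := by
        ext i
        have := congrArg (fun e => e i.succ) h
        simp only [sjtIns_succ] at this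
        rw [Fin.succAbove_right_injective this]
      rw [this]
    · simp [Fintype.card_perm, Nat.factorial_succ]
  obtain ⟨⟨p, τ⟩, h⟩ := hb.2 σ
  exact ⟨p, τ, h⟩

/-- Being related by an adjacent transposition on the left. -/
def sjtStep {n : ℕ} (σ σ' : Equiv.Perm (Fin n)) : Prop :=
  ∃ i j : Fin n, (j : ℕ) = (i : ℕ) + 1 ∧ σ' = Equiv.swap i j * σ

lemma sjtStep_symm {n : ℕ} {σ σ' : Equiv.Perm (Fin n)} (h : sjtStep σ σ') : sjtStep σ' σ := by
  obtain ⟨i, j, hij, rfl⟩ := h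
  exact ⟨i, j, hij, by rw [← mul_assoc, Equiv.swap_mul_self, one_mul]⟩

lemma sjtStep_pos {n : ℕ} (p q : Fin (n + 1)) (h : (q : ℕ) = p + 1) (τ : Equiv.Perm (Fin n)) :
    sjtStep (sjtIns p τ) (sjtIns q τ) := by
  refine ⟨p, q, h, ?_⟩
  ext x
  refine Fin.cases ?_ (fun i => ?_) x
  · simp [sjtIns_zero]
  · rw [Equiv.Perm.mul_apply, sjtIns_succ, sjtIns_succ]
    generalize τ i = y
    simp only [Equiv.swap_apply_def, Fin.succAbove, Fin.lt_def, Fin.ext_iff]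
    split_ifs <;> simp_all <;> omega

lemma sjtStep_bot {n : ℕ} {τ τ' : Equiv.Perm (Fin n)} (h : sjtStep τ τ') :
    sjtStep (sjtIns 0 τ) (sjtIns 0 τ') := by
  obtain ⟨i, j, hij, rfl⟩ := h
  refine ⟨i.succ, j.succ, by simp [hij], ?_⟩
  ext x
  refine Fin.cases ?_ (fun k => ?_) x
  · rw [Equiv.Perm.mul_apply, sjtIns_zero, sjtIns_zero, Equiv.swap_apply_of_ne_of_ne]
    · exact (Fin.succ_ne_zero _).symm
    · exact (Fin.succ_ne_zero _).symm
  · rw [Equiv.Perm.mul_apply, sjtIns_succ, sjtIns_succ, Equiv.Perm.mul_apply]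
    simp only [Fin.succAbove_zero]
    rw [(Fin.succ_injective n).swap_apply]

lemma sjtStep_top {n : ℕ} {τ τ' : Equiv.Perm (Fin n)} (h : sjtStep τ τ') :
    sjtStep (sjtIns (Fin.last n) τ) (sjtIns (Fin.last n) τ') := by
  obtain ⟨i, j, hij, rfl⟩ := h
  refine ⟨i.castSucc, j.castSucc, by simp [hij], ?_⟩
  ext x
  refine Fin.cases ?_ (fun k => ?_) x
  · rw [Equiv.Perm.mul_apply, sjtIns_zero, sjtIns_zero, Equiv.swap_apply_of_ne_of_ne]
    · exact (Fin.castSucc_lt_last _).ne'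
    · exact (Fin.castSucc_lt_last _).ne'
  · rw [Equiv.Perm.mul_apply, sjtIns_succ, sjtIns_succ, Equiv.Perm.mul_apply]
    simp only [Fin.succAbove_last]
    rw [(Fin.castSucc_injective n).swap_apply]

/-- Position of the moving letter: block `k`, offset `r`. -/
def sjtPos (n k r : ℕ) : Fin (n + 1) :=
  if Even k then Fin.ofNat (n + 1) r else Fin.ofNat (n + 1) (n - r)

lemma sjt_exists (n : ℕ) (hn : 2 ≤ n) : ∃ f : ℕ → Equiv.Perm (Fin n),
    (∀ t, f (t + n.factorial) = f t) ∧ Function.Surjective f ∧ ∀ t, sjtStep (f t) (f (t + 1)) := by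
  induction n, hn using Nat.le_induction with
  | base =>
    refine ⟨fun t => (Equiv.swap 0 1) ^ t, ?_, ?_, ?_⟩
    · intro t
      have : (Equiv.swap (0 : Fin 2) 1) ^ 2 = 1 := by decide
      simp [pow_add, Nat.factorial, this]
    · intro σ
      have : ∀ σ : Equiv.Perm (Fin 2), σ = (Equiv.swap 0 1) ^ 0 ∨ σ = (Equiv.swap 0 1) ^ 1 := by
        decide
      rcases this σ with h | h
      · exact ⟨0, h.symm⟩
      · exact ⟨1, h.symm⟩
    · intro t
      exact ⟨0, 1, rfl, pow_succ' _ _⟩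
  | succ n hn ih =>
    obtain ⟨f, hper, hsurj, hstep⟩ := ih
    have hev : Even n.factorial := even_iff_two_dvd.2 (Nat.dvd_factorial (by norm_num) hn)
    let g : ℕ → ℕ → Equiv.Perm (Fin (n + 1)) := fun k r => sjtIns (sjtPos n k r) (f k)
    refine ⟨fun t => g (t / (n + 1)) (t % (n + 1)), ?_, ?_, ?_⟩
    · intro t
      simp only [g, Nat.factorial_succ]
      rw [Nat.add_mul_div_left _ _ (Nat.succ_pos n), Nat.add_mul_mod_self_left, hper]
      congr 1
      simp [sjtPos, Nat.even_add, hev]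
    · intro σ
      obtain ⟨p, τ, rfl⟩ := sjtIns_surj σ
      obtain ⟨k, rfl⟩ := hsurj τ
      have key : ∃ r, r < n + 1 ∧ sjtPos n k r = p := by
        by_cases hk : Even k
        · exact ⟨p, p.2, by simp [sjtPos, hk]⟩
        · refine ⟨n - p, by omega, ?_⟩
          have : n - (n - (p : ℕ)) = p := by omega
          simp [sjtPos, hk, this]
      obtain ⟨r, hr, rfl⟩ := key
      refine ⟨r + (n + 1) * k, ?_⟩
      simp only [g]
      rw [Nat.add_mul_div_left _ _ (Nat.succ_pos n), Nat.add_mul_mod_self_left,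
        Nat.div_eq_of_lt hr, Nat.mod_eq_of_lt hr, zero_add]
    · have hd : ∀ k r, r < n + 1 →
          g ((r + (n + 1) * k) / (n + 1)) ((r + (n + 1) * k) % (n + 1)) = g k r := by
        intro k r hr
        rw [Nat.add_mul_div_left _ _ (Nat.succ_pos n), Nat.add_mul_mod_self_left,
          Nat.div_eq_of_lt hr, Nat.mod_eq_of_lt hr, zero_add]
      intro t
      have hr : t % (n + 1) < n + 1 := Nat.mod_lt _ (Nat.succ_pos n)
      have ht := Nat.mod_add_div t (n + 1)
      generalize t % (n + 1) = r at *
      generalize t / (n + 1) = k at *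
      subst ht
      by_cases hrn : r = n
      · subst hrn
        have e : r + (r + 1) * k + 1 = 0 + (r + 1) * (k + 1) := by ring
        simp only [e]
        rw [hd _ _ hr, hd _ _ (Nat.succ_pos r)]
        simp only [g]
        by_cases hk : Even k
        · have h1 : sjtPos r k r = Fin.last r := by simp [sjtPos, hk, Fin.ext_iff]
          have h2 : sjtPos r (k + 1) 0 = Fin.last r := by
            simp [sjtPos, hk, Fin.ext_iff, Nat.even_add_one]
          rw [h1, h2]
          exact sjtStep_top (hstep k)
        · have h1 : sjtPos r k r = 0 := by simp [sjtPos, hk, Fin.ext_iff]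
          have h2 : sjtPos r (k + 1) 0 = 0 := by
            simp [sjtPos, hk, Fin.ext_iff, Nat.even_add_one]
          rw [h1, h2]
          exact sjtStep_bot (hstep k)
      · have hr' : r + 1 < n + 1 := by omega
        have e : r + (n + 1) * k + 1 = (r + 1) + (n + 1) * k := by ring
        simp only [e]
        rw [hd _ _ hr, hd _ _ hr']
        simp only [g]
        by_cases hk : Even k
        · apply sjtStep_pos
          simp only [sjtPos, hk, if_true, Fin.val_ofNat]
          rw [Nat.mod_eq_of_lt hr, Nat.mod_eq_of_lt hr']
        · apply sjtStep_symm
          apply sjtStep_pos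
          simp only [sjtPos, hk, if_false, Fin.val_ofNat]
          rw [Nat.mod_eq_of_lt (by omega), Nat.mod_eq_of_lt (by omega)]
          omega

/-- The Cayley graph of the symmetric group `Sym(n)` (`n ≥ 2`) with respect to the
adjacent transpositions admits a Hamilton circuit: there is a bijection
`θ : ℤ/n!ℤ → Sym(n)` such that each consecutive ratio `θ(t+1) ∘ θ(t)⁻¹` is an
adjacent transposition `(i, i+1)`. -/
theorem symmetricGroup_adjacentTranspositions_hamiltonCircuit
    (n : ℕ) (hn : 2 ≤ n) :
    ∃ θ : ZMod (Nat.factorial n) → Equiv.Perm (Fin n),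
      Function.Bijective θ ∧
      ∀ t, ∃ i j : Fin n, (j : ℕ) = (i : ℕ) + 1 ∧
        θ (t + 1) * (θ t)⁻¹ = Equiv.swap i j := by
  obtain ⟨f, hper, hsurj, hstep⟩ := sjt_exists n hn
  haveI : NeZero n.factorial := ⟨n.factorial_ne_zero⟩
  have hmod : ∀ t, f (t % n.factorial) = f t := fun t =>
    Function.Periodic.map_mod_nat (f := f) hper t
  have hcast : ∀ t : ℕ, f (t : ZMod n.factorial).val = f t := fun t => by
    rw [ZMod.val_natCast, hmod]
  refine ⟨fun t => f t.val, ?_, ?_⟩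
  · rw [Fintype.bijective_iff_surjective_and_card]
    constructor
    · intro σ
      obtain ⟨k, rfl⟩ := hsurj σ
      exact ⟨k, hcast k⟩
    · simp [Fintype.card_perm, ZMod.card]
  · intro t
    obtain ⟨i, j, hij, h⟩ := hstep t.val
    refine ⟨i, j, hij, ?_⟩
    have h2 := hcast (t.val + 1)
    rw [Nat.cast_add, Nat.cast_one, ZMod.natCast_zmod_val] at h2
    simp only [h2, h, mul_inv_cancel_right]
end
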